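/- Assume ε = 1/6 or ε = −1/6. Then there exist h₀ > 0 and C > 0, depending only on V₁ and V₂, such that for every C^∞ 1-periodic φ : ℝ → ℂ and every positive integer N with h = 1/N ≤ h₀, the Nyström system with data g = Wφ has a unique solution (φ₀,…,φ_{N−1}), and for every step function χ_h ∈ S_h whose Fourier coefficients satisfy χ̂_h(m) = φ̂(m) for all integers m with −N/2 < m ≤ N/2, one has ‖φ_h − χ_h‖₀ ≤ C h² ‖φ‖₃, where φ_h = Σ_{j=0}^{N−1} φ_j χ_j. -/

import Mathlib

noncomputable section

/-- Smooth kernel data, 1-periodic in each variable. -/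
def SPK (A : ℝ → ℝ → ℂ) : Prop :=
  ContDiff ℝ (⊤ : ℕ∞) (fun p : ℝ × ℝ => A p.1 p.2) ∧
    (∀ s t, A (s + 1) t = A s t) ∧ (∀ s t, A s (t + 1) = A s t)

/-- Logarithmic kernel `V(s,t) = (i/(2π)) A(s,t) log(sin²(π(s−t))) + K(s,t)`. -/
def logKer (A K : ℝ → ℝ → ℂ) (s t : ℝ) : ℂ :=
  Complex.I / (2 * Real.pi) * A s t * (Real.log (Real.sin (Real.pi * (s - t)) ^ 2) : ℂ) + K s t

/-- Grid point `s_{j+ε} = (j − 1/2 + ε)h`. -/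
def sg (h ε : ℝ) (j : ℤ) : ℝ := ((j : ℝ) - 1 / 2 + ε) * h

/-- Grid point `t_{j+ε} = (j + ε)h`. -/
def tg (h ε : ℝ) (j : ℤ) : ℝ := ((j : ℝ) + ε) * h

/-- Integral operator with kernel `V`. -/
def Vop (V : ℝ → ℝ → ℂ) (φ : ℝ → ℂ) (s : ℝ) : ℂ := ∫ t in (0:ℝ)..1, V s t * φ t

/-- Hypersingular operator `W = −D V₁ D + V₂`. -/
def Wop (V1 V2 : ℝ → ℝ → ℂ) (φ : ℝ → ℂ) (s : ℝ) : ℂ :=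
  -deriv (Vop V1 (deriv φ)) s + Vop V2 φ s

/-- Nyström matrix entries `W^ε_{ij}`. -/
def Wmat (V1 V2 : ℝ → ℝ → ℂ) (h ε : ℝ) (i j : ℤ) : ℂ :=
  V1 (sg h ε (i + 1)) (sg h 0 (j + 1)) - V1 (sg h ε i) (sg h 0 (j + 1))
    - V1 (sg h ε (i + 1)) (sg h 0 j) + V1 (sg h ε i) (sg h 0 j)
    + (h : ℂ) ^ 2 * V2 (tg h ε i) (tg h 0 j)

/-- Fourier coefficient of a 1-periodic function. -/
def fc (u : ℝ → ℂ) (m : ℤ) : ℂ :=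
  ∫ t in (0:ℝ)..1, u t * Complex.exp (-(2 * Real.pi * Complex.I * (m : ℂ) * (t : ℂ)))

/-- Periodic Sobolev norm of order `r`. -/
def sobNorm (r : ℝ) (u : ℝ → ℂ) : ℝ :=
  Real.sqrt (‖fc u 0‖ ^ 2 +
    ∑' m : ℤ, if m = 0 then 0 else |(m : ℝ)| ^ (2 * r) * ‖fc u m‖ ^ 2)

/-- 1-periodic step function on the ε-shifted grid with coefficients `v`. -/
def stepf (N : ℕ) (ε : ℝ) (v : ZMod N → ℂ) (s : ℝ) : ℂ :=
  v ((⌊s * N + 1 / 2 - ε⌋ : ℤ) : ZMod N)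

/-- Midpoint quadrature error matrix entries `E^ε_{ij}`. -/
def Emat (V2 : ℝ → ℝ → ℂ) (h ε : ℝ) (i j : ℤ) : ℂ :=
  (∫ s in (sg h ε i)..(sg h ε (i + 1)), ∫ t in (sg h 0 j)..(sg h 0 (j + 1)), V2 s t)
    - (h : ℂ) ^ 2 * V2 (tg h ε i) (tg h 0 j)

/-- Spectral (ℓ²-operator) norm of a complex `N×N` matrix. -/
def specNorm {N : ℕ} (M : Matrix (Fin N) (Fin N) ℂ) : ℝ :=
  ‖LinearMap.toContinuousLinearMap (Matrix.toEuclideanLin M)‖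

/-- The function `C̄₁(t) = −(1/(2πi)) log(4 sin²(πt))`. -/
def Cbar1 (t : ℝ) : ℂ :=
  -(1 / (2 * Real.pi * Complex.I)) * (Real.log (4 * Real.sin (Real.pi * t) ^ 2) : ℂ)

end

/-- The Nyström linear system with data `g = Wφ`:
`Σ_j W^ε_{ij} v_j = h (Wφ)(t_{i+ε})`, `i = 0,…,N−1`. -/
def Nys (V1 V2 : ℝ → ℝ → ℂ) (ε : ℝ) (N : ℕ) [NeZero N] (φ : ℝ → ℂ)
    (v : ZMod N → ℂ) : Prop :=
  ∀ i : ZMod N,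
    (∑ j : ZMod N,
        Wmat V1 V2 (1 / (N : ℝ)) ε ((i.val : ℕ) : ℤ) ((j.val : ℕ) : ℤ) * v j)
      = (1 / (N : ℂ)) * Wop V1 V2 φ (tg (1 / (N : ℝ)) ε ((i.val : ℕ) : ℤ))

/-! In Fourier coordinates the operator with kernel `i/(2π) A log sin² + K` is a matrix whose
entries `w n m` (the coefficient of mode `n + m` in the image of mode `m`) decay rapidly in `n`. The
Nyström matrix is of the same form, with the Fourier coefficients of the factors of the kernel
replaced by those sampled from the grid, followed by folding the frequencies modulo `N`. Sampling
adds to `ĝ(m)` the aliases `∑_{q ≠ 0} ĝ(m + qN) e^{2πiqε}`. For `g = log sin²` their leading part is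
`-∑_{q ≠ 0} e^{2πiqε} / |qN| = log (4 sin² πε) / N`, which vanishes exactly when `4 sin² πε = 1`;
the remaining relative error is of second order in `m / N`.

Since the diagonal of `A₁` is a nonzero constant, the discrete symbols are elliptic of order one
uniformly in `N`, and they converge to the symbol of `W`. Normalized vectors on which the Nyström
maps tend to zero would therefore have a nonzero limit in frequency space; this limit decreases
rapidly and is annihilated by `W`, against injectivity. This gives stability, and consistency then
bounds the distance of the Nyström solution to the truncated Fourier series of `φ` at the nodes.
A step function damps each central mode by a factor `1 + O((m / N)²)`, so the truncated series in
turn is within `O(h²)` of the nodal values of `χ_h`. -/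

noncomputable section

open Filter Topology Finset

/-! ### Weights and rapid decay -/

/-- The weight `1 + |n|` measuring smoothness in frequency space; unlike `max 1 |n|` it is
submultiplicative without a constant. -/
def bracket (n : ℤ) : ℝ := 1 + |(n : ℝ)|

lemma one_le_bracket (n : ℤ) : 1 ≤ bracket n := le_add_of_nonneg_right (abs_nonneg _)

lemma bracket_pos (n : ℤ) : 0 < bracket n := one_pos.trans_le (one_le_bracket n)

lemma abs_le_bracket (n : ℤ) : |(n : ℝ)| ≤ bracket n := le_add_of_nonneg_left zero_le_one

@[simp] lemma bracket_neg (n : ℤ) : bracket (-n) = bracket n := by simp [bracket]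

lemma bracket_add_le (m n : ℤ) : bracket (m + n) ≤ bracket m * bracket n := by
  unfold bracket
  push_cast
  nlinarith [abs_add_le (m : ℝ) n, mul_nonneg (abs_nonneg (m : ℝ)) (abs_nonneg (n : ℝ))]

lemma bracket_le_bracket_add_mul (m n : ℤ) : bracket m ≤ bracket (m + n) * bracket n := by
  simpa using bracket_add_le (m + n) (-n)

lemma summable_inv_bracket_sq : Summable fun m : ℤ => (bracket m ^ 2)⁻¹ := by
  refine Summable.of_norm_bounded_eventually
    (Real.summable_abs_int_rpow (b := (2 : ℝ)) (by norm_num)) ?_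
  filter_upwards [eventually_cofinite_ne (0 : ℤ)] with m hm
  have habs : 0 < |(m : ℝ)| := by simpa using hm
  have hpow : |(m : ℝ)| ^ (-2 : ℝ) = (|(m : ℝ)| ^ 2)⁻¹ := by rw [Real.rpow_neg habs.le]; norm_cast
  rw [Real.norm_of_nonneg (by have := bracket_pos m; positivity), hpow]
  exact inv_anti₀ (by positivity) (pow_le_pow_left₀ habs.le (abs_le_bracket m) 2)

/-- Decay faster than every power of the frequency. -/
def RapidDecay {E : Type*} [Norm E] (u : ℤ → E) : Prop :=
  ∀ j : ℕ, ∃ C : ℝ, ∀ n, bracket n ^ j * ‖u n‖ ≤ C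

lemma RapidDecay.summable_bracket_pow_mul {E : Type*} [SeminormedAddGroup E] {u : ℤ → E}
    (hu : RapidDecay u) (j : ℕ) : Summable fun n => bracket n ^ j * ‖u n‖ := by
  obtain ⟨C, hC⟩ := hu (j + 2)
  refine Summable.of_nonneg_of_le
    (fun n => mul_nonneg (pow_nonneg (bracket_pos n).le _) (norm_nonneg _)) (fun n => ?_)
    (summable_inv_bracket_sq.mul_left C)
  rw [← div_eq_mul_inv, le_div_iff₀ (pow_pos (bracket_pos n) 2)]
  calc bracket n ^ j * ‖u n‖ * bracket n ^ 2 = bracket n ^ (j + 2) * ‖u n‖ := by ring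
    _ ≤ C := hC n

lemma RapidDecay.summable_norm {E : Type*} [SeminormedAddGroup E] {u : ℤ → E}
    (hu : RapidDecay u) : Summable fun n => ‖u n‖ := by
  simpa using hu.summable_bracket_pow_mul 0

/-! ### Fourier modes on the line and on the grid -/

/-- The exponential `x ↦ e^{2πinx}`, regarded as a function on the line. -/
def mode (n : ℤ) (x : ℝ) : ℂ := fourier n (x : AddCircle (1 : ℝ))

lemma mode_eq_exp (n : ℤ) (x : ℝ) : mode n x = Complex.exp (2 * Real.pi * Complex.I * n * x) := by
  simp [mode]

@[simp] lemma norm_mode (n : ℤ) (x : ℝ) : ‖mode n x‖ = 1 := Circle.norm_coe _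

lemma mode_add (m n : ℤ) (x : ℝ) : mode (m + n) x = mode m x * mode n x := fourier_add

lemma mode_add_arg (n : ℤ) (x y : ℝ) : mode n (x + y) = mode n x * mode n y := by
  simp only [mode_eq_exp, ← Complex.exp_add]
  push_cast
  ring_nf

@[simp] lemma mode_zero (x : ℝ) : mode 0 x = 1 := fourier_zero

@[simp] lemma mode_zero_arg (n : ℤ) : mode n 0 = 1 := by simp [mode_eq_exp]

lemma mode_neg (n : ℤ) (x : ℝ) : mode (-n) x = mode n (-x) := by
  simp [mode_eq_exp]

lemma conj_mode (n : ℤ) (x : ℝ) : (starRingEnd ℂ) (mode n x) = mode (-n) x := fourier_neg.symm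

lemma mode_periodic (n : ℤ) : Function.Periodic (mode n) 1 := fun x => by
  simp only [mode, AddCircle.coe_add_period]

lemma mode_int (n k : ℤ) : mode n k = 1 := by
  simpa using (mode_periodic n).int_mul_eq k

lemma continuous_mode (n : ℤ) : Continuous (mode n) :=
  (fourier n).continuous.comp (AddCircle.continuous_mk' 1)

lemma hasDerivAt_mode (n : ℤ) (x : ℝ) :
    HasDerivAt (mode n) (2 * Real.pi * Complex.I * n * mode n x) x := by
  have h := hasDerivAt_fourier (1 : ℝ) n x
  rwa [Complex.ofReal_one, div_one] at h

lemma contDiff_mode (n : ℤ) : ContDiff ℝ (⊤ : ℕ∞) (mode n) := by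
  have hcast : ContDiff ℝ (⊤ : ℕ∞) fun x : ℝ => (x : ℂ) := Complex.ofRealCLM.contDiff
  rw [funext (mode_eq_exp n)]
  fun_prop

section Grid

variable (N : ℕ) [NeZero N] (ε : ℝ)

/-- The collocation point `(k + ε) / N`, indexed by the residues modulo `N`. -/
def node (k : ZMod N) : ℝ := ((k.val : ℝ) + ε) / N

lemma mode_node (n : ℤ) (k : ZMod N) :
    mode n (node N ε k) = mode n (ε / N) * ZMod.stdAddChar ((n : ZMod N) * k) := by
  have hN : (N : ℂ) ≠ 0 := NeZero.ne _
  have hnk : (n : ZMod N) * k = ((n * (k.val : ℤ) : ℤ) : ZMod N) := by simp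
  rw [node, add_div, add_comm, mode_add_arg, hnk, ZMod.stdAddChar_coe, mode_eq_exp n (_ / _),
    mode_eq_exp n (_ / _)]
  congr 2
  push_cast
  field_simp

lemma sum_mode_node (n : ℤ) :
    ∑ k : ZMod N, mode n (node N ε k) = if (n : ZMod N) = 0 then N * mode n (ε / N) else 0 := by
  have hchar := AddChar.sum_mulShift (n : ZMod N) (ZMod.isPrimitive_stdAddChar N)
  simp_rw [mul_comm _ (n : ZMod N)] at hchar
  simp_rw [mode_node, ← mul_sum, hchar]
  split_ifs <;> simp [ZMod.card, mul_comm]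

lemma sum_norm_sq_sum_mode_node {b : ZMod N → ℤ} {d : ZMod N}
    (hb : ∀ r, (b r : ZMod N) = r + d) (x : ZMod N → ℂ) :
    ∑ i, ‖∑ r, x r * mode (b r) (node N ε i)‖ ^ 2 = N * ∑ r, ‖x r‖ ^ 2 := by
  have orthogonality (r r' : ZMod N) :
      ∑ i, mode (b r + -b r') (node N ε i) = if r = r' then (N : ℂ) else 0 := by
    have hcast : ((b r + -b r' : ℤ) : ZMod N) = 0 ↔ r = r' := by
      push_cast
      rw [hb, hb, add_neg_eq_zero, add_left_inj]
    rw [sum_mode_node]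
    simp only [hcast]
    split_ifs with h
    · simp [h]
    · rfl
  apply Complex.ofReal_injective
  push_cast
  simp_rw [← Complex.mul_conj', map_sum, map_mul, conj_mode, sum_mul_sum]
  calc ∑ i, ∑ r, ∑ r', x r * mode (b r) (node N ε i) *
          ((starRingEnd ℂ) (x r') * mode (-b r') (node N ε i))
      = ∑ r, ∑ r', x r * (starRingEnd ℂ) (x r') * ∑ i, mode (b r + -b r') (node N ε i) := by
        rw [sum_comm]
        refine sum_congr rfl fun r _ => ?_
        rw [sum_comm]
        refine sum_congr rfl fun r' _ => ?_
        rw [mul_sum]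
        exact sum_congr rfl fun i _ => by rw [mode_add]; ring
    _ = N * ∑ r, x r * (starRingEnd ℂ) (x r) := by
        simp [orthogonality, mul_sum, mul_comm]

lemma apply_node_intCast {β : Type*} {g : ℝ → β} (hg : Function.Periodic g 1)
    (a : ℤ) : g (node N ε a) = g ((a + ε) / N) := by
  obtain ⟨c, hc⟩ :=
    (ZMod.intCast_eq_intCast_iff_dvd_sub (((a : ZMod N).val : ℕ) : ℤ) a N).mp (by simp)
  have ha : (a : ℝ) = (a : ZMod N).val + N * c := by
    rw [← sub_eq_iff_eq_add']
    exact_mod_cast hc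
  have hN : (N : ℝ) ≠ 0 := NeZero.ne _
  rw [show ((a : ℝ) + ε) / N = node N ε a + c * 1 by rw [ha, node]; field_simp; ring]
  exact (hg.int_mul c _).symm

/-- The frequencies `m` with `|m| ≤ N / 2`, which a grid of `N` points resolves. -/
def centralFreqs (N : ℕ) : Set ℤ := {m | 2 * |(m : ℝ)| ≤ N}

lemma valMinAbs_mem_centralFreqs (r : ZMod N) : r.valMinAbs ∈ centralFreqs N := by
  obtain ⟨hl, hr⟩ := r.valMinAbs_mem_Ioc
  have hl' : -(N : ℝ) < r.valMinAbs * 2 := by exact_mod_cast hl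
  have hr' : (r.valMinAbs * 2 : ℝ) ≤ N := by exact_mod_cast hr
  change 2 * |(r.valMinAbs : ℝ)| ≤ N
  rcases abs_cases (r.valMinAbs : ℝ) with ⟨h, _⟩ | ⟨h, _⟩ <;> linarith

lemma eventually_mem_centralFreqs (m : ℤ) : ∀ᶠ N : ℕ in atTop, m ∈ centralFreqs N := by
  filter_upwards [eventually_ge_atTop (2 * m.natAbs)] with N hN
  have : ((2 * m.natAbs : ℕ) : ℝ) ≤ N := by exact_mod_cast hN
  simpa [centralFreqs, Nat.cast_natAbs] using this

/-- The vector of values at the collocation points of the trigonometric polynomial whose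
coefficients at the central frequencies are given. -/
def synthesis : (ZMod N → ℂ) →ₗ[ℂ] (ZMod N → ℂ) where
  toFun u i := ∑ r, u r * mode r.valMinAbs (node N ε i)
  map_add' u v := by ext i; simp [add_mul, sum_add_distrib]
  map_smul' c u := by ext i; simp [mul_sum, mul_assoc]

lemma synthesis_apply (u : ZMod N → ℂ) (i : ZMod N) :
    synthesis N ε u i = ∑ r, u r * mode r.valMinAbs (node N ε i) := rfl

lemma sum_norm_sq_synthesis (u : ZMod N → ℂ) :
    ∑ i, ‖synthesis N ε u i‖ ^ 2 = N * ∑ r, ‖u r‖ ^ 2 :=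
  sum_norm_sq_sum_mode_node N ε (d := 0) (by simp) u

end Grid

lemma bijective_of_sum_norm_sq_le {κ : Type*} [Fintype κ]
    (T : (κ → ℂ) →ₗ[ℂ] (κ → ℂ)) (C : ℝ) (hT : ∀ u, ∑ k, ‖u k‖ ^ 2 ≤ C * ∑ k, ‖T u k‖ ^ 2) :
    Function.Bijective T := by
  have hinj : Function.Injective T := by
    rw [injective_iff_map_eq_zero]
    intro u hu
    have hzero : ∑ k, ‖u k‖ ^ 2 = 0 :=
      le_antisymm (by simpa [hu] using hT u) (sum_nonneg fun _ _ => sq_nonneg _)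
    ext k
    simpa using (sum_eq_zero_iff_of_nonneg fun _ _ => sq_nonneg _).mp hzero k (mem_univ k)
  exact ⟨hinj, LinearMap.injective_iff_surjective.mp hinj⟩

lemma synthesis_bijective (N : ℕ) [NeZero N] (ε : ℝ) : Function.Bijective (synthesis N ε) := by
  refine bijective_of_sum_norm_sq_le _ (N : ℝ)⁻¹ fun u => le_of_eq ?_
  rw [sum_norm_sq_synthesis, inv_mul_cancel_left₀ (NeZero.ne _)]

/-! ### Elliptic symbols and their action on residue classes -/

lemma sum_norm_sq_tsum_le {ι κ 𝕜 : Type*} [RCLike 𝕜] [Fintype κ] {X : ι → κ → 𝕜} {b : ι → ℝ}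
    (hb : Summable b) (hb0 : ∀ i, 0 ≤ b i) (hX : ∀ i, ∑ k, ‖X i k‖ ^ 2 ≤ b i ^ 2) :
    ∑ k, ‖∑' i, X i k‖ ^ 2 ≤ (∑' i, b i) ^ 2 := by
  let Y : ι → EuclideanSpace 𝕜 κ := fun i => WithLp.toLp 2 (X i)
  have hY : ∀ i, ‖Y i‖ ≤ b i := fun i => by
    rw [EuclideanSpace.norm_eq]
    exact Real.sqrt_le_iff.mpr ⟨hb0 i, hX i⟩
  have hcoord : ∀ k, (∑' i, Y i) k = ∑' i, X i k := fun k =>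
    (EuclideanSpace.proj (𝕜 := 𝕜) k : EuclideanSpace 𝕜 κ →L[𝕜] 𝕜).map_tsum
      (Summable.of_norm_bounded hb hY)
  have hnorm := pow_le_pow_left₀ (norm_nonneg _) (tsum_of_norm_bounded hb.hasSum hY) 2
  simpa only [EuclideanSpace.norm_sq_eq, hcoord] using hnorm

/-- Young's inequality for the convolution of a vector on `ZMod N` with a summable sequence. -/
lemma sum_sq_tsum_mul_sub_le (N : ℕ) [NeZero N] {a : ℤ → ℝ} (ha : Summable a) (ha0 : ∀ n, 0 ≤ a n)
    (b : ZMod N → ℝ) :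
    ∑ k : ZMod N, (∑' n : ℤ, a n * b (k - n)) ^ 2 ≤ (∑' n, a n) ^ 2 * ∑ k, b k ^ 2 := by
  have hb0 : 0 ≤ ∑ k, b k ^ 2 := sum_nonneg fun _ _ => sq_nonneg _
  have hshift (n : ℤ) : ∑ k : ZMod N, ‖a n * b (k - n)‖ ^ 2 ≤ (a n * √(∑ k, b k ^ 2)) ^ 2 := by
    simp only [Real.norm_eq_abs, sq_abs, mul_pow, Real.sq_sqrt hb0, ← mul_sum]
    exact (congrArg _ ((Equiv.subRight (n : ZMod N)).sum_comp (b · ^ 2))).le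
  have h := sum_norm_sq_tsum_le (ha.mul_right _) (fun n => mul_nonneg (ha0 n) (Real.sqrt_nonneg _))
    hshift
  simpa only [Real.norm_eq_abs, sq_abs, tsum_mul_right, mul_pow, Real.sq_sqrt hb0] using h

section IsolatedTerm

variable {ι : Type*} {f : ι → ℂ} {g : ι → ℝ} {i₀ : ι}

lemma summable_of_norm_le_off (hg : Summable g) (hfg : ∀ i ≠ i₀, ‖f i‖ ≤ g i) : Summable f :=
  Summable.of_norm_bounded_eventually hg <| (eventually_cofinite_ne i₀).mono hfg

lemma norm_add_le_norm_tsum_add_tsum (hg : Summable g) (hfg : ∀ i ≠ i₀, ‖f i‖ ≤ g i) :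
    ‖f i₀‖ + g i₀ ≤ ‖∑' i, f i‖ + ∑' i, g i := by
  classical
  have hrest : ‖∑' i, if i = i₀ then 0 else f i‖ ≤ ∑' i, if i = i₀ then 0 else g i := by
    have hg' : Summable fun i => if i = i₀ then 0 else g i :=
      hg.congr_cofinite <| (eventually_cofinite_ne i₀).mono fun i hi => (if_neg hi).symm
    refine tsum_of_norm_bounded hg'.hasSum fun i => ?_
    split_ifs with hi
    · simp
    · exact hfg i hi
  rw [(summable_of_norm_le_off hg hfg).tsum_eq_add_tsum_ite i₀, hg.tsum_eq_add_tsum_ite i₀]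
  linarith [norm_sub_norm_le (f i₀) (-∑' i, if i = i₀ then 0 else f i),
    norm_neg (∑' i, if i = i₀ then 0 else f i),
    congrArg norm (sub_neg_eq_add (f i₀) (∑' i, if i = i₀ then 0 else f i))]

end IsolatedTerm

/-- Ellipticity of order one for an operator sending the mode `m` to `∑ₙ w n m · e^{2πi(m+n)x}`,
tested on the frequencies in `S`: the off-diagonal part `n ≠ 0` is dominated by the sequence `a`,
while the diagonal grows linearly. -/
structure IsElliptic (S : Set ℤ) (c : ℝ) (a : ℤ → ℝ) (w : ℤ → ℤ → ℂ) : Prop where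
  norm_le : ∀ n ≠ 0, ∀ m ∈ S, ‖w n m‖ ≤ a n
  le_norm_diag : ∀ m ∈ S, c * |(m : ℝ)| - a 0 ≤ ‖w 0 m‖

lemma IsElliptic.of_tendsto {ι : Type*} {l : Filter ι} [l.NeBot] {S : ι → Set ℤ} {c : ℝ}
    {a : ℤ → ℝ} {W : ι → ℤ → ℤ → ℂ} {w : ℤ → ℤ → ℂ} (hW : ∀ i, IsElliptic (S i) c a (W i))
    (hS : ∀ m, ∀ᶠ i in l, m ∈ S i) (hlim : ∀ n m, Tendsto (W · n m) l (𝓝 (w n m))) :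
    IsElliptic Set.univ c a w where
  norm_le n hn m _ := le_of_tendsto (hlim n m).norm <| (hS m).mono fun i => (hW i).norm_le n hn m
  le_norm_diag m _ := ge_of_tendsto (hlim 0 m).norm <| (hS m).mono fun i => (hW i).le_norm_diag m

section Regularity

variable {c : ℝ} {a : ℤ → ℝ} {w : ℤ → ℤ → ℂ} {u : ℤ → ℂ}

lemma IsElliptic.abs_mul_norm_le_of_null (hw : IsElliptic Set.univ c a w)
    (hsum : ∀ k : ℤ, Summable fun n => a n * ‖u (k - n)‖)
    (hnull : ∀ k : ℤ, ∑' n, w n (k - n) * u (k - n) = 0) (k : ℤ) :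
    c * |(k : ℝ)| * ‖u k‖ ≤ ∑' n, a n * ‖u (k - n)‖ := by
  have hoff : ∀ n ≠ 0, ‖w n (k - n) * u (k - n)‖ ≤ a n * ‖u (k - n)‖ := fun n hn => by
    rw [norm_mul]
    exact mul_le_mul_of_nonneg_right (hw.norm_le n hn _ trivial) (norm_nonneg _)
  have hterm := norm_add_le_norm_tsum_add_tsum (hsum k) hoff
  rw [hnull, norm_mul, sub_zero, norm_zero] at hterm
  nlinarith [mul_le_mul_of_nonneg_right (hw.le_norm_diag k trivial) (norm_nonneg (u k))]

lemma bracket_pow_mul_tsum_le (ha : RapidDecay a) (ha0 : ∀ n, 0 ≤ a n)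
    (hsum : ∀ k : ℤ, Summable fun n => a n * ‖u (k - n)‖) {j : ℕ} {C : ℝ}
    (hC : ∀ k, bracket k ^ j * ‖u k‖ ≤ C) (k : ℤ) :
    bracket k ^ j * ∑' n, a n * ‖u (k - n)‖ ≤ C * ∑' n, bracket n ^ j * ‖a n‖ := by
  rw [← tsum_mul_left, ← tsum_mul_left]
  refine Summable.tsum_le_tsum (fun n => ?_) ((hsum k).mul_left _)
    ((ha.summable_bracket_pow_mul j).mul_left _)
  have hsplit : bracket k ^ j ≤ bracket (k - n) ^ j * bracket n ^ j := by
    rw [← mul_pow]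
    exact pow_le_pow_left₀ (bracket_pos _).le (by simpa using bracket_add_le (k - n) n) j
  calc bracket k ^ j * (a n * ‖u (k - n)‖)
      ≤ (bracket (k - n) ^ j * bracket n ^ j) * (a n * ‖u (k - n)‖) :=
        mul_le_mul_of_nonneg_right hsplit (mul_nonneg (ha0 n) (norm_nonneg _))
    _ = (bracket (k - n) ^ j * ‖u (k - n)‖) * (bracket n ^ j * ‖a n‖) := by
        rw [Real.norm_of_nonneg (ha0 n)]; ring
    _ ≤ C * (bracket n ^ j * ‖a n‖) :=
        mul_le_mul_of_nonneg_right (hC _)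
          (mul_nonneg (pow_nonneg (bracket_pos n).le _) (norm_nonneg _))

/-- Elliptic regularity: each use of the equation gains one power of the frequency. -/
lemma IsElliptic.rapidDecay_of_null (hw : IsElliptic Set.univ c a w) (hc : 0 < c)
    (ha : RapidDecay a) (ha0 : ∀ n, 0 ≤ a n) {B : ℝ} (hu : ∀ k, ‖u k‖ ≤ B)
    (hnull : ∀ k : ℤ, ∑' n, w n (k - n) * u (k - n) = 0) : RapidDecay u := by
  have hsumm : Summable a := ha.summable_norm.of_norm
  have hsum (k : ℤ) : Summable fun n => a n * ‖u (k - n)‖ :=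
    Summable.of_nonneg_of_le (fun n => mul_nonneg (ha0 n) (norm_nonneg _))
      (fun n => mul_le_mul_of_nonneg_left (hu _) (ha0 n)) (hsumm.mul_right B)
  intro j
  induction j with
  | zero => exact ⟨B, fun k => by simpa using hu k⟩
  | succ j ih =>
    obtain ⟨C, hC⟩ := ih
    refine ⟨C + C * (∑' n, bracket n ^ j * ‖a n‖) / c, fun k => ?_⟩
    have hgain : bracket k ^ j * (|(k : ℝ)| * ‖u k‖) ≤ C * (∑' n, bracket n ^ j * ‖a n‖) / c := by
      rw [le_div_iff₀ hc]
      linarith [bracket_pow_mul_tsum_le ha ha0 hsum hC k, mul_le_mul_of_nonneg_left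
        (hw.abs_mul_norm_le_of_null hsum hnull k) (pow_nonneg (bracket_pos k).le j)]
    calc bracket k ^ (j + 1) * ‖u k‖
        = bracket k ^ j * ‖u k‖ + bracket k ^ j * (|(k : ℝ)| * ‖u k‖) := by
          rw [pow_succ]; nth_rw 2 [bracket]; ring
      _ ≤ _ := add_le_add (hC k) hgain

end Regularity

section FoldedOp

variable (N : ℕ) (ε : ℝ) (w : ℤ → ℤ → ℂ)

/-- The contribution to the residue class `k` of the mode `k - n` moved by `n`; the phase compares,
on the grid shifted by `ε`, the mode it lands on with the central representative of `k`. -/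
def foldedTerm (u : ZMod N → ℂ) (k : ZMod N) (n : ℤ) : ℂ :=
  mode ((k - n).valMinAbs + n - k.valMinAbs) (ε / N) * w n (k - n).valMinAbs * u (k - n)

/-- The operator with symbol `w`, sending the mode `m` to `∑ₙ w n m · e^{2πi(m+n)x}`, read on a grid
of `N` points: frequencies are identified modulo `N`. -/
def foldedOp (u : ZMod N → ℂ) (k : ZMod N) : ℂ := ∑' n, foldedTerm N ε w u k n

lemma foldedOp_smul (c : ℂ) (u : ZMod N → ℂ) : foldedOp N ε w (c • u) = c • foldedOp N ε w u := by
  ext k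
  rw [Pi.smul_apply, smul_eq_mul, foldedOp, foldedOp, ← tsum_mul_left]
  exact tsum_congr fun n => by simp only [foldedTerm, Pi.smul_apply, smul_eq_mul]; ring

lemma norm_foldedTerm (u : ZMod N → ℂ) (k : ZMod N) (n : ℤ) :
    ‖foldedTerm N ε w u k n‖ = ‖w n (k - n).valMinAbs‖ * ‖u (k - n)‖ := by
  simp [foldedTerm]

variable {N w} [NeZero N] {c : ℝ} {a : ℤ → ℝ}

lemma IsElliptic.norm_foldedTerm_le (hw : IsElliptic (centralFreqs N) c a w) (u : ZMod N → ℂ)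
    (k : ZMod N) {n : ℤ} (hn : n ≠ 0) : ‖foldedTerm N ε w u k n‖ ≤ a n * ‖u (k - n)‖ := by
  rw [norm_foldedTerm]
  exact mul_le_mul_of_nonneg_right (hw.norm_le n hn _ (valMinAbs_mem_centralFreqs N _))
    (norm_nonneg _)

variable (N) in
lemma summable_mul_norm_sub (ha : Summable a) (ha0 : ∀ n, 0 ≤ a n) (u : ZMod N → ℂ) (k : ZMod N) :
    Summable fun n : ℤ => a n * ‖u (k - n)‖ :=
  Summable.of_nonneg_of_le (fun n => mul_nonneg (ha0 n) (norm_nonneg _))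
    (fun n => mul_le_mul_of_nonneg_left
      (single_le_sum (f := fun k => ‖u k‖) (fun _ _ => norm_nonneg _) (mem_univ (k - (n : ZMod N))))
      (ha0 n)) (ha.mul_right _)

lemma IsElliptic.summable_foldedTerm (hw : IsElliptic (centralFreqs N) c a w) (ha : Summable a)
    (ha0 : ∀ n, 0 ≤ a n) (u : ZMod N → ℂ) (k : ZMod N) : Summable (foldedTerm N ε w u k) :=
  summable_of_norm_le_off (summable_mul_norm_sub N ha ha0 u k)
    fun _ hn => hw.norm_foldedTerm_le ε u k hn

lemma IsElliptic.abs_mul_norm_le (hw : IsElliptic (centralFreqs N) c a w) (ha : Summable a)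
    (ha0 : ∀ n, 0 ≤ a n) (u : ZMod N → ℂ) (k : ZMod N) :
    c * |(k.valMinAbs : ℝ)| * ‖u k‖ ≤ ‖foldedOp N ε w u k‖ + ∑' n : ℤ, a n * ‖u (k - n)‖ := by
  have hterm := norm_add_le_norm_tsum_add_tsum (summable_mul_norm_sub N ha ha0 u k)
    fun n hn => hw.norm_foldedTerm_le ε u k hn
  rw [norm_foldedTerm, Int.cast_zero, sub_zero] at hterm
  have hdiag := mul_le_mul_of_nonneg_right (hw.le_norm_diag _ (valMinAbs_mem_centralFreqs N k))
    (norm_nonneg (u k))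
  rw [foldedOp]
  linarith

lemma IsElliptic.sum_sq_abs_mul_norm_le (hw : IsElliptic (centralFreqs N) c a w) (hc : 0 ≤ c)
    (ha : Summable a) (ha0 : ∀ n, 0 ≤ a n) (u : ZMod N → ℂ) :
    c ^ 2 * ∑ k : ZMod N, (|(k.valMinAbs : ℝ)| * ‖u k‖) ^ 2 ≤
      2 * ∑ k, ‖foldedOp N ε w u k‖ ^ 2 + 2 * ((∑' n, a n) ^ 2 * ∑ k, ‖u k‖ ^ 2) := by
  have hpoint (k : ZMod N) : (c * (|(k.valMinAbs : ℝ)| * ‖u k‖)) ^ 2 ≤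
      2 * ‖foldedOp N ε w u k‖ ^ 2 + 2 * (∑' n : ℤ, a n * ‖u (k - n)‖) ^ 2 := by
    have h := pow_le_pow_left₀ (by positivity) (hw.abs_mul_norm_le ε ha ha0 u k) 2
    rw [← mul_assoc]
    linarith [add_sq_le (a := ‖foldedOp N ε w u k‖) (b := ∑' n : ℤ, a n * ‖u (k - n)‖)]
  calc c ^ 2 * ∑ k : ZMod N, (|(k.valMinAbs : ℝ)| * ‖u k‖) ^ 2
      = ∑ k : ZMod N, (c * (|(k.valMinAbs : ℝ)| * ‖u k‖)) ^ 2 := by simp only [mul_sum, mul_pow]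
    _ ≤ ∑ k, (2 * ‖foldedOp N ε w u k‖ ^ 2 + 2 * (∑' n : ℤ, a n * ‖u (k - n)‖) ^ 2) :=
        sum_le_sum fun k _ => hpoint k
    _ ≤ _ := by
        rw [sum_add_distrib, ← mul_sum, ← mul_sum]
        linarith [sum_sq_tsum_mul_sub_le N ha ha0 (‖u ·‖)]

end FoldedOp

/-! ### Stability by compactness -/

/-- A bounded discrete `H¹` seminorm keeps a fixed part of the mass at bounded frequencies. -/
lemma sum_norm_sq_le_sum_Icc_add_div (N : ℕ) [NeZero N] (u : ZMod N → ℂ) {M : ℕ} (hM : 0 < M) :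
    ∑ k, ‖u k‖ ^ 2 ≤ ∑ m ∈ Icc (-(M : ℤ)) M, ‖u (m : ZMod N)‖ ^ 2 +
      (∑ k : ZMod N, (|(k.valMinAbs : ℝ)| * ‖u k‖) ^ 2) / (M : ℝ) ^ 2 := by
  classical
  rw [← sum_filter_add_sum_filter_not univ (fun k : ZMod N => |k.valMinAbs| ≤ (M : ℤ))]
  gcongr ?_ + ?_
  · calc ∑ k with |k.valMinAbs| ≤ (M : ℤ), ‖u k‖ ^ 2
        = ∑ m ∈ image ZMod.valMinAbs {k : ZMod N | |k.valMinAbs| ≤ (M : ℤ)},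
            ‖u (m : ZMod N)‖ ^ 2 := by
          rw [sum_image fun _ _ _ _ h => ZMod.injective_valMinAbs h]
          simp only [ZMod.coe_valMinAbs]
      _ ≤ ∑ m ∈ Icc (-(M : ℤ)) M, ‖u (m : ZMod N)‖ ^ 2 := by
          refine sum_le_sum_of_subset_of_nonneg (image_subset_iff.mpr fun k hk => ?_)
            fun _ _ _ => sq_nonneg _
          exact mem_Icc.mpr (abs_le.mp (mem_filter.mp hk).2)
  · rw [sum_div]
    refine (sum_le_sum fun k hk => ?_).trans
      (sum_le_sum_of_subset_of_nonneg (filter_subset _ _) fun _ _ _ => by positivity)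
    have hk' : (M : ℝ) ≤ |(k.valMinAbs : ℝ)| := by
      exact_mod_cast (not_le.mp (mem_filter.mp hk).2).le
    rw [le_div_iff₀ (by positivity), mul_pow, mul_comm]
    gcongr

lemma valMinAbs_intCast_eq {N : ℕ} [NeZero N] {m : ℤ} (hm : 2 * m.natAbs < N) :
    (m : ZMod N).valMinAbs = m :=
  (ZMod.valMinAbs_spec _ _).mpr ⟨rfl, by constructor <;> omega⟩

lemma exists_sum_norm_sq_eq_one_of_lt {κ : Type*} [Fintype κ] {T : (κ → ℂ) → κ → ℂ}
    (hT : ∀ (c : ℂ) u, T (c • u) = c • T u) {C : ℝ} {u : κ → ℂ} (hC : 0 ≤ C)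
    (hu : C * ∑ k, ‖T u k‖ ^ 2 < ∑ k, ‖u k‖ ^ 2) :
    ∃ v : κ → ℂ, ∑ k, ‖v k‖ ^ 2 = 1 ∧ C * ∑ k, ‖T v k‖ ^ 2 < 1 := by
  set s := ∑ k, ‖u k‖ ^ 2
  have hs : 0 < s := lt_of_le_of_lt (by positivity) hu
  have hscale : ‖((√s : ℂ))⁻¹‖ ^ 2 = s⁻¹ := by
    rw [norm_inv, Complex.norm_real, inv_pow, Real.norm_eq_abs, sq_abs, Real.sq_sqrt hs.le]
  refine ⟨(√s : ℂ)⁻¹ • u, ?_, ?_⟩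
  · simp_rw [Pi.smul_apply, smul_eq_mul, norm_mul, mul_pow, hscale, ← mul_sum]
    exact inv_mul_cancel₀ hs.ne'
  · simp_rw [hT, Pi.smul_apply, smul_eq_mul, norm_mul, mul_pow, hscale, ← mul_sum]
    rwa [mul_left_comm, inv_mul_lt_iff₀ hs, mul_one]

lemma exists_tendsto_ultrafilter_of_norm_le {ι κ : Type*} (𝒰 : Ultrafilter ι) {x : ι → κ → ℂ}
    {B : ℝ} (hx : ∀ i k, ‖x i k‖ ≤ B) :
    ∃ y : κ → ℂ, ∀ k, ‖y k‖ ≤ B ∧ Tendsto (x · k) 𝒰 (𝓝 (y k)) := by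
  suffices h : ∀ k, ∃ y : ℂ, ‖y‖ ≤ B ∧ Tendsto (x · k) 𝒰 (𝓝 y) from Classical.skolem.mp h
  intro k
  obtain ⟨y, hy, hlim⟩ := (isCompact_closedBall (0 : ℂ) B).ultrafilter_le_nhds (𝒰.map (x · k))
    (le_principal_iff.mpr <| mem_map.mpr <| Eventually.of_forall fun i => by simpa using hx i k)
  exact ⟨y, by simpa using hy, hlim⟩

section Compactness

variable {c : ℝ} {a : ℤ → ℝ} {wN : ℕ → ℤ → ℤ → ℂ} {w : ℤ → ℤ → ℂ}

lemma tendsto_foldedOp {ι : Type*} {l : Filter ι} {N : ι → ℕ} [∀ i, NeZero (N i)]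
    (hN : Tendsto N l atTop) (ε : ℝ) (ha : Summable a) (ha0 : ∀ n, 0 ≤ a n)
    (hwN : ∀ M, 0 < M → IsElliptic (centralFreqs M) c a (wN M))
    (hlim : ∀ n m, Tendsto (wN · n m) atTop (𝓝 (w n m)))
    {u : ∀ i, ZMod (N i) → ℂ} (hu : ∀ i k, ‖u i k‖ ≤ 1) {U : ℤ → ℂ}
    (hU : ∀ m : ℤ, Tendsto (fun i => u i m) l (𝓝 (U m))) (k : ℤ) :
    Tendsto (fun i => foldedOp (N i) ε (wN (N i)) (u i) k) l
      (𝓝 (∑' n, w n (k - n) * U (k - n))) := by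
  have hrep (m : ℤ) : ∀ᶠ i in l, (m : ZMod (N i)).valMinAbs = m :=
    (hN.eventually_gt_atTop _).mono fun _ => valMinAbs_intCast_eq
  refine tendsto_tsum_of_dominated_convergence
    (bound := fun n => if n = 0 then ‖w 0 k‖ + 1 else a n) ?_ (fun n => ?_) ?_
  · exact ha.congr_cofinite <| (eventually_cofinite_ne 0).mono fun n hn => (if_neg hn).symm
  · refine (((hlim n (k - n)).comp hN).mul (hU (k - n))).congr' ?_
    filter_upwards [hrep k, hrep (k - n)] with i hk hkn
    rw [Int.cast_sub] at hkn ⊢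
    simp [foldedTerm, hk, hkn]
  · have hdiag : ∀ᶠ i in l, ‖wN (N i) 0 k‖ ≤ ‖w 0 k‖ + 1 :=
      ((hlim 0 k).comp hN).norm.eventually_le_const (lt_add_one _)
    filter_upwards [hrep k, hdiag] with i hk hwk n
    rw [norm_foldedTerm]
    split_ifs with hn
    · subst hn
      simpa [hk] using mul_le_mul hwk (hu i _) (norm_nonneg _) (by positivity)
    · simpa using mul_le_mul ((hwN _ (NeZero.pos _)).norm_le n hn _
        (valMinAbs_mem_centralFreqs _ _)) (hu i _) (norm_nonneg _) (ha0 n)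

lemma IsElliptic.one_le_two_mul_sum_Icc {N : ℕ} [NeZero N] {ε : ℝ} {v : ℤ → ℤ → ℂ}
    (hv : IsElliptic (centralFreqs N) c a v) (hc : 0 < c) (ha : Summable a) (ha0 : ∀ n, 0 ≤ a n)
    {u : ZMod N → ℂ} (hu : ∑ k, ‖u k‖ ^ 2 = 1) (hT : ∑ k, ‖foldedOp N ε v u k‖ ^ 2 ≤ 1) {M : ℕ}
    (hM : 2 * (2 + 2 * (∑' n, a n) ^ 2) < (c * M) ^ 2) :
    1 ≤ 2 * ∑ m ∈ Icc (-(M : ℤ)) M, ‖u (m : ZMod N)‖ ^ 2 := by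
  have hM0 : 0 < M := by
    rw [pos_iff_ne_zero]
    rintro rfl
    norm_num at hM
    nlinarith [sq_nonneg (∑' n, a n)]
  have hH1 := hv.sum_sq_abs_mul_norm_le ε hc.le ha ha0 u
  have hmass := sum_norm_sq_le_sum_Icc_add_div N u hM0
  have htail : (∑ k : ZMod N, (|(k.valMinAbs : ℝ)| * ‖u k‖) ^ 2) / (M : ℝ) ^ 2 ≤ 1 / 2 := by
    rw [div_le_iff₀ (by positivity), ← mul_le_mul_iff_right₀ (pow_pos hc 2)]
    rw [hu] at hH1
    linarith [mul_pow c M 2]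
  linarith

/-- Unit vectors with vanishing images converge along an ultrafilter, frequency by frequency, to a
null sequence of the limit operator, which is nonzero by tightness. -/
lemma exists_ne_zero_null_of_tendsto_zero {N : ℕ → ℕ} [∀ j, NeZero (N j)]
    (hN : Tendsto N atTop atTop) (ε : ℝ) (hc : 0 < c) (ha : RapidDecay a) (ha0 : ∀ n, 0 ≤ a n)
    (hwN : ∀ M, 0 < M → IsElliptic (centralFreqs M) c a (wN M))
    (hlim : ∀ n m, Tendsto (wN · n m) atTop (𝓝 (w n m))) {u : ∀ j, ZMod (N j) → ℂ}
    (hu : ∀ j, ∑ k, ‖u j k‖ ^ 2 = 1)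
    (hTu : Tendsto (fun j => ∑ k, ‖foldedOp (N j) ε (wN (N j)) (u j) k‖ ^ 2) atTop (𝓝 0)) :
    ∃ U : ℤ → ℂ, RapidDecay U ∧ (∀ k : ℤ, ∑' n, w n (k - n) * U (k - n) = 0) ∧ U ≠ 0 := by
  have hsumm : Summable a := ha.summable_norm.of_norm
  let 𝒰 : Ultrafilter ℕ := hyperfilter ℕ
  have h𝒰 : (𝒰 : Filter ℕ) ≤ atTop := Nat.cofinite_eq_atTop ▸ hyperfilter_le_cofinite
  replace hN := hN.mono_left h𝒰
  replace hTu := hTu.mono_left h𝒰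
  have hu1 (j : ℕ) (k : ZMod (N j)) : ‖u j k‖ ≤ 1 := by
    rw [← sq_le_one_iff₀ (norm_nonneg _), ← hu j]
    exact single_le_sum (f := fun k => ‖u j k‖ ^ 2) (fun _ _ => sq_nonneg _) (mem_univ k)
  obtain ⟨U, hU⟩ := exists_tendsto_ultrafilter_of_norm_le 𝒰 (x := fun j (m : ℤ) => u j m)
    fun j m => hu1 j m
  have hw : IsElliptic Set.univ c a w :=
    IsElliptic.of_tendsto (fun j => hwN _ (NeZero.pos (N j)))
      (fun m => hN.eventually (eventually_mem_centralFreqs m)) fun n m => (hlim n m).comp hN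
  have hnull (k : ℤ) : ∑' n, w n (k - n) * U (k - n) = 0 := by
    refine tendsto_nhds_unique
      (tendsto_foldedOp hN ε hsumm ha0 hwN hlim hu1 (fun m => (hU m).2) k) ?_
    refine squeeze_zero_norm (fun j => Real.le_sqrt_of_sq_le ?_)
      ((Real.continuous_sqrt.tendsto' 0 0 Real.sqrt_zero).comp hTu)
    exact single_le_sum (f := fun k => ‖foldedOp (N j) ε _ (u j) k‖ ^ 2)
      (fun _ _ => sq_nonneg _) (mem_univ _)
  refine ⟨U, hw.rapidDecay_of_null hc ha ha0 (fun k => (hU k).1) hnull, hnull, ?_⟩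
  rintro rfl
  obtain ⟨M, hM⟩ := ((tendsto_natCast_atTop_atTop.const_mul_atTop hc).eventually
    ((tendsto_pow_atTop two_ne_zero).eventually_gt_atTop
      (2 * (2 + 2 * (∑' n, a n) ^ 2)))).exists
  have hmass := ge_of_tendsto
    ((tendsto_finsetSum (Icc (-(M : ℤ)) M) fun m _ => (hU m).2.norm.pow 2).const_mul 2)
    ((hTu.eventually_le_const one_pos).mono fun j hj =>
      (hwN _ (NeZero.pos (N j))).one_le_two_mul_sum_Icc hc hsumm ha0 (hu j) hj hM)
  norm_num at hmass

theorem exists_sum_norm_sq_le_mul_foldedOp (ε : ℝ) (hc : 0 < c) (ha : RapidDecay a)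
    (ha0 : ∀ n, 0 ≤ a n) (hwN : ∀ N, 0 < N → IsElliptic (centralFreqs N) c a (wN N))
    (hlim : ∀ n m, Tendsto (wN · n m) atTop (𝓝 (w n m)))
    (hinj : ∀ u : ℤ → ℂ, RapidDecay u → (∀ k : ℤ, ∑' n, w n (k - n) * u (k - n) = 0) → u = 0) :
    ∃ C : ℝ, 0 < C ∧ ∃ N₀ : ℕ, ∀ (N : ℕ) [NeZero N], N₀ ≤ N → ∀ u : ZMod N → ℂ,
      ∑ k, ‖u k‖ ^ 2 ≤ C * ∑ k, ‖foldedOp N ε (wN N) u k‖ ^ 2 := by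
  by_contra! hcon
  choose N inst hN v hv using fun j : ℕ => hcon (j + 1) (by positivity) j
  choose u hu hTu using fun j => exists_sum_norm_sq_eq_one_of_lt
    (foldedOp_smul (N j) ε (wN (N j))) (by positivity) (hv j)
  have hTu0 : Tendsto (fun j => ∑ k, ‖foldedOp (N j) ε (wN (N j)) (u j) k‖ ^ 2) atTop (𝓝 0) := by
    refine squeeze_zero (fun j => by positivity) (fun j => ?_)
      (tendsto_one_div_add_atTop_nhds_zero_nat (𝕜 := ℝ))
    rw [le_div_iff₀' (by positivity)]
    exact (hTu j).le
  obtain ⟨U, hdecay, hnull, hne⟩ := exists_ne_zero_null_of_tendsto_zero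
    (tendsto_atTop_mono hN tendsto_id) ε hc ha ha0 hwN hlim hu hTu0
  exact hne (hinj U hdecay hnull)

end Compactness

/-! ### Fourier series of smooth periodic functions -/

lemma fc_eq_integral_mode (g : ℝ → ℂ) (m : ℤ) : fc g m = ∫ t in (0 : ℝ)..1, g t * mode (-m) t := by
  simp only [fc, mode_eq_exp]
  push_cast
  simp only [mul_neg, neg_mul]

lemma fourierCoeff_lift {g : ℝ → ℂ} (hp : Function.Periodic g 1) (m : ℤ) :
    fourierCoeff (T := (1 : ℝ)) hp.lift m = fc g m := by
  rw [fourierCoeff_eq_intervalIntegral _ _ 0, fc_eq_integral_mode]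
  simp only [zero_add, div_one, one_smul, Function.Periodic.lift_coe, smul_eq_mul]
  exact intervalIntegral.integral_congr fun t _ => mul_comm _ _

lemma hasSum_fc {g : ℝ → ℂ} (hc : Continuous g) (hp : Function.Periodic g 1)
    (hs : Summable (fc g)) (x : ℝ) : HasSum (fun m => fc g m * mode m x) (g x) := by
  have hcoeff : fourierCoeff (T := (1 : ℝ)) hp.lift = fc g := funext (fourierCoeff_lift hp)
  let G : C(AddCircle (1 : ℝ), ℂ) := ⟨hp.lift, continuous_coinduced_dom.mpr hc⟩
  have h := has_pointwise_sum_fourier_series_of_summable (f := G) (hcoeff ▸ hs) x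
  change HasSum (fun m => fourierCoeff (T := (1 : ℝ)) hp.lift m • mode m x) (g x) at h
  simpa only [hcoeff, smul_eq_mul] using h

lemma integral_mode (n : ℤ) : ∫ t in (0 : ℝ)..1, mode n t = if n = 0 then 1 else 0 := by
  split_ifs with hn
  · simp [hn]
  · have hn' : (2 * Real.pi * Complex.I * n : ℂ) ≠ 0 := by simp [Real.pi_ne_zero, hn]
    have hInt : IntervalIntegrable (fun t => 2 * Real.pi * Complex.I * n * mode n t)
        MeasureTheory.volume 0 1 :=
      (continuous_const.mul (continuous_mode n)).intervalIntegrable _ _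
    have h := intervalIntegral.integral_eq_sub_of_hasDerivAt
      (fun t _ => hasDerivAt_mode n t) hInt
    rw [intervalIntegral.integral_const_mul, (mode_periodic n).eq, sub_self] at h
    exact (mul_eq_zero.mp h).resolve_left hn'

lemma norm_fc_le {g : ℝ → ℂ} {C : ℝ} (hC : ∀ t, ‖g t‖ ≤ C) (m : ℤ) : ‖fc g m‖ ≤ C := by
  rw [fc_eq_integral_mode]
  simpa using intervalIntegral.norm_integral_le_of_norm_le_const (a := 0) (b := 1)
    (f := fun t => g t * mode (-m) t) fun t _ => by simpa using hC t

lemma fc_deriv {g : ℝ → ℂ} (hg : ContDiff ℝ 1 g) (hp : Function.Periodic g 1) (m : ℤ) :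
    fc (deriv g) m = 2 * Real.pi * Complex.I * m * fc g m := by
  have hparts := intervalIntegral.integral_mul_deriv_eq_deriv_mul (a := 0) (b := 1)
    (fun x _ => hasDerivAt_mode (-m) x)
    (fun x _ => (hg.differentiable one_ne_zero x).hasDerivAt)
    ((continuous_const.mul (continuous_mode _)).intervalIntegrable _ _)
    ((hg.continuous_deriv le_rfl).intervalIntegrable _ _)
  rw [(mode_periodic _).eq, hp.eq, sub_self, zero_sub] at hparts
  simp only [fc_eq_integral_mode, mul_comm _ (mode _ _)]
  rw [hparts, ← intervalIntegral.integral_neg, ← intervalIntegral.integral_const_mul]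
  refine intervalIntegral.integral_congr fun t _ => ?_
  push_cast
  ring

lemma periodic_deriv {g : ℝ → ℂ} {c : ℝ} (hp : Function.Periodic g c) :
    Function.Periodic (deriv g) c := fun x => by
  rw [← deriv_comp_add_const, funext hp]

lemma exists_norm_le_of_periodic {g : ℝ → ℂ} (hc : Continuous g) (hp : Function.Periodic g 1) :
    ∃ C, ∀ t, ‖g t‖ ≤ C := by
  obtain ⟨C, hC⟩ := isCompact_Icc.exists_bound_of_continuousOn (hc.continuousOn (s := Set.Icc 0 1))
  refine ⟨C, fun t => ?_⟩
  obtain ⟨y, hy, h⟩ := hp.exists_mem_Ico₀ one_pos t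
  exact h ▸ hC y (Set.Ico_subset_Icc_self hy)

lemma norm_two_pi_I_mul (m : ℤ) :
    ‖(2 * Real.pi * Complex.I * m : ℂ)‖ = 2 * Real.pi * |(m : ℝ)| := by
  simp [abs_of_pos Real.pi_pos]

lemma bracket_mul_norm_fc_le {g : ℝ → ℂ} (hg : ContDiff ℝ 1 g) (hp : Function.Periodic g 1)
    (m : ℤ) : bracket m * ‖fc g m‖ ≤ ‖fc g m‖ + ‖fc (deriv g) m‖ := by
  have hpi : (1 : ℝ) ≤ 2 * Real.pi := by linarith [Real.pi_gt_three]
  rw [fc_deriv hg hp, norm_mul, norm_two_pi_I_mul, bracket, add_mul, one_mul]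
  gcongr
  exact le_mul_of_one_le_left (abs_nonneg _) hpi

lemma rapidDecay_fc {g : ℝ → ℂ} (hg : ContDiff ℝ (⊤ : ℕ∞) g) (hp : Function.Periodic g 1) :
    RapidDecay (fc g) := by
  intro j
  induction j generalizing g with
  | zero =>
    obtain ⟨C, hC⟩ := exists_norm_le_of_periodic hg.continuous hp
    exact ⟨C, fun m => by simpa using norm_fc_le hC m⟩
  | succ j ih =>
    obtain ⟨C, hC⟩ := ih hg hp
    obtain ⟨C', hC'⟩ := ih (contDiff_infty_iff_deriv.mp hg).2 (periodic_deriv hp)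
    refine ⟨C + C', fun m => ?_⟩
    have hm := mul_le_mul_of_nonneg_left
      (bracket_mul_norm_fc_le (hg.of_le (by exact_mod_cast le_top)) hp m)
      (pow_nonneg (bracket_pos m).le j)
    rw [pow_succ, mul_assoc]
    linarith [hC m, hC' m]

lemma hasSum_fc_of_contDiff {g : ℝ → ℂ} (hg : ContDiff ℝ (⊤ : ℕ∞) g)
    (hp : Function.Periodic g 1) (x : ℝ) : HasSum (fun m => fc g m * mode m x) (g x) :=
  hasSum_fc hg.continuous hp (rapidDecay_fc hg hp).summable_norm.of_norm x

lemma fc_eq_of_hasSum {u : ℤ → ℂ} (hu : Summable fun m => ‖u m‖) {g : ℝ → ℂ}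
    (hg : ∀ x, HasSum (fun m => u m * mode m x) (g x)) (n : ℤ) : fc g n = u n := by
  have hsum := intervalIntegral.hasSum_integral_of_dominated_convergence
    (μ := MeasureTheory.volume) (a := 0) (b := 1)
    (F := fun m t => u m * mode m t * mode (-n) t) (f := fun t => g t * mode (-n) t)
    (fun m _ => ‖u m‖)
    (fun m => ((continuous_const.mul (continuous_mode m)).mul
      (continuous_mode _)).aestronglyMeasurable)
    (fun m => .of_forall fun t _ => by simp) (.of_forall fun t _ => hu) (by simp)
    (.of_forall fun t _ => (hg t).mul_right _)
  have hterm (m : ℤ) : ∫ t in (0 : ℝ)..1, u m * mode m t * mode (-n) t =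
      if m = n then u n else 0 := by
    simp_rw [mul_assoc, ← mode_add]
    rw [intervalIntegral.integral_const_mul, integral_mode]
    split_ifs <;> grind
  simp_rw [hterm] at hsum
  rw [fc_eq_integral_mode]
  exact hsum.unique (hasSum_ite_eq n (u n))

/-! ### Fourier expansion of smooth kernels -/

/-- Decay faster than every product of powers of the two frequencies. -/
def RapidDecay₂ (b : ℤ → ℤ → ℂ) : Prop :=
  ∀ j k : ℕ, ∃ C : ℝ, ∀ n q, bracket n ^ j * bracket q ^ k * ‖b n q‖ ≤ C

lemma RapidDecay₂.summable_norm {b : ℤ → ℤ → ℂ} (hb : RapidDecay₂ b) :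
    Summable fun p : ℤ × ℤ => ‖b p.1 p.2‖ := by
  obtain ⟨C, hC⟩ := hb 2 2
  have hinv (n : ℤ) : 0 ≤ (bracket n ^ 2)⁻¹ := by positivity
  refine Summable.of_nonneg_of_le (fun _ => norm_nonneg _) (fun p => ?_)
    ((summable_inv_bracket_sq.mul_of_nonneg summable_inv_bracket_sq hinv hinv).mul_left C)
  have h₁ := bracket_pos p.1
  have h₂ := bracket_pos p.2
  rw [← mul_inv, ← div_eq_mul_inv, le_div_iff₀' (by positivity)]
  exact hC p.1 p.2

/-- Double Fourier coefficient of a doubly periodic kernel, as an iterated integral. -/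
def fc2 (B : ℝ → ℝ → ℂ) (n q : ℤ) : ℂ := fc (fun s => fc (B s) q) n

namespace SPK

variable {B : ℝ → ℝ → ℂ} (h : SPK B)

include h

lemma periodic_left (t : ℝ) : Function.Periodic (B · t) 1 := fun s => h.2.1 s t

lemma periodic_right (s : ℝ) : Function.Periodic (B s) 1 := h.2.2 s

lemma contDiff_right (s : ℝ) : ContDiff ℝ (⊤ : ℕ∞) (B s) :=
  h.1.comp (contDiff_const.prodMk contDiff_id)

lemma swap : SPK fun s t => B t s :=
  ⟨h.1.comp (contDiff_snd.prodMk contDiff_fst), fun s t => h.2.2 t s, fun s t => h.2.1 t s⟩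

lemma deriv_right : SPK fun s => deriv (B s) := by
  refine ⟨?_, fun s t => congrArg (deriv · t) (funext (h.2.1 s)),
    fun s => periodic_deriv (h.periodic_right s)⟩
  have hpartial (p : ℝ × ℝ) :
      deriv (B p.1) p.2 = fderiv ℝ (fun p : ℝ × ℝ => B p.1 p.2) p (0, 1) := by
    have hline : HasDerivAt (fun t => (p.1, t)) ((0 : ℝ), (1 : ℝ)) p.2 :=
      (hasDerivAt_const p.2 p.1).prodMk (hasDerivAt_id p.2)
    have hB : HasFDerivAt (fun p : ℝ × ℝ => B p.1 p.2) _ (p.1, p.2) :=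
      (h.1.differentiable (by simp) p).hasFDerivAt
    exact (hB.comp_hasDerivAt p.2 hline).deriv
  simp_rw [hpartial]
  exact (h.1.fderiv_right (m := (⊤ : ℕ∞)) le_rfl).clm_apply contDiff_const

lemma exists_norm_le : ∃ C, ∀ s t, ‖B s t‖ ≤ C := by
  obtain ⟨C, hC⟩ := (isCompact_Icc.prod isCompact_Icc).exists_bound_of_continuousOn
    (h.1.continuous.continuousOn (s := Set.Icc 0 1 ×ˢ Set.Icc 0 1))
  refine ⟨C, fun s t => ?_⟩
  obtain ⟨t', ht', ht⟩ := (h.periodic_right s).exists_mem_Ico₀ one_pos t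
  obtain ⟨s', hs', hs⟩ := (h.periodic_left t').exists_mem_Ico₀ one_pos s
  rw [ht, hs]
  exact hC (s', t') ⟨Set.Ico_subset_Icc_self hs', Set.Ico_subset_Icc_self ht'⟩

lemma continuous_fc (q : ℤ) : Continuous fun s => fc (B s) q := by
  simp_rw [fc_eq_integral_mode]
  exact intervalIntegral.continuous_parametric_intervalIntegral_of_continuous'
    (h.1.continuous.mul ((continuous_mode _).comp continuous_snd)) _ _

lemma fc2_swap (n q : ℤ) : fc2 (fun s t => B t s) q n = fc2 B n q := by
  simp_rw [fc2, fc_eq_integral_mode, ← intervalIntegral.integral_mul_const]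
  have hcont : Continuous (Function.uncurry fun x t => B t x * mode (-n) t * mode (-q) x) :=
    (h.swap.1.continuous.mul ((continuous_mode _).comp continuous_snd)).mul
      ((continuous_mode _).comp continuous_fst)
  rw [MeasureTheory.intervalIntegral_intervalIntegral_swap]
  · simp only [mul_right_comm]
  · exact (hcont.continuousOn.integrableOn_compact (isCompact_uIcc.prod isCompact_uIcc)).mono_set
      (Set.prod_mono Set.uIoc_subset_uIcc Set.uIoc_subset_uIcc)

lemma fc2_deriv_right (n q : ℤ) :
    fc2 (fun s => deriv (B s)) n q = 2 * Real.pi * Complex.I * q * fc2 B n q := by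
  have hderiv (s : ℝ) := fc_deriv ((h.contDiff_right s).of_le (by exact_mod_cast le_top))
    (h.periodic_right s) q
  simp_rw [fc2, hderiv, fc_eq_integral_mode _ n, mul_assoc,
    ← intervalIntegral.integral_const_mul]

omit h in
lemma bracket_pow_mul_norm_fc2_le (h : SPK B) (k : ℕ) :
    ∃ C, ∀ n q, bracket q ^ k * ‖fc2 B n q‖ ≤ C := by
  induction k generalizing B with
  | zero =>
    obtain ⟨C, hC⟩ := h.exists_norm_le
    exact ⟨C, fun n q => by simpa [fc2] using norm_fc_le (fun s => norm_fc_le (hC s) q) n⟩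
  | succ k ih =>
    obtain ⟨C, hC⟩ := ih h
    obtain ⟨C', hC'⟩ := ih h.deriv_right
    refine ⟨C + C', fun n q => ?_⟩
    have hgain : bracket q * ‖fc2 B n q‖ ≤ ‖fc2 B n q‖ + ‖fc2 (fun s => deriv (B s)) n q‖ := by
      rw [h.fc2_deriv_right, norm_mul, norm_two_pi_I_mul, bracket]
      nlinarith [Real.pi_gt_three, mul_nonneg (abs_nonneg (q : ℝ)) (norm_nonneg (fc2 B n q))]
    have hpow := mul_le_mul_of_nonneg_left hgain (pow_nonneg (bracket_pos q).le k)
    rw [pow_succ, mul_assoc]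
    linarith [hC n q, hC' n q]

lemma rapidDecay₂_fc2 : RapidDecay₂ (fc2 B) := by
  intro j k
  obtain ⟨C, hC⟩ := h.bracket_pow_mul_norm_fc2_le (2 * k)
  obtain ⟨C', hC'⟩ := h.swap.bracket_pow_mul_norm_fc2_le (2 * j)
  refine ⟨C + C', fun n q => ?_⟩
  have hswap := hC' q n
  rw [h.fc2_swap] at hswap
  have hamgm : bracket n ^ j * bracket q ^ k ≤ bracket n ^ (2 * j) + bracket q ^ (2 * k) := by
    rw [pow_mul', pow_mul']
    nlinarith [sq_nonneg (bracket n ^ j - bracket q ^ k), sq_nonneg (bracket n ^ j),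
      sq_nonneg (bracket q ^ k)]
  linarith [mul_le_mul_of_nonneg_right hamgm (norm_nonneg (fc2 B n q)), hC n q]

lemma hasSum_fc2 (s x : ℝ) :
    HasSum (fun p : ℤ × ℤ => fc2 B p.1 p.2 * mode p.1 s * mode p.2 x) (B s x) := by
  have hnorm := h.rapidDecay₂_fc2.summable_norm
  have hsum : Summable fun p : ℤ × ℤ => fc2 B p.1 p.2 * mode p.1 s * mode p.2 x :=
    .of_norm (by simpa using hnorm)
  have hinner (q : ℤ) :
      HasSum (fun n => fc2 B n q * mode n s * mode q x) (fc (B s) q * mode q x) := by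
    have hperiodic : Function.Periodic (fun s => fc (B s) q) 1 := fun s =>
      congrArg (fc · q) (funext (h.2.1 s))
    exact (hasSum_fc (h.continuous_fc q) hperiodic
      (hnorm.prod_symm.prod_factor q).of_norm s).mul_right _
  have hswap := hsum.prod_symm.hasSum
  have houter := hasSum_fc_of_contDiff (h.contDiff_right s) (h.periodic_right s) x
  rw [(hswap.prod_fiberwise hinner).unique houter] at hswap
  exact (Equiv.prodComm ℤ ℤ).hasSum_iff.mp hswap

lemma comp_add : SPK fun s x => B s (s + x) := by
  refine ⟨h.1.comp (contDiff_fst.prodMk (contDiff_fst.add contDiff_snd)), fun s x => ?_,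
    fun s x => ?_⟩
  · beta_reduce
    rw [h.2.1, add_right_comm, h.2.2]
  · beta_reduce
    rw [← add_assoc, h.2.2]

end SPK

/-- Coefficients of the expansion of a kernel in the variables `s` and `t - s`, which turns an
integral operator with this kernel into multiplications and convolutions. -/
def kernelCoeff (A : ℝ → ℝ → ℂ) : ℤ → ℤ → ℂ := fc2 fun s x => A s (s + x)

namespace SPK

variable {A : ℝ → ℝ → ℂ} (h : SPK A)

include h

lemma rapidDecay₂_kernelCoeff : RapidDecay₂ (kernelCoeff A) := h.comp_add.rapidDecay₂_fc2

lemma hasSum_kernelCoeff (s t : ℝ) :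
    HasSum (fun p : ℤ × ℤ => kernelCoeff A p.1 p.2 * mode p.1 s * mode p.2 (t - s)) (A s t) := by
  simpa [kernelCoeff] using h.comp_add.hasSum_fc2 s (t - s)

lemma tsum_kernelCoeff {α : ℂ} (hα : ∀ s, A s s = α) (n : ℤ) :
    ∑' q, kernelCoeff A n q = if n = 0 then α else 0 := by
  have hnorm := h.rapidDecay₂_kernelCoeff.summable_norm
  have hdiag (s : ℝ) : HasSum (fun n => (∑' q, kernelCoeff A n q) * mode n s) α := by
    have hs := h.hasSum_kernelCoeff s s
    simp only [sub_self, mode_zero_arg, mul_one, hα] at hs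
    refine HasSum.prod_fiberwise hs fun n => ?_
    exact HasSum.mul_right (mode n s) (hnorm.prod_factor n).of_norm.hasSum
  have hrow : Summable fun n => ‖∑' q, kernelCoeff A n q‖ :=
    .of_nonneg_of_le (fun _ => norm_nonneg _)
      (fun n => norm_tsum_le_tsum_norm (hnorm.prod_factor n)) hnorm.prod
  rw [← fc_eq_of_hasSum hrow hdiag n, fc_eq_integral_mode, intervalIntegral.integral_const_mul,
    integral_mode]
  simp

end SPK

/-! ### Fourier coefficients of `log sin²` -/

/-- The singular factor `log sin² (π x)` of the kernels. -/
def logSinSq (x : ℝ) : ℝ := Real.log (Real.sin (Real.pi * x) ^ 2)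

/-- The Abel regularisation `log (|1 - r e^{2πix}|² / 4)` of `logSinSq`. -/
def abelLogSinSq (r x : ℝ) : ℝ :=
  Real.log ((1 - r) ^ 2 + 4 * r * Real.sin (Real.pi * x) ^ 2) - Real.log 4

/-- Fourier coefficients of `abelLogSinSq r`; the quotient `r ^ 0 / 0` at `n = 0` vanishes. -/
def abelCoeff (r : ℝ) (n : ℤ) : ℝ :=
  (if n = 0 then -Real.log 4 else 0) - r ^ n.natAbs / (n.natAbs : ℝ)

lemma norm_sq_one_sub_mul_mode_one (r x : ℝ) :
    ‖1 - r * mode 1 x‖ ^ 2 = (1 - r) ^ 2 + 4 * r * Real.sin (Real.pi * x) ^ 2 := by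
  have hmode : mode 1 x = Real.cos (2 * (Real.pi * x)) + Real.sin (2 * (Real.pi * x)) *
      Complex.I := by
    rw [mode_eq_exp, Complex.ofReal_cos, Complex.ofReal_sin, ← Complex.exp_mul_I]
    push_cast
    ring_nf
  have hcos : Real.cos (2 * (Real.pi * x)) = 1 - 2 * Real.sin (Real.pi * x) ^ 2 := by
    rw [Real.cos_two_mul, Real.cos_sq']
    ring
  rw [hmode, Complex.sq_norm, Complex.normSq_apply]
  simp only [Complex.sub_re, Complex.sub_im, Complex.mul_re, Complex.mul_im, Complex.add_re,
    Complex.add_im, Complex.ofReal_re, Complex.ofReal_im, Complex.I_re, Complex.I_im,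
    Complex.one_re, Complex.one_im]
  linear_combination r ^ 2 * Real.sin_sq_add_cos_sq (2 * (Real.pi * x)) - 2 * r * hcos

lemma mode_one_pow (n : ℕ) (x : ℝ) : mode 1 x ^ n = mode n x := by
  rw [mode_eq_exp, mode_eq_exp, ← Complex.exp_nat_mul]
  push_cast
  ring_nf

/-- The Taylor series of `log (1 - z)` at `z = r e^{2πix}`, added to its conjugate. -/
lemma hasSum_abelCoeff {r : ℝ} (h0 : 0 ≤ r) (h1 : r < 1) (x : ℝ) :
    HasSum (fun n => (abelCoeff r n : ℂ) * mode n x) (abelLogSinSq r x : ℂ) := by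
  set z : ℂ := r * mode 1 x with hz
  have hpow (n : ℕ) : z ^ n = r ^ n * mode n x := by rw [hz, mul_pow, mode_one_pow]
  have htaylor := Complex.hasSum_taylorSeries_neg_log (z := z) (by simpa [hz, abs_of_nonneg h0])
  let f : ℤ → ℂ := fun n => -(r ^ n.natAbs / n.natAbs) * mode n x
  have hterm (n : ℕ) : f n = -(z ^ n / n) := by
    simp only [f, Int.natAbs_natCast, hpow]
    ring
  have hterm_neg (n : ℕ) : f (-n) = -(starRingEnd ℂ) (z ^ n / n) := by
    simp only [f, Int.natAbs_neg, Int.natAbs_natCast, hpow, map_div₀, map_mul, map_pow,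
      Complex.conj_ofReal, conj_mode, map_natCast]
    ring
  have hnonneg : HasSum (fun n : ℕ => f n) (Complex.log (1 - z)) := by
    simpa only [hterm, neg_neg] using htaylor.neg
  have hnonpos : HasSum (fun n : ℕ => f (-n)) ((starRingEnd ℂ) (Complex.log (1 - z))) := by
    simpa only [hterm_neg, map_neg, neg_neg] using (Complex.hasSum_conj'.mpr htaylor).neg
  have hreal : Complex.log (1 - z) + (starRingEnd ℂ) (Complex.log (1 - z)) =
      (Real.log (‖1 - z‖ ^ 2) : ℂ) := by
    rw [Complex.add_conj, Complex.log_re, Real.log_pow]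
    norm_cast
  convert (hasSum_ite_eq (0 : ℤ) (-Real.log 4 : ℂ)).add (hnonneg.of_nat_of_neg hnonpos) using 1
  · ext n
    by_cases hn : n = 0 <;> simp [abelCoeff, f, hn, -Nat.cast_natAbs]
  · rw [hreal, norm_sq_one_sub_mul_mode_one, abelLogSinSq]
    simp [f]
    ring

lemma fc_abelLogSinSq {r : ℝ} (h0 : 0 ≤ r) (h1 : r < 1) (n : ℤ) :
    fc (fun x => (abelLogSinSq r x : ℂ)) n = abelCoeff r n := by
  refine fc_eq_of_hasSum ?_ (hasSum_abelCoeff h0 h1) n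
  simpa using (hasSum_abelCoeff h0 h1 0).summable.norm

lemma tendsto_abelLogSinSq {x : ℝ} (hx : Real.sin (Real.pi * x) ≠ 0) :
    Tendsto (abelLogSinSq · x) (𝓝[<] 1) (𝓝 (logSinSq x)) := by
  have hcont : ContinuousAt (abelLogSinSq · x) 1 :=
    ((by fun_prop : ContinuousAt _ _).log (by simpa using hx)).sub continuousAt_const
  have hone : abelLogSinSq 1 x = logSinSq x := by
    rw [abelLogSinSq, logSinSq, ← Real.log_div (by simpa using hx) (by norm_num)]
    ring_nf
  exact hone ▸ hcont.tendsto.mono_left nhdsWithin_le_nhds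

lemma abs_abelLogSinSq_le {r x : ℝ} (h0 : 1 / 2 ≤ r) (h1 : r < 1)
    (hx : Real.sin (Real.pi * x) ≠ 0) : |abelLogSinSq r x| ≤ |logSinSq x| + Real.log 2 := by
  have hsin : 0 < Real.sin (Real.pi * x) ^ 2 := by positivity
  have hsin1 : Real.sin (Real.pi * x) ^ 2 ≤ 1 := Real.sin_sq_le_one _
  have hpos : 0 < (1 - r) ^ 2 + 4 * r * Real.sin (Real.pi * x) ^ 2 := by nlinarith
  have hupper : abelLogSinSq r x ≤ 0 := by
    rw [abelLogSinSq, sub_nonpos]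
    exact Real.log_le_log hpos (by nlinarith)
  have hlower : logSinSq x - Real.log 2 ≤ abelLogSinSq r x := by
    rw [abelLogSinSq, logSinSq, ← Real.log_div hsin.ne' two_ne_zero,
      ← Real.log_div hpos.ne' (by norm_num)]
    exact Real.log_le_log (by positivity) (by nlinarith [sq_nonneg (1 - r)])
  rw [abs_of_nonpos hupper]
  linarith [neg_le_abs (logSinSq x)]

lemma intervalIntegrable_logSinSq : IntervalIntegrable logSinSq MeasureTheory.volume 0 1 := by
  have h := ((intervalIntegrable_log_sin (a := 0) (b := Real.pi)).comp_mul_left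
    (c := Real.pi)).const_mul 2
  rw [zero_div, div_self Real.pi_ne_zero] at h
  convert h using 2 with x
  simp [logSinSq, Real.log_pow]

lemma ae_sin_ne_zero :
    ∀ᵐ x : ℝ, x ∈ Set.uIoc (0 : ℝ) 1 → Real.sin (Real.pi * x) ≠ 0 := by
  filter_upwards [MeasureTheory.Measure.ae_ne MeasureTheory.volume (1 : ℝ)] with x hx1 hx
  rw [Set.uIoc_of_le zero_le_one] at hx
  exact (Real.sin_pos_of_pos_of_lt_pi (mul_pos Real.pi_pos hx.1)
    (mul_lt_of_lt_one_right Real.pi_pos (hx.2.lt_of_ne hx1))).ne'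

lemma tendsto_fc_abelLogSinSq (n : ℤ) :
    Tendsto (fun r => fc (fun x => (abelLogSinSq r x : ℂ)) n) (𝓝[<] 1)
      (𝓝 (fc (fun x => (logSinSq x : ℂ)) n)) := by
  have hnear : ∀ᶠ r : ℝ in 𝓝[<] 1, r ∈ Set.Ioo (1 / 2 : ℝ) 1 := Ioo_mem_nhdsLT (by norm_num)
  simp_rw [fc_eq_integral_mode]
  refine intervalIntegral.tendsto_integral_filter_of_dominated_convergence
    (fun x => |logSinSq x| + Real.log 2) ?_ ?_ (intervalIntegrable_logSinSq.abs.add (by simp)) ?_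
  · have hmeas (r : ℝ) : Measurable (abelLogSinSq r) := by unfold abelLogSinSq; fun_prop
    exact .of_forall fun r => ((Complex.measurable_ofReal.comp (hmeas r)).mul
      (continuous_mode _).measurable).aestronglyMeasurable
  · filter_upwards [hnear] with r hr
    filter_upwards [ae_sin_ne_zero] with x hsin hx
    rw [norm_mul, norm_mode, mul_one, Complex.norm_real]
    exact abs_abelLogSinSq_le hr.1.le hr.2 (hsin hx)
  · filter_upwards [ae_sin_ne_zero] with x hsin hx
    exact ((Complex.continuous_ofReal.tendsto _).comp
      (tendsto_abelLogSinSq (hsin hx))).mul_const _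

/-- Fourier coefficients of `logSinSq`: `-log 4` at `0` and `-1 / |n|` elsewhere. -/
def logCoeff (n : ℤ) : ℝ := abelCoeff 1 n

lemma logCoeff_of_ne_zero {n : ℤ} (hn : n ≠ 0) : logCoeff n = -|(n : ℝ)|⁻¹ := by
  simp [logCoeff, abelCoeff, hn, Nat.cast_natAbs]

lemma fc_logSinSq (n : ℤ) : fc (fun x => (logSinSq x : ℂ)) n = logCoeff n := by
  refine tendsto_nhds_unique (tendsto_fc_abelLogSinSq n) ?_
  have hcont : Continuous (abelCoeff · n) := by unfold abelCoeff; fun_prop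
  refine (((Complex.continuous_ofReal.comp hcont).tendsto 1).mono_left
    nhdsWithin_le_nhds).congr' ?_
  filter_upwards [Ioo_mem_nhdsLT one_pos] with r hr
  exact (fc_abelLogSinSq hr.1.le hr.2 n).symm

/-! ### Aliasing -/

lemma one_le_abs_intCast {n : ℤ} (hn : n ≠ 0) : 1 ≤ |(n : ℝ)| := by
  exact_mod_cast Int.one_le_abs hn

lemma abs_intCast_add_le (m n : ℤ) : |((m + n : ℤ) : ℝ)| ≤ |(m : ℝ)| + |(n : ℝ)| := by
  push_cast
  exact abs_add_le _ _

/-- Fourier coefficients computed by the quadrature rule with nodes `(k + ε) / N`. It is written as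
an infinite sum, which is finite for `N ≠ 0`, in order to make sense for every `N`. -/
def discreteCoeff (N : ℕ) (ε : ℝ) (g : ℝ → ℂ) (n : ℤ) : ℂ :=
  (N : ℂ)⁻¹ * ∑' k : ZMod N, g (node N ε k) * mode (-n) (node N ε k)

lemma discreteCoeff_eq_sum (N : ℕ) [NeZero N] (ε : ℝ) (g : ℝ → ℂ) (n : ℤ) :
    discreteCoeff N ε g n = (N : ℂ)⁻¹ * ∑ k, g (node N ε k) * mode (-n) (node N ε k) := by
  rw [discreteCoeff, tsum_fintype]

lemma mode_mul_natCast_div (N : ℕ) [NeZero N] (p : ℤ) (x : ℝ) :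
    mode (p * N) (x / N) = mode p x := by
  have hN : (N : ℂ) ≠ 0 := NeZero.ne _
  rw [mode_eq_exp, mode_eq_exp]
  congr 1
  push_cast
  field_simp

lemma mode_mul_natCast_node (N : ℕ) [NeZero N] (p : ℤ) (ε : ℝ) (k : ZMod N) :
    mode (p * N) (node N ε k) = mode p ε := by
  have hk : mode p (k.val : ℝ) = 1 := by exact_mod_cast mode_int p k.val
  rw [node, mode_mul_natCast_div, mode_add_arg, hk, one_mul]

lemma inv_mul_sum_mode_node (N : ℕ) [NeZero N] (ε : ℝ) (n : ℤ) :
    (N : ℂ)⁻¹ * ∑ k : ZMod N, mode n (node N ε k) =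
      if (N : ℤ) ∣ n then mode n (ε / N) else 0 := by
  have hN : (N : ℂ) ≠ 0 := NeZero.ne _
  simp_rw [sum_mode_node, ZMod.intCast_zmod_eq_zero_iff_dvd]
  split_ifs
  · rw [inv_mul_cancel_left₀ hN]
  · rw [mul_zero]

lemma hasSum_discreteCoeff (N : ℕ) [NeZero N] (ε : ℝ) {g : ℝ → ℂ} {u : ℤ → ℂ}
    (hg : ∀ x, HasSum (fun m => u m * mode m x) (g x)) (n : ℤ) :
    HasSum (fun p : ℤ => u (n + p * N) * mode p ε) (discreteCoeff N ε g n) := by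
  have hall : HasSum (fun m => (N : ℂ)⁻¹ * ∑ k : ZMod N,
      u m * mode m (node N ε k) * mode (-n) (node N ε k)) (discreteCoeff N ε g n) := by
    rw [discreteCoeff_eq_sum]
    exact (hasSum_sum fun k _ => (hg _).mul_right _).mul_left _
  have hterm (m : ℤ) : (N : ℂ)⁻¹ * ∑ k : ZMod N,
      u m * mode m (node N ε k) * mode (-n) (node N ε k) =
        if (N : ℤ) ∣ m - n then u m * mode (m - n) (ε / N) else 0 := by
    simp_rw [mul_assoc, ← mode_add, ← mul_sum, mul_left_comm _ (u m), ← sub_eq_add_neg,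
      inv_mul_sum_mode_node, mul_ite, mul_zero]
  have hinj : Function.Injective fun p : ℤ => n + p * N := fun p q h =>
    mul_right_cancel₀ (NeZero.ne (N : ℤ)) (add_left_cancel h)
  simp_rw [hterm] at hall
  rw [← hinj.hasSum_iff] at hall
  · simpa [Function.comp_def, mode_mul_natCast_div] using hall
  · rintro m hm
    refine if_neg ?_
    rintro ⟨p, hp⟩
    exact hm ⟨p, by simp only; linarith⟩

lemma norm_discreteCoeff_add_mul (N : ℕ) [NeZero N] (ε : ℝ) (g : ℝ → ℂ) (n p : ℤ) :
    ‖discreteCoeff N ε g (n + p * N)‖ = ‖discreteCoeff N ε g n‖ := by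
  have hshift : discreteCoeff N ε g (n + p * N) = mode (-p) ε * discreteCoeff N ε g n := by
    simp_rw [discreteCoeff_eq_sum, neg_add, mode_add, ← neg_mul, mode_mul_natCast_node,
      ← mul_assoc, ← sum_mul]
    ring
  rw [hshift, norm_mul, norm_mode, one_mul]

/-! ### The quadrature error for `log sin²` -/

lemma mul_one_sub_mul_pow_le {r : ℝ} (h0 : 0 ≤ r) (h1 : r ≤ 1) (a : ℕ) :
    a * (1 - r) * r ^ a ≤ 1 - r ^ a := by
  have hgeom : (1 - r) * ∑ k ∈ range a, r ^ k = 1 - r ^ a := mul_neg_geom_sum r a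
  have hsum : a * r ^ a ≤ ∑ k ∈ range a, r ^ k := by
    simpa using sum_le_sum fun k (hk : k ∈ range a) =>
      pow_le_pow_of_le_one h0 h1 (mem_range.mp hk).le
  nlinarith

lemma one_sub_pow_div_anti {r : ℝ} (h0 : 0 ≤ r) (h1 : r ≤ 1) {a b : ℕ} (ha : 0 < a)
    (hab : a ≤ b) : (1 - r ^ b) / b ≤ (1 - r ^ a) / a := by
  induction b, hab using Nat.le_induction with
  | base => exact le_rfl
  | succ b hb ih =>
    refine le_trans ?_ ih
    have hb0 : (0 : ℝ) < b := by exact_mod_cast ha.trans_le hb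
    have hstep := mul_one_sub_mul_pow_le h0 h1 b
    rw [div_le_div_iff₀ (by positivity) hb0]
    push_cast
    rw [pow_succ]
    nlinarith

/-- The Abel factors do not increase the differences of `1 / a`, which makes the bounds on the
regularised coefficients uniform in `r`. -/
lemma abs_pow_div_sub_pow_div_le {r : ℝ} (h0 : 0 ≤ r) (h1 : r ≤ 1) {a b : ℕ} (ha : 0 < a)
    (hb : 0 < b) : |r ^ a / a - r ^ b / b| ≤ |1 / (a : ℝ) - 1 / b| := by
  wlog hab : a ≤ b generalizing a b
  · rw [abs_sub_comm, abs_sub_comm (1 / (a : ℝ))]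
    exact this hb ha (le_of_not_ge hab)
  have ha' : (0 : ℝ) < a := by exact_mod_cast ha
  have hnonneg : 0 ≤ r ^ a / a - r ^ b / b := by
    rw [sub_nonneg]
    exact div_le_div₀ (by positivity) (pow_le_pow_of_le_one h0 h1 hab) ha' (by exact_mod_cast hab)
  have hanti := one_sub_pow_div_anti h0 h1 ha hab
  rw [sub_div, sub_div] at hanti
  rw [abs_of_nonneg hnonneg]
  exact (by linarith : _ ≤ 1 / (a : ℝ) - 1 / b).trans (le_abs_self _)

lemma abs_abelCoeff_sub_le {r : ℝ} (h0 : 0 ≤ r) (h1 : r ≤ 1) {a b : ℤ} (ha : a ≠ 0)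
    (hb : b ≠ 0) : |abelCoeff r a - abelCoeff r b| ≤ |(a : ℝ) - b| / (|(a : ℝ)| * |(b : ℝ)|) := by
  have ha' : 0 < |(a : ℝ)| := by simpa using ha
  have hb' : 0 < |(b : ℝ)| := by simpa using hb
  have hdiff : abelCoeff r a - abelCoeff r b =
      -(r ^ a.natAbs / a.natAbs - r ^ b.natAbs / b.natAbs) := by
    rw [abelCoeff, abelCoeff, if_neg ha, if_neg hb]
    ring
  rw [hdiff, abs_neg]
  refine (abs_pow_div_sub_pow_div_le h0 h1 (by omega) (by omega)).trans ?_
  rw [Nat.cast_natAbs, Nat.cast_natAbs, Int.cast_abs, Int.cast_abs,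
    div_sub_div _ _ ha'.ne' hb'.ne', abs_div, abs_mul, abs_abs, abs_abs, one_mul, mul_one,
    abs_sub_comm]
  exact div_le_div_of_nonneg_right (abs_abs_sub_abs_le _ _) (by positivity)

lemma continuous_abelCoeff (n : ℤ) : Continuous (abelCoeff · n) := by
  unfold abelCoeff
  fun_prop

lemma abelCoeff_mul (N : ℕ) [NeZero N] (r : ℝ) {p : ℤ} (hp : p ≠ 0) :
    abelCoeff r (p * N) = (N : ℝ)⁻¹ * abelCoeff (r ^ N) p := by
  rw [abelCoeff, abelCoeff, if_neg (mul_ne_zero hp (NeZero.ne _)), if_neg hp, Int.natAbs_mul,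
    Int.natAbs_natCast, mul_comm p.natAbs, pow_mul]
  push_cast
  ring

/-- The `p`-th aliasing contribution to the `n`-th discrete Fourier coefficient of the Abel
regularised logarithm, less its value at `n = 0`. -/
def aliasTerm (N : ℕ) (ε r : ℝ) (n p : ℤ) : ℂ :=
  if p = 0 then 0 else ((abelCoeff r (n + p * N) - abelCoeff r (p * N) : ℝ) : ℂ) * mode p ε

lemma aliasTerm_zero_left (N : ℕ) (ε r : ℝ) (p : ℤ) : aliasTerm N ε r 0 p = 0 := by
  simp [aliasTerm]

lemma bracket_mul_div_le_abs_add_mul {N : ℕ} {n p : ℤ} (hn : 4 * |(n : ℝ)| ≤ 3 * N) (hp : p ≠ 0) :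
    bracket p * N / 8 ≤ |((n + p * N : ℤ) : ℝ)| := by
  have hp1 := one_le_abs_intCast hp
  have htri : |(p : ℝ)| * N ≤ |(n : ℝ) + p * N| + |(n : ℝ)| := by
    simpa [abs_mul] using abs_sub ((n : ℝ) + p * N) n
  push_cast
  unfold bracket
  nlinarith [Nat.cast_nonneg (α := ℝ) N]

lemma norm_aliasTerm_sub_le (N : ℕ) [NeZero N] (ε : ℝ) {r : ℝ} (h0 : 0 ≤ r) (h1 : r ≤ 1)
    {n n' : ℤ} (hn : 4 * |(n : ℝ)| ≤ 3 * N) (hn' : 4 * |(n' : ℝ)| ≤ 3 * N) (p : ℤ) :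
    ‖aliasTerm N ε r n p - aliasTerm N ε r n' p‖ ≤
      64 * |(n : ℝ) - n'| / N ^ 2 * (bracket p ^ 2)⁻¹ := by
  have hN : (0 : ℝ) < N := by exact_mod_cast NeZero.pos N
  have hb := bracket_pos p
  by_cases hp : p = 0
  · simp only [aliasTerm, hp, if_pos, sub_self, norm_zero]
    positivity
  have hlow := bracket_mul_div_le_abs_add_mul hn hp
  have hlow' := bracket_mul_div_le_abs_add_mul hn' hp
  have hpos : 0 < bracket p * N / 8 := by positivity
  have hdiff : ((n + p * N : ℤ) : ℝ) - ((n' + p * N : ℤ) : ℝ) = n - n' := by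
    push_cast
    ring
  rw [aliasTerm, aliasTerm, if_neg hp, if_neg hp, ← sub_mul, norm_mul, norm_mode, mul_one,
    ← Complex.ofReal_sub, Complex.norm_real, Real.norm_eq_abs, sub_sub_sub_cancel_right]
  calc |abelCoeff r (n + p * N) - abelCoeff r (n' + p * N)|
      ≤ |(n : ℝ) - n'| / (|((n + p * N : ℤ) : ℝ)| * |((n' + p * N : ℤ) : ℝ)|) := by
        rw [← hdiff]
        exact abs_abelCoeff_sub_le h0 h1 (Int.cast_ne_zero.mp (abs_pos.mp (hpos.trans_le hlow)))
          (Int.cast_ne_zero.mp (abs_pos.mp (hpos.trans_le hlow')))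
    _ ≤ |(n : ℝ) - n'| / ((bracket p * N / 8) * (bracket p * N / 8)) := by gcongr
    _ = _ := by field_simp; norm_num

lemma norm_aliasTerm_le (N : ℕ) [NeZero N] (ε : ℝ) {r : ℝ} (h0 : 0 ≤ r) (h1 : r ≤ 1)
    {n : ℤ} (hn : 4 * |(n : ℝ)| ≤ 3 * N) (p : ℤ) :
    ‖aliasTerm N ε r n p‖ ≤ 64 * |(n : ℝ)| / N ^ 2 * (bracket p ^ 2)⁻¹ := by
  have h := norm_aliasTerm_sub_le N ε h0 h1 hn (n' := 0) (by simp) p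
  rwa [aliasTerm_zero_left, sub_zero, Int.cast_zero, sub_zero] at h

lemma hasSum_aliasTerm_of_lt_one (N : ℕ) [NeZero N] (ε : ℝ) {r : ℝ} (h0 : 0 ≤ r) (h1 : r < 1)
    (n : ℤ) : HasSum (aliasTerm N ε r n)
      (discreteCoeff N ε (fun x => (abelLogSinSq r x : ℂ)) n - abelCoeff r n -
        (N : ℂ)⁻¹ * (abelLogSinSq (r ^ N) ε + Real.log 4)) := by
  have halias := hasSum_discreteCoeff N ε (hasSum_abelCoeff h0 h1) n
  have hzero := (hasSum_abelCoeff (pow_nonneg h0 N) (pow_lt_one₀ h0 h1 (NeZero.ne N)) ε).mul_left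
    (N : ℂ)⁻¹
  have hcentral := hasSum_ite_eq (0 : ℤ) (abelCoeff r n + (N : ℂ)⁻¹ * Real.log 4 : ℂ)
  have hterm (p : ℤ) : aliasTerm N ε r n p = abelCoeff r (n + p * N) * mode p ε -
      (N : ℂ)⁻¹ * (abelCoeff (r ^ N) p * mode p ε) -
        if p = 0 then abelCoeff r n + (N : ℂ)⁻¹ * Real.log 4 else 0 := by
    by_cases hp : p = 0
    · simp [hp, aliasTerm, abelCoeff, mode_zero]
    · simp only [aliasTerm, if_neg hp, abelCoeff_mul N r hp]
      push_cast
      ring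
  have hvalue : discreteCoeff N ε (fun x => (abelLogSinSq r x : ℂ)) n - abelCoeff r n -
      (N : ℂ)⁻¹ * (abelLogSinSq (r ^ N) ε + Real.log 4) =
      discreteCoeff N ε (fun x => (abelLogSinSq r x : ℂ)) n -
        (N : ℂ)⁻¹ * abelLogSinSq (r ^ N) ε - (abelCoeff r n + (N : ℂ)⁻¹ * Real.log 4) := by
    ring
  rw [hvalue, funext hterm]
  exact (halias.sub hzero).sub hcentral

lemma sin_node_ne_zero (N : ℕ) [NeZero N] {ε : ℝ} (hε : Real.sin (Real.pi * ε) ≠ 0) (k : ZMod N) :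
    Real.sin (Real.pi * node N ε k) ≠ 0 := by
  refine fun h => hε ?_
  obtain ⟨j, hj⟩ := Real.sin_eq_zero_iff.mp h
  have hnode : node N ε k = j := mul_left_cancel₀ Real.pi_ne_zero (by rw [← hj, mul_comm])
  have hε_eq : ε = (j * N - k.val : ℤ) := by
    rw [node, div_eq_iff (NeZero.ne _)] at hnode
    push_cast
    linarith
  rw [hε_eq, mul_comm]
  exact Real.sin_int_mul_pi _

lemma tendsto_discreteCoeff_abelLogSinSq (N : ℕ) [NeZero N] {ε : ℝ}
    (hε : Real.sin (Real.pi * ε) ≠ 0) (n : ℤ) :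
    Tendsto (fun r => discreteCoeff N ε (fun x => (abelLogSinSq r x : ℂ)) n) (𝓝[<] 1)
      (𝓝 (discreteCoeff N ε (fun x => (logSinSq x : ℂ)) n)) := by
  simp_rw [discreteCoeff_eq_sum]
  exact (tendsto_finsetSum _ fun k _ => ((Complex.continuous_ofReal.tendsto _).comp
    (tendsto_abelLogSinSq (sin_node_ne_zero N hε k))).mul_const _).const_mul _

lemma tendsto_abelLogSinSq_pow (N : ℕ) [NeZero N] {x : ℝ} (hx : Real.sin (Real.pi * x) ≠ 0) :
    Tendsto (fun r => abelLogSinSq (r ^ N) x) (𝓝[<] 1) (𝓝 (logSinSq x)) := by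
  refine (tendsto_abelLogSinSq hx).comp (tendsto_nhdsWithin_iff.mpr ⟨?_, ?_⟩)
  · simpa using ((continuous_pow N).tendsto (1 : ℝ)).mono_left nhdsWithin_le_nhds
  · filter_upwards [Ioo_mem_nhdsLT one_pos] with r hr
    exact pow_lt_one₀ hr.1.le hr.2 (NeZero.ne N)

lemma tendsto_tsum_aliasTerm (N : ℕ) [NeZero N] (ε : ℝ) {n : ℤ} (hn : 4 * |(n : ℝ)| ≤ 3 * N) :
    Tendsto (fun r => ∑' p, aliasTerm N ε r n p) (𝓝[<] 1) (𝓝 (∑' p, aliasTerm N ε 1 n p)) := by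
  refine tendsto_tsum_of_dominated_convergence
    (summable_inv_bracket_sq.mul_left (64 * |(n : ℝ)| / N ^ 2)) (fun p => ?_) ?_
  · have hcont : Continuous fun r => aliasTerm N ε r n p := by
      have := continuous_abelCoeff
      unfold aliasTerm
      split_ifs <;> fun_prop
    exact (hcont.tendsto 1).mono_left nhdsWithin_le_nhds
  · filter_upwards [Ioo_mem_nhdsLT one_pos] with r hr p
    exact norm_aliasTerm_le N ε hr.1.le hr.2.le hn p

/-- When `4 sin² (πε) = 1`, the value `log (4 sin² (πε)) / N` common to all aliasing errors
vanishes. -/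
lemma hasSum_aliasTerm (N : ℕ) [NeZero N] {ε : ℝ} (hε : 4 * Real.sin (Real.pi * ε) ^ 2 = 1)
    {n : ℤ} (hn : 4 * |(n : ℝ)| ≤ 3 * N) :
    HasSum (aliasTerm N ε 1 n) (discreteCoeff N ε (fun x => (logSinSq x : ℂ)) n - logCoeff n) := by
  have hsin : Real.sin (Real.pi * ε) ≠ 0 := by
    rintro h
    norm_num [h] at hε
  have hlog : logSinSq ε = -Real.log 4 := by
    rw [logSinSq, ← Real.log_inv]
    congr 1
    linarith
  have hcoeff : Tendsto (fun r => (abelCoeff r n : ℂ)) (𝓝[<] 1) (𝓝 (abelCoeff 1 n)) :=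
    ((Complex.continuous_ofReal.comp (continuous_abelCoeff n)).tendsto 1).mono_left
      nhdsWithin_le_nhds
  have hconst := ((Complex.continuous_ofReal.tendsto _).comp
    (tendsto_abelLogSinSq_pow N hsin)).add_const (Real.log 4 : ℂ)
  have hlim := ((tendsto_discreteCoeff_abelLogSinSq N hsin n).sub hcoeff).sub
    (hconst.const_mul (N : ℂ)⁻¹)
  have heq : ∀ᶠ r in 𝓝[<] (1 : ℝ), ∑' p, aliasTerm N ε r n p =
      discreteCoeff N ε (fun x => (abelLogSinSq r x : ℂ)) n - abelCoeff r n -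
        (N : ℂ)⁻¹ * (abelLogSinSq (r ^ N) ε + Real.log 4) := by
    filter_upwards [Ioo_mem_nhdsLT one_pos] with r hr
    exact (hasSum_aliasTerm_of_lt_one N ε hr.1.le hr.2 n).tsum_eq
  have hvalue := tendsto_nhds_unique (tendsto_tsum_aliasTerm N ε hn)
    (hlim.congr' (heq.mono fun r hr => hr.symm))
  rw [hlog, Complex.ofReal_neg, neg_add_cancel, mul_zero, sub_zero] at hvalue
  rw [logCoeff, ← hvalue]
  exact (Summable.of_norm_bounded (summable_inv_bracket_sq.mul_left _)
    (norm_aliasTerm_le N ε zero_le_one le_rfl hn)).hasSum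

/-- Constant in the bound for the quadrature error of the Fourier coefficients of `logSinSq`. -/
def aliasConst : ℝ := 64 * ∑' p : ℤ, (bracket p ^ 2)⁻¹

lemma aliasConst_nonneg : 0 ≤ aliasConst := by
  exact mul_nonneg (by norm_num) (tsum_nonneg fun p => by positivity)

/-- The Fourier coefficients of `g` behave like those of a logarithmic singularity, and the error of
the quadrature rule with nodes `(k + ε) / N` for them vanishes at frequency `0` and is Lipschitz
with constant `O(N⁻²)`. -/
structure HasAliasingBound (C : ℝ) (N : ℕ) (ε : ℝ) (g : ℝ → ℂ) : Prop where
  bracket_mul_norm_fc_le (n : ℤ) : bracket n * ‖fc g n‖ ≤ C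
  bracket_mul_norm_fc_sub_le (m n : ℤ) :
    bracket m * bracket n * ‖fc g m - fc g n‖ ≤ C * |(m : ℝ) - n|
  discreteCoeff_zero : discreteCoeff N ε g 0 = fc g 0
  norm_sub_sub_le {m n : ℤ} (hm : 4 * |(m : ℝ)| ≤ 3 * N) (hn : 4 * |(n : ℝ)| ≤ 3 * N) :
    ‖(discreteCoeff N ε g m - fc g m) - (discreteCoeff N ε g n - fc g n)‖ ≤
      C * |(m : ℝ) - n| / N ^ 2

namespace HasAliasingBound

variable {C : ℝ} {N : ℕ} {ε : ℝ} {g : ℝ → ℂ}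

lemma nonneg (h : HasAliasingBound C N ε g) : 0 ≤ C :=
  (mul_nonneg (bracket_pos 0).le (norm_nonneg _)).trans (h.bracket_mul_norm_fc_le 0)

lemma norm_fc_le (h : HasAliasingBound C N ε g) (n : ℤ) : ‖fc g n‖ ≤ C :=
  (le_mul_of_one_le_left (norm_nonneg _) (one_le_bracket n)).trans (h.bracket_mul_norm_fc_le n)

lemma norm_sub_le (h : HasAliasingBound C N ε g) {n : ℤ} (hn : 4 * |(n : ℝ)| ≤ 3 * N) :
    ‖discreteCoeff N ε g n - fc g n‖ ≤ C * |(n : ℝ)| / N ^ 2 := by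
  simpa [h.discreteCoeff_zero] using h.norm_sub_sub_le hn (n := 0) (by simp)

lemma norm_discreteCoeff_le [NeZero N] (h : HasAliasingBound C N ε g) (n : ℤ) :
    ‖discreteCoeff N ε g n‖ ≤ 2 * C := by
  have hN : (1 : ℝ) ≤ N := by exact_mod_cast NeZero.pos N
  set m := (n : ZMod N).valMinAbs with hm
  have hcentral : 2 * |(m : ℝ)| ≤ N := valMinAbs_mem_centralFreqs N n
  obtain ⟨p, hp⟩ : (N : ℤ) ∣ n - m := by
    rw [← ZMod.intCast_zmod_eq_zero_iff_dvd, Int.cast_sub, hm, ZMod.coe_valMinAbs, sub_self]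
  have hn : n = m + p * N := by linarith
  have herror : C * |(m : ℝ)| / N ^ 2 ≤ C := by
    rw [div_le_iff₀ (by positivity)]
    exact mul_le_mul_of_nonneg_left (by nlinarith) h.nonneg
  rw [hn, norm_discreteCoeff_add_mul]
  calc ‖discreteCoeff N ε g m‖ ≤ ‖discreteCoeff N ε g m - fc g m‖ + ‖fc g m‖ :=
        norm_le_norm_sub_add _ _
    _ ≤ C * |(m : ℝ)| / N ^ 2 + C := add_le_add (h.norm_sub_le (by linarith)) (h.norm_fc_le m)
    _ ≤ 2 * C := by linarith

lemma norm_sub_fc_le [NeZero N] (h : HasAliasingBound C N ε g) {m : ℤ} (hm : m ∈ centralFreqs N)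
    (q : ℤ) : ‖discreteCoeff N ε g (q + m) - fc g (q + m)‖ ≤
      48 * C / N ^ 2 * bracket m * bracket q ^ 3 := by
  have hN : (1 : ℝ) ≤ N := by exact_mod_cast NeZero.pos N
  have hC := h.nonneg
  have hq := one_le_bracket q
  have hb := one_le_bracket m
  have hm : 2 * |(m : ℝ)| ≤ N := hm
  have habs := abs_intCast_add_le q m
  rw [div_mul_eq_mul_div, div_mul_eq_mul_div, le_div_iff₀ (by positivity)]
  by_cases hsmall : 4 * |(q : ℝ)| ≤ N
  · have hsub := h.norm_sub_le (n := q + m) (by linarith)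
    rw [le_div_iff₀ (by positivity)] at hsub
    calc _ ≤ C * |((q + m : ℤ) : ℝ)| := hsub
      _ ≤ C * (bracket q * bracket m) := by
        gcongr
        exact (abs_le_bracket _).trans (bracket_add_le q m)
      _ ≤ 48 * C * (bracket q ^ 3 * bracket m) := by
        gcongr
        · linarith
        · exact le_self_pow₀ hq (by norm_num)
      _ = _ := by ring
  · have hN' : (N : ℝ) ≤ 4 * bracket q := by
      unfold bracket
      linarith
    calc _ ≤ (2 * C + C) * (4 * bracket q) ^ 2 := by
          gcongr
          exact (_root_.norm_sub_le _ _).trans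
            (add_le_add (h.norm_discreteCoeff_le _) (h.norm_fc_le _))
      _ = 48 * C * (1 * bracket q ^ 2) := by ring
      _ ≤ 48 * C * (bracket m * bracket q ^ 3) := by
          gcongr
          norm_num
      _ = _ := by ring

lemma bracket_sq_mul_norm_sub_le_of_lt [NeZero N] (h : HasAliasingBound C N ε g) {m q : ℤ}
    (hm : m ∈ centralFreqs N) (hq : 2 * |(q : ℝ)| < |(m : ℝ)|) :
    bracket m ^ 2 * ‖discreteCoeff N ε g (q + m) - discreteCoeff N ε g m‖ ≤ 6 * C * |(q : ℝ)| := by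
  have hN : (1 : ℝ) ≤ N := by exact_mod_cast NeZero.pos N
  have hq0 := abs_nonneg (q : ℝ)
  have hb := bracket_pos m
  have hm : 2 * |(m : ℝ)| ≤ N := hm
  have habs := abs_intCast_add_le q m
  have hmN : bracket m ^ 2 ≤ 4 * N ^ 2 := by
    rw [show (4 : ℝ) * N ^ 2 = (2 * N) ^ 2 by ring]
    gcongr
    unfold bracket
    linarith
  have hmq : bracket m ≤ 2 * bracket (q + m) := by
    have htri := abs_intCast_add_le (q + m) (-q)
    rw [add_neg_cancel_comm, Int.cast_neg, abs_neg] at htri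
    unfold bracket
    linarith
  have herror := h.norm_sub_sub_le (m := q + m) (n := m) (by linarith) (by linarith)
  have hfc := h.bracket_mul_norm_fc_sub_le (q + m) m
  rw [show ((q + m : ℤ) : ℝ) - m = q by simp] at herror hfc
  rw [le_div_iff₀ (by positivity)] at herror
  set d := discreteCoeff N ε g
  calc bracket m ^ 2 * ‖d (q + m) - d m‖
      = bracket m ^ 2 * ‖((d (q + m) - fc g (q + m)) - (d m - fc g m)) +
          (fc g (q + m) - fc g m)‖ := by
        congr 2
        ring
    _ ≤ bracket m ^ 2 * ‖(d (q + m) - fc g (q + m)) - (d m - fc g m)‖ +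
          bracket m ^ 2 * ‖fc g (q + m) - fc g m‖ := by
        rw [← mul_add]
        gcongr
        exact norm_add_le _ _
    _ ≤ 4 * N ^ 2 * ‖(d (q + m) - fc g (q + m)) - (d m - fc g m)‖ +
          2 * bracket (q + m) * bracket m * ‖fc g (q + m) - fc g m‖ := by
        rw [sq (bracket m)]
        rw [sq (bracket m)] at hmN
        gcongr
    _ ≤ 6 * C * |(q : ℝ)| := by linarith

lemma bracket_sq_mul_norm_sub_le [NeZero N] (h : HasAliasingBound C N ε g) {m : ℤ}
    (hm : m ∈ centralFreqs N) (q : ℤ) :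
    bracket m ^ 2 * ‖discreteCoeff N ε g (q + m) - discreteCoeff N ε g m‖ ≤
      16 * C * bracket q ^ 3 := by
  have hC := h.nonneg
  have hb := bracket_pos m
  have hq := one_le_bracket q
  rcases lt_or_ge (2 * |(q : ℝ)|) |(m : ℝ)| with hlt | hge
  · calc _ ≤ 6 * C * |(q : ℝ)| := h.bracket_sq_mul_norm_sub_le_of_lt hm hlt
      _ ≤ 16 * C * bracket q ^ 3 := by
        gcongr
        · norm_num
        · exact (abs_le_bracket q).trans (le_self_pow₀ hq (by norm_num))
  · have hmq : bracket m ≤ 2 * bracket q := by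
      unfold bracket
      linarith
    calc _ ≤ (2 * bracket q) ^ 2 * (2 * C + 2 * C) := by
          gcongr
          exact (_root_.norm_sub_le _ _).trans
            (add_le_add (h.norm_discreteCoeff_le _) (h.norm_discreteCoeff_le _))
      _ = 16 * C * bracket q ^ 2 := by ring
      _ ≤ _ := by
          gcongr
          norm_num

end HasAliasingBound

lemma logCoeff_zero : logCoeff 0 = -Real.log 4 := by simp [logCoeff, abelCoeff]

lemma log_four_le_two : Real.log 4 ≤ 2 := by
  rw [show (4 : ℝ) = 2 ^ 2 by norm_num, Real.log_pow]
  have := Real.log_two_lt_d9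
  norm_num
  linarith

lemma bracket_mul_abs_logCoeff_le (n : ℤ) : bracket n * |logCoeff n| ≤ 2 := by
  by_cases hn : n = 0
  · rw [hn, logCoeff_zero, abs_neg, abs_of_pos (Real.log_pos (by norm_num))]
    simpa [bracket] using log_four_le_two
  · have hn' := one_le_abs_intCast hn
    rw [logCoeff_of_ne_zero hn, abs_neg, abs_inv, abs_abs, ← div_eq_mul_inv,
      div_le_iff₀ (by linarith), bracket]
    linarith

lemma bracket_add_bracket_le_mul_abs_sub {m n : ℤ} (hmn : m ≠ n) (h0 : m = 0 ∨ n = 0) :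
    bracket m + bracket n ≤ 3 * |(m : ℝ) - n| := by
  unfold bracket
  rcases h0 with rfl | rfl
  · have hn := one_le_abs_intCast hmn.symm
    simp only [Int.cast_zero, abs_zero, zero_sub, abs_neg]
    linarith
  · have hm := one_le_abs_intCast hmn
    simp only [Int.cast_zero, abs_zero, sub_zero]
    linarith

lemma bracket_mul_abs_logCoeff_sub_le (m n : ℤ) :
    bracket m * bracket n * |logCoeff m - logCoeff n| ≤ 6 * |(m : ℝ) - n| := by
  have hm := bracket_pos m
  have hn := bracket_pos n
  by_cases hmn : m = n
  · simp [hmn]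
  by_cases h0 : m = 0 ∨ n = 0
  · calc _ ≤ bracket m * bracket n * (|logCoeff m| + |logCoeff n|) := by
          gcongr
          exact abs_sub _ _
      _ = bracket n * (bracket m * |logCoeff m|) + bracket m * (bracket n * |logCoeff n|) := by ring
      _ ≤ bracket n * 2 + bracket m * 2 := by
          gcongr <;> exact bracket_mul_abs_logCoeff_le _
      _ ≤ 6 * |(m : ℝ) - n| := by linarith [bracket_add_bracket_le_mul_abs_sub hmn h0]
  · push Not at h0
    have hm1 := one_le_abs_intCast h0.1
    have hn1 := one_le_abs_intCast h0.2
    have hsub := abs_abelCoeff_sub_le zero_le_one le_rfl h0.1 h0.2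
    rw [le_div_iff₀ (by positivity)] at hsub
    calc _ ≤ (2 * |(m : ℝ)|) * (2 * |(n : ℝ)|) * |logCoeff m - logCoeff n| := by
          unfold bracket
          gcongr <;> linarith
      _ = 4 * (|logCoeff m - logCoeff n| * (|(m : ℝ)| * |(n : ℝ)|)) := by ring
      _ ≤ 6 * |(m : ℝ) - n| := by
          have := abs_nonneg ((m : ℝ) - n)
          rw [← logCoeff, ← logCoeff] at hsub
          linarith

lemma hasAliasingBound_logSinSq (N : ℕ) [NeZero N] {ε : ℝ}
    (hε : 4 * Real.sin (Real.pi * ε) ^ 2 = 1) :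
    HasAliasingBound (aliasConst + 6) N ε fun x => (logSinSq x : ℂ) where
  bracket_mul_norm_fc_le n := by
    rw [fc_logSinSq, Complex.norm_real, Real.norm_eq_abs]
    linarith [bracket_mul_abs_logCoeff_le n, aliasConst_nonneg]
  bracket_mul_norm_fc_sub_le m n := by
    rw [fc_logSinSq, fc_logSinSq, ← Complex.ofReal_sub, Complex.norm_real]
    refine (bracket_mul_abs_logCoeff_sub_le m n).trans ?_
    gcongr
    linarith [aliasConst_nonneg]
  discreteCoeff_zero := by
    have h := hasSum_aliasTerm N hε (n := 0) (by simp)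
    rw [funext (aliasTerm_zero_left N ε 1)] at h
    rw [fc_logSinSq]
    exact sub_eq_zero.mp (h.unique hasSum_zero)
  norm_sub_sub_le {m n} hm hn := by
    have hsum := (hasSum_aliasTerm N hε hm).sub (hasSum_aliasTerm N hε hn)
    have hbound := (summable_inv_bracket_sq.mul_left (64 * |(m : ℝ) - n| / N ^ 2)).hasSum
    rw [fc_logSinSq, fc_logSinSq, ← hsum.tsum_eq]
    calc _ ≤ ∑' p : ℤ, 64 * |(m : ℝ) - n| / N ^ 2 * (bracket p ^ 2)⁻¹ :=
          tsum_of_norm_bounded hbound (norm_aliasTerm_sub_le N ε zero_le_one le_rfl hm hn)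
      _ = aliasConst * |(m : ℝ) - n| / N ^ 2 := by
          rw [tsum_mul_left, aliasConst]
          ring
      _ ≤ _ := by
          gcongr
          linarith

lemma fc_one (n : ℤ) : fc 1 n = if n = 0 then 1 else 0 := by
  simp only [fc_eq_integral_mode, Pi.one_apply, one_mul, integral_mode, neg_eq_zero]

lemma discreteCoeff_one {N : ℕ} [NeZero N] (ε : ℝ) {n : ℤ} (hn : |(n : ℝ)| < N) :
    discreteCoeff N ε 1 n = if n = 0 then 1 else 0 := by
  have hdvd : (N : ℤ) ∣ -n ↔ n = 0 := by
    rw [dvd_neg]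
    exact ⟨fun h => Int.eq_zero_of_abs_lt_dvd h (by exact_mod_cast hn), fun h => h ▸ dvd_zero _⟩
  simp only [discreteCoeff_eq_sum, Pi.one_apply, one_mul, inv_mul_sum_mode_node, hdvd]
  split_ifs with h <;> simp [h]

lemma hasAliasingBound_one (N : ℕ) [NeZero N] (ε : ℝ) {C : ℝ} (hC : 2 ≤ C) :
    HasAliasingBound C N ε 1 where
  bracket_mul_norm_fc_le n := by
    rw [fc_one]
    split_ifs with hn
    · simp only [hn, bracket, Int.cast_zero, abs_zero, norm_one]
      linarith
    · simp only [norm_zero, mul_zero]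
      linarith
  bracket_mul_norm_fc_sub_le m n := by
    have hdist := mul_le_mul_of_nonneg_right hC (abs_nonneg ((m : ℝ) - n))
    refine le_trans ?_ hdist
    simp only [fc_one]
    split_ifs with hm hn hn
    · simp [hm, hn]
    · have := one_le_abs_intCast hn
      simp only [hm, bracket, Int.cast_zero, abs_zero, zero_sub, abs_neg, sub_zero, norm_one]
      linarith
    · have := one_le_abs_intCast hm
      simp only [hn, bracket, Int.cast_zero, abs_zero, zero_sub, norm_neg, sub_zero, norm_one]
      linarith
    · simp
  discreteCoeff_zero := by
    rw [fc_one, discreteCoeff_one ε (by simpa using NeZero.pos N)]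
  norm_sub_sub_le {m n} hm hn := by
    have hN : (0 : ℝ) < N := by exact_mod_cast NeZero.pos N
    rw [fc_one, fc_one, discreteCoeff_one ε (by linarith), discreteCoeff_one ε (by linarith),
      sub_self, sub_self, sub_self, norm_zero]
    positivity

lemma abs_re_mode_le (p : ℤ) (x : ℝ) : |(mode p x).re| ≤ 1 := by
  simpa using Complex.abs_re_le_norm (mode p x)

lemma logCoeff_eq_neg_inv {n : ℤ} {x : ℝ} (hx : 0 < x) (hn : |(n : ℝ)| = x) :
    logCoeff n = -x⁻¹ := by
  rw [logCoeff_of_ne_zero (by rintro rfl; simp [← hn] at hx), hn]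

/-- The terms of first order in `y` cancel. -/
lemma abs_inv_add_inv_sub_le {x y : ℝ} (hx : 0 < x) (hy : |y| ≤ x / 2) :
    |-(x + y)⁻¹ + x⁻¹ + (-(x - y)⁻¹ + x⁻¹)| ≤ 8 / 3 * y ^ 2 / x ^ 3 := by
  obtain ⟨hlow, hupp⟩ := abs_le.mp hy
  have hplus : 0 < x + y := by linarith
  have hminus : 0 < x - y := by linarith
  have hprod : 3 / 4 * x ^ 2 ≤ (x + y) * (x - y) := by nlinarith
  have hidentity : -(x + y)⁻¹ + x⁻¹ + (-(x - y)⁻¹ + x⁻¹) =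
      -(2 * y ^ 2 / (x * ((x + y) * (x - y)))) := by
    field_simp
    ring
  rw [hidentity, abs_neg, abs_of_nonneg (by positivity)]
  calc 2 * y ^ 2 / (x * ((x + y) * (x - y))) ≤ 2 * y ^ 2 / (x * (3 / 4 * x ^ 2)) := by gcongr
    _ = 8 / 3 * y ^ 2 / x ^ 3 := by
      field_simp
      ring

lemma abs_re_aliasTerm_add_le (N : ℕ) [NeZero N] (ε : ℝ) {n : ℤ} (hn : n ∈ centralFreqs N)
    (p : ℕ) : |(aliasTerm N ε 1 n p + aliasTerm N ε 1 n (-p)).re| ≤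
      8 / 3 * (n : ℝ) ^ 2 / N ^ 3 * (1 / p ^ 2) := by
  have hN : (0 : ℝ) < N := by exact_mod_cast NeZero.pos N
  have hn' : 2 * |(n : ℝ)| ≤ N := hn
  rcases Nat.eq_zero_or_pos p with rfl | hp
  · simp [aliasTerm]
  have hp1 : (1 : ℝ) ≤ p := by exact_mod_cast hp
  have hx : 0 < (p : ℝ) * N := by positivity
  have hy : |(n : ℝ)| ≤ p * N / 2 := by nlinarith
  obtain ⟨hlow, hupp⟩ := abs_le.mp hy
  have hplus : logCoeff (n + p * N) = -(p * N + (n : ℝ))⁻¹ :=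
    logCoeff_eq_neg_inv (by linarith) (by
      push_cast
      rw [add_comm, abs_of_pos (by linarith)])
  have hminus : logCoeff (n + -p * N) = -(p * N - (n : ℝ))⁻¹ :=
    logCoeff_eq_neg_inv (by linarith) (by
      push_cast
      rw [← abs_neg, abs_of_pos (by linarith)]
      ring)
  have hzero : logCoeff (p * N) = -(p * N : ℝ)⁻¹ := logCoeff_eq_neg_inv hx (by simp)
  have hzero' : logCoeff (-p * N) = -(p * N : ℝ)⁻¹ := logCoeff_eq_neg_inv hx (by simp)
  have hp0 : (p : ℤ) ≠ 0 := by exact_mod_cast hp.ne'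
  have hre : (mode (-p) ε).re = (mode p ε).re := by rw [← conj_mode, Complex.conj_re]
  rw [aliasTerm, aliasTerm, if_neg hp0, if_neg (neg_ne_zero.mpr hp0)]
  rw [← logCoeff, ← logCoeff, ← logCoeff, ← logCoeff, hplus, hminus,
    hzero, hzero', Complex.add_re, Complex.re_ofReal_mul, Complex.re_ofReal_mul,
    hre, ← add_mul, abs_mul, sub_neg_eq_add, sub_neg_eq_add]
  calc _ ≤ 8 / 3 * (n : ℝ) ^ 2 / (p * N) ^ 3 * 1 :=
        mul_le_mul (abs_inv_add_inv_sub_le hx hy) (abs_re_mode_le _ _) (abs_nonneg _)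
          (by positivity)
    _ ≤ 8 / 3 * (n : ℝ) ^ 2 / (p ^ 2 * N ^ 3) * 1 := by
        rw [mul_pow]
        gcongr
        · norm_num
    _ = _ := by field_simp

lemma one_third_le_abs_mul_norm_discreteCoeff (N : ℕ) [NeZero N] {ε : ℝ}
    (hε : 4 * Real.sin (Real.pi * ε) ^ 2 = 1) {n : ℤ} (hn : n ∈ centralFreqs N) (hn0 : n ≠ 0) :
    1 / 3 ≤ |(n : ℝ)| * ‖discreteCoeff N ε (fun x => (logSinSq x : ℂ)) n‖ := by
  have hN : (0 : ℝ) < N := by exact_mod_cast NeZero.pos N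
  have hn' : 2 * |(n : ℝ)| ≤ N := hn
  have ha : 0 < |(n : ℝ)| := abs_pos.mpr (Int.cast_ne_zero.mpr hn0)
  have hpairs := Complex.hasSum_re (hasSum_aliasTerm N hε (n := n) (by linarith)).nat_add_neg
  have herror : |(discreteCoeff N ε (fun x => (logSinSq x : ℂ)) n - logCoeff n).re| ≤
      8 / 3 * (n : ℝ) ^ 2 / N ^ 3 * (Real.pi ^ 2 / 6) := by
    have h := tsum_of_norm_bounded (hasSum_zeta_two.mul_left (8 / 3 * (n : ℝ) ^ 2 / N ^ 3))
      fun p => (Real.norm_eq_abs _).trans_le (abs_re_aliasTerm_add_le N ε hn p)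
    rwa [hpairs.tsum_eq, aliasTerm, if_pos rfl, add_zero] at h
  have hsmall : |(n : ℝ)| * (8 / 3 * (n : ℝ) ^ 2 / N ^ 3 * (Real.pi ^ 2 / 6)) ≤ 2 / 3 := by
    have hratio : |(n : ℝ)| / N ≤ 1 / 2 := by
      rw [div_le_iff₀ hN]
      linarith
    have hpi : Real.pi ^ 2 ≤ 12 := by nlinarith [Real.pi_lt_d2, Real.pi_pos]
    calc _ = 8 / 3 * (|(n : ℝ)| / N) ^ 3 * (Real.pi ^ 2 / 6) := by
          rw [← sq_abs]
          field_simp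
      _ ≤ 8 / 3 * (1 / 2) ^ 3 * (12 / 6) := by gcongr
      _ = 2 / 3 := by norm_num
  have hmain : |(n : ℝ)| * |logCoeff n| = 1 := by
    rw [logCoeff_of_ne_zero hn0, abs_neg, abs_inv, abs_abs, mul_inv_cancel₀ ha.ne']
  rw [Complex.sub_re, Complex.ofReal_re] at herror
  have hre := (abs_sub_abs_le_abs_sub (logCoeff n) _).trans ((abs_sub_comm _ _).trans_le herror)
  have hnorm := Complex.abs_re_le_norm (discreteCoeff N ε (fun x => (logSinSq x : ℂ)) n)
  nlinarith

section ConvSymbol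

/-- Weighted `ℓ¹` norms of the rows; the weight exponent `3` absorbs the growth in the shift `q` of
the aliasing errors. -/
def rowSum (b : ℤ → ℤ → ℂ) (n : ℤ) : ℝ := ∑' q, bracket q ^ 3 * ‖b n q‖

/-- The integral operator with kernel `f(s - t) ∑ b n q e^{2πi(ns + q(t-s))}` sends the mode `m` to
`∑ₙ convSymbol b (fc f) n m e^{2πi(n+m)s}`. -/
def convSymbol (b : ℤ → ℤ → ℂ) (c : ℤ → ℂ) (n m : ℤ) : ℂ := ∑' q, b n q * c (q + m)

lemma rowSum_nonneg (b : ℤ → ℤ → ℂ) (n : ℤ) : 0 ≤ rowSum b n :=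
  tsum_nonneg fun q => mul_nonneg (pow_nonneg (bracket_pos q).le 3) (norm_nonneg _)

variable {b : ℤ → ℤ → ℂ}

lemma RapidDecay₂.summable_row (hb : RapidDecay₂ b) (n : ℤ) :
    Summable fun q => bracket q ^ 3 * ‖b n q‖ := by
  have hrow : RapidDecay (b n) := fun k => by simpa using (hb 0 k).imp fun C hC q => hC n q
  exact hrow.summable_bracket_pow_mul 3

lemma RapidDecay₂.rapidDecay_rowSum (hb : RapidDecay₂ b) : RapidDecay (rowSum b) := by
  intro j
  obtain ⟨C, hC⟩ := hb j 5
  refine ⟨∑' q, C * (bracket q ^ 2)⁻¹, fun n => ?_⟩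
  rw [Real.norm_of_nonneg (rowSum_nonneg b n), rowSum, ← tsum_mul_left]
  refine ((hb.summable_row n).mul_left _).tsum_le_tsum (fun q => ?_)
    (summable_inv_bracket_sq.mul_left C)
  rw [← div_eq_mul_inv, le_div_iff₀ (pow_pos (bracket_pos q) 2)]
  exact (hC n q).trans_eq' (by ring)

lemma RapidDecay₂.summable_mul (hb : RapidDecay₂ b) (n : ℤ) {d : ℤ → ℂ} {X : ℝ}
    (hd : ∀ q, ‖d q‖ ≤ X * bracket q ^ 3) : Summable fun q => b n q * d q := by
  refine Summable.of_norm_bounded ((hb.summable_row n).mul_left X) fun q => ?_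
  rw [norm_mul]
  exact (mul_le_mul_of_nonneg_left (hd q) (norm_nonneg _)).trans_eq (by ring)

lemma RapidDecay₂.norm_tsum_mul_le (hb : RapidDecay₂ b) (n : ℤ) {d : ℤ → ℂ} {X : ℝ}
    (hd : ∀ q, ‖d q‖ ≤ X * bracket q ^ 3) : ‖∑' q, b n q * d q‖ ≤ X * rowSum b n := by
  rw [rowSum, ← tsum_mul_left]
  refine tsum_of_norm_bounded ((hb.summable_row n).mul_left X).hasSum fun q => ?_
  rw [norm_mul]
  exact (mul_le_mul_of_nonneg_left (hd q) (norm_nonneg _)).trans_eq (by ring)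

lemma le_mul_bracket_pow {x X : ℝ} (hX : 0 ≤ X) (hx : x ≤ X) (q : ℤ) (j : ℕ) :
    x ≤ X * bracket q ^ j :=
  hx.trans (le_mul_of_one_le_right hX (one_le_pow₀ (one_le_bracket q)))

lemma RapidDecay₂.bracket_mul_norm_convSymbol_le (hb : RapidDecay₂ b) {c : ℤ → ℂ} {C : ℝ}
    (hc : ∀ n, bracket n * ‖c n‖ ≤ C) (n m : ℤ) :
    bracket m * ‖convSymbol b c n m‖ ≤ C * rowSum b n := by
  have hm := bracket_pos m
  rw [mul_comm, ← le_div_iff₀ hm, mul_div_right_comm]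
  refine hb.norm_tsum_mul_le n fun q => ?_
  have hq := one_le_bracket q
  have hmul : bracket m ≤ bracket (q + m) * bracket q := by
    simpa only [add_comm] using bracket_le_bracket_add_mul m q
  rw [div_mul_eq_mul_div, le_div_iff₀ hm]
  calc ‖c (q + m)‖ * bracket m ≤ ‖c (q + m)‖ * (bracket (q + m) * bracket q) := by gcongr
    _ = bracket (q + m) * ‖c (q + m)‖ * bracket q := by ring
    _ ≤ C * bracket q ^ 3 := mul_le_mul (hc _) (le_self_pow₀ hq (by norm_num)) (by linarith)
        ((mul_nonneg (bracket_pos 0).le (norm_nonneg _)).trans (hc 0))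

variable {C : ℝ} {N : ℕ} [NeZero N] {ε : ℝ} {g : ℝ → ℂ}

lemma RapidDecay₂.norm_convSymbol_discreteCoeff_le (hb : RapidDecay₂ b)
    (hg : HasAliasingBound C N ε g) (n m : ℤ) :
    ‖convSymbol b (discreteCoeff N ε g) n m‖ ≤ 2 * C * rowSum b n :=
  hb.norm_tsum_mul_le n fun q =>
    le_mul_bracket_pow (by linarith [hg.nonneg]) (hg.norm_discreteCoeff_le _) q 3

lemma RapidDecay₂.summable_mul_discreteCoeff (hb : RapidDecay₂ b) (hg : HasAliasingBound C N ε g)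
    (n m : ℤ) : Summable fun q => b n q * discreteCoeff N ε g (q + m) :=
  hb.summable_mul n fun q =>
    le_mul_bracket_pow (by linarith [hg.nonneg]) (hg.norm_discreteCoeff_le _) q 3

lemma RapidDecay₂.norm_convSymbol_sub_le (hb : RapidDecay₂ b) (hg : HasAliasingBound C N ε g)
    (n : ℤ) {m : ℤ} (hm : m ∈ centralFreqs N) :
    ‖convSymbol b (discreteCoeff N ε g) n m - convSymbol b (fc g) n m‖ ≤
      48 * C / N ^ 2 * bracket m * rowSum b n := by
  have hfc : Summable fun q => b n q * fc g (q + m) :=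
    hb.summable_mul n fun q => le_mul_bracket_pow hg.nonneg (hg.norm_fc_le _) q 3
  rw [convSymbol, convSymbol, ← (hb.summable_mul_discreteCoeff hg n m).tsum_sub hfc]
  simp_rw [← mul_sub]
  exact hb.norm_tsum_mul_le n fun q => hg.norm_sub_fc_le hm q

lemma RapidDecay₂.bracket_sq_mul_norm_convSymbol_sub_le (hb : RapidDecay₂ b)
    (hg : HasAliasingBound C N ε g) (n : ℤ) {m : ℤ} (hm : m ∈ centralFreqs N) :
    bracket m ^ 2 * ‖convSymbol b (discreteCoeff N ε g) n m -
      (∑' q, b n q) * discreteCoeff N ε g m‖ ≤ 16 * C * rowSum b n := by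
  have hj : 0 < bracket m ^ 2 := pow_pos (bracket_pos m) 2
  have hconst : Summable fun q => b n q * discreteCoeff N ε g m :=
    hb.summable_mul n fun q =>
      le_mul_bracket_pow (by linarith [hg.nonneg]) (hg.norm_discreteCoeff_le _) q 3
  rw [convSymbol, ← tsum_mul_right, ← (hb.summable_mul_discreteCoeff hg n m).tsum_sub hconst,
    mul_comm, ← le_div_iff₀ hj, mul_div_right_comm]
  simp_rw [← mul_sub]
  refine hb.norm_tsum_mul_le n fun q => ?_
  rw [div_mul_eq_mul_div, le_div_iff₀ hj, mul_comm]
  exact hg.bracket_sq_mul_norm_sub_le hm q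

end ConvSymbol

section KernelSymbol

/-- The Fourier coefficients, in the variables `s` and `t - s`, of the smooth factors `B` and `K` of
a logarithmic kernel `B(s,t) log(sin²(π(s-t))) + K(s,t)`. -/
structure LogKernelCoeff where
  logPart : ℤ → ℤ → ℂ
  smoothPart : ℤ → ℤ → ℂ
  rapidDecay₂_logPart : RapidDecay₂ logPart
  rapidDecay₂_smoothPart : RapidDecay₂ smoothPart

/-- The symbol of the operator with a logarithmic kernel, when `F` is the Fourier transform of
functions, or of its quadrature discretization, when `F` is `discreteCoeff N ε`. -/
def kernelSymbol (F : (ℝ → ℂ) → ℤ → ℂ) (κ : LogKernelCoeff) (n m : ℤ) : ℂ :=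
  convSymbol κ.logPart (F fun x => (logSinSq x : ℂ)) n m + convSymbol κ.smoothPart (F 1) n m

namespace LogKernelCoeff

/-- The decay in `n` of the `n`-th rows of the two coefficient arrays. -/
def size (κ : LogKernelCoeff) (n : ℤ) : ℝ := rowSum κ.logPart n + rowSum κ.smoothPart n

variable (κ : LogKernelCoeff)

lemma size_nonneg (n : ℤ) : 0 ≤ κ.size n := add_nonneg (rowSum_nonneg _ n) (rowSum_nonneg _ n)

lemma rapidDecay_size : RapidDecay κ.size := by
  intro j
  obtain ⟨C, hC⟩ := κ.rapidDecay₂_logPart.rapidDecay_rowSum j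
  obtain ⟨D, hD⟩ := κ.rapidDecay₂_smoothPart.rapidDecay_rowSum j
  refine ⟨C + D, fun n => ?_⟩
  calc _ ≤ bracket n ^ j * (‖rowSum κ.logPart n‖ + ‖rowSum κ.smoothPart n‖) := by
        have := bracket_pos n
        gcongr
        exact norm_add_le _ _
    _ ≤ C + D := by rw [mul_add]; exact add_le_add (hC n) (hD n)

lemma bracket_mul_norm_kernelSymbol_fc_le (n m : ℤ) :
    bracket m * ‖kernelSymbol fc κ n m‖ ≤ (aliasConst + 6) * κ.size n := by
  have hC := aliasConst_nonneg
  have hlog := κ.rapidDecay₂_logPart.bracket_mul_norm_convSymbol_le (C := aliasConst + 6)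
    (c := fc fun x => (logSinSq x : ℂ)) (fun n => by
      rw [fc_logSinSq, Complex.norm_real, Real.norm_eq_abs]
      linarith [bracket_mul_abs_logCoeff_le n]) n m
  have hone := κ.rapidDecay₂_smoothPart.bracket_mul_norm_convSymbol_le
    (hasAliasingBound_one 1 0 (C := aliasConst + 6) (by linarith)).bracket_mul_norm_fc_le n m
  rw [size, mul_add]
  refine (mul_le_mul_of_nonneg_left (norm_add_le _ _) (bracket_pos m).le).trans ?_
  rw [mul_add]
  exact add_le_add hlog hone

section Discrete

variable (N : ℕ) [NeZero N] {ε : ℝ} (hε : 4 * Real.sin (Real.pi * ε) ^ 2 = 1)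

include hε

lemma norm_kernelSymbol_discreteCoeff_le (n m : ℤ) :
    ‖kernelSymbol (discreteCoeff N ε) κ n m‖ ≤ 2 * (aliasConst + 6) * κ.size n := by
  rw [size, mul_add]
  exact (norm_add_le _ _).trans (add_le_add
    (κ.rapidDecay₂_logPart.norm_convSymbol_discreteCoeff_le (hasAliasingBound_logSinSq N hε) n m)
    (κ.rapidDecay₂_smoothPart.norm_convSymbol_discreteCoeff_le
      (hasAliasingBound_one N ε (by linarith [aliasConst_nonneg])) n m))

variable {N} {m : ℤ} (hm : m ∈ centralFreqs N)

include hm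

lemma norm_kernelSymbol_sub_le (n : ℤ) :
    ‖kernelSymbol (discreteCoeff N ε) κ n m - kernelSymbol fc κ n m‖ ≤
      48 * (aliasConst + 6) / N ^ 2 * bracket m * κ.size n := by
  rw [kernelSymbol, kernelSymbol, add_sub_add_comm, size, mul_add]
  exact (norm_add_le _ _).trans (add_le_add
    (κ.rapidDecay₂_logPart.norm_convSymbol_sub_le (hasAliasingBound_logSinSq N hε) n hm)
    (κ.rapidDecay₂_smoothPart.norm_convSymbol_sub_le
      (hasAliasingBound_one N ε (by linarith [aliasConst_nonneg])) n hm))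

/-- The principal part only sees the restrictions of the two smooth factors to the diagonal. -/
lemma bracket_sq_mul_norm_kernelSymbol_sub_le (n : ℤ) :
    bracket m ^ 2 * ‖kernelSymbol (discreteCoeff N ε) κ n m -
      ((∑' q, κ.logPart n q) * discreteCoeff N ε (fun x => (logSinSq x : ℂ)) m +
        (∑' q, κ.smoothPart n q) * discreteCoeff N ε 1 m)‖ ≤
      16 * (aliasConst + 6) * κ.size n := by
  rw [kernelSymbol, add_sub_add_comm, size, mul_add]
  refine (mul_le_mul_of_nonneg_left (norm_add_le _ _) (pow_pos (bracket_pos m) 2).le).trans ?_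
  rw [mul_add]
  exact add_le_add
    (κ.rapidDecay₂_logPart.bracket_sq_mul_norm_convSymbol_sub_le
      (hasAliasingBound_logSinSq N hε) n hm)
    (κ.rapidDecay₂_smoothPart.bracket_sq_mul_norm_convSymbol_sub_le
      (hasAliasingBound_one N ε (by linarith [aliasConst_nonneg])) n hm)

end Discrete

end LogKernelCoeff

end KernelSymbol

section DifferenceSymbol

/-- The symbol of `-i d/ds`. -/
def derivSymbol (m : ℤ) : ℝ := 2 * Real.pi * m

/-- The symbol of `-i` times the centred difference quotient with step `1 / N`. -/
def diffSymbol (N : ℕ) (m : ℤ) : ℝ := 2 * N * Real.sin (Real.pi * m / N)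

lemma abs_sin_sub_le_cube (x : ℝ) : |Real.sin x - x| ≤ 2 * |x| ^ 3 := by
  rcases le_or_gt |x| 1 with h | h
  · have h5 : |x| ^ 5 ≤ |x| ^ 3 := pow_le_pow_of_le_one (abs_nonneg x) h (by norm_num)
    have h3 : |x ^ 3 / 6| = |x| ^ 3 / 6 := by rw [abs_div, abs_pow]; norm_num
    calc |Real.sin x - x| = |(Real.sin x - (x - x ^ 3 / 6)) - x ^ 3 / 6| := by congr 1; ring
      _ ≤ |x| ^ 5 / 100 + |x| ^ 3 / 6 := h3 ▸ (abs_sub _ _).trans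
          (add_le_add_left (Real.sin_bound h) _)
      _ ≤ 2 * |x| ^ 3 := by linarith [pow_nonneg (abs_nonneg x) 3]
  · have h3 : |x| ≤ |x| ^ 3 := le_self_pow₀ h.le (by norm_num)
    linarith [abs_sub (Real.sin x) x, Real.abs_sin_le_abs (x := x)]

lemma abs_derivSymbol (m : ℤ) : |derivSymbol m| = 2 * Real.pi * |(m : ℝ)| := by
  rw [derivSymbol, abs_mul, abs_of_pos Real.two_pi_pos]

lemma abs_derivSymbol_le (m : ℤ) : |derivSymbol m| ≤ 7 * bracket m := by
  rw [abs_derivSymbol]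
  have := abs_le_bracket m
  gcongr
  linarith [Real.pi_lt_d2]

variable (N : ℕ) [NeZero N]

omit [NeZero N] in
lemma abs_pi_mul_div (m : ℤ) : |Real.pi * m / N| = Real.pi * |(m : ℝ)| / N := by
  rw [abs_div, abs_mul, abs_of_pos Real.pi_pos, Nat.abs_cast]

omit [NeZero N] in
lemma abs_diffSymbol (m : ℤ) : |diffSymbol N m| = 2 * N * |Real.sin (Real.pi * m / N)| := by
  rw [diffSymbol, abs_mul, abs_of_nonneg (by positivity)]

lemma abs_diffSymbol_le (m : ℤ) : |diffSymbol N m| ≤ 7 * bracket m := by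
  have hN : (0 : ℝ) < N := by exact_mod_cast NeZero.pos N
  refine le_trans ?_ (abs_derivSymbol_le m)
  have hsin := Real.abs_sin_le_abs (x := Real.pi * m / N)
  rw [abs_pi_mul_div] at hsin
  rw [abs_diffSymbol, abs_derivSymbol]
  calc _ ≤ 2 * (N : ℝ) * (Real.pi * |(m : ℝ)| / N) := by gcongr
    _ = _ := by field_simp

lemma abs_diffSymbol_sub_le (m : ℤ) :
    |diffSymbol N m - derivSymbol m| ≤ 128 / N ^ 2 * bracket m ^ 3 := by
  have hN : (0 : ℝ) < N := by exact_mod_cast NeZero.pos N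
  have hcube := abs_sin_sub_le_cube (Real.pi * m / N)
  have hm := abs_le_bracket m
  have hpi : Real.pi ^ 3 ≤ 32 := by
    calc Real.pi ^ 3 ≤ 3.15 ^ 3 := by gcongr; exact Real.pi_lt_d2.le
      _ ≤ 32 := by norm_num
  calc |diffSymbol N m - derivSymbol m|
      = 2 * N * |Real.sin (Real.pi * m / N) - Real.pi * m / N| := by
        rw [← abs_of_pos (by positivity : (0 : ℝ) < 2 * N), ← abs_mul, diffSymbol, derivSymbol]
        congr 1
        field_simp
    _ ≤ 2 * N * (2 * (Real.pi * |(m : ℝ)| / N) ^ 3) := by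
        rw [abs_pi_mul_div] at hcube
        gcongr
    _ = 4 * Real.pi ^ 3 * |(m : ℝ)| ^ 3 / N ^ 2 := by field_simp; ring
    _ ≤ 4 * 32 * bracket m ^ 3 / N ^ 2 := by gcongr
    _ = _ := by ring

variable {N}

lemma four_mul_abs_le_abs_diffSymbol {m : ℤ} (hm : m ∈ centralFreqs N) :
    4 * |(m : ℝ)| ≤ |diffSymbol N m| := by
  have hN : (0 : ℝ) < N := by exact_mod_cast NeZero.pos N
  have hm : 2 * |(m : ℝ)| ≤ N := hm
  have hsin := Real.mul_abs_le_abs_sin (x := Real.pi * m / N) (by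
    rw [abs_pi_mul_div, div_le_div_iff₀ hN two_pos]
    nlinarith [Real.pi_pos])
  rw [abs_pi_mul_div] at hsin
  rw [abs_diffSymbol]
  calc 4 * |(m : ℝ)| = 2 * N * (2 / Real.pi * (Real.pi * |(m : ℝ)| / N)) := by
        field_simp
        ring
    _ ≤ _ := by gcongr

lemma diffSymbol_mul_discreteCoeff_one (ε : ℝ) {m : ℤ} (hm : m ∈ centralFreqs N) :
    (diffSymbol N m : ℂ) * discreteCoeff N ε 1 m = 0 := by
  by_cases h0 : m = 0
  · simp [h0, diffSymbol]
  · have hm : 2 * |(m : ℝ)| ≤ N := hm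
    rw [discreteCoeff_one ε (by linarith [one_le_abs_intCast h0]), if_neg h0, mul_zero]

end DifferenceSymbol

section HypersingularSymbol

variable (N : ℕ) (F : (ℝ → ℂ) → ℤ → ℂ) (D : ℤ → ℝ) {κ₁ κ₂ : LogKernelCoeff}

/-- The symbol of `D V₁ D + V₂` or of its discretization, where `V₁` and `V₂` have the kernel
coefficients `κ₁`, `κ₂` and `D` is `derivSymbol` or `diffSymbol N`. -/
def hypersingularSymbol (κ₁ κ₂ : LogKernelCoeff) (n m : ℤ) : ℂ :=
  D m * D (n + m) * kernelSymbol F κ₁ n m + kernelSymbol F κ₂ n m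

/-- A common bound for the symbols with coefficients `κ₁`, `κ₂`, for their discretization errors
and for their deviation from the principal part; the factor `5000` has room for all of these. -/
def symbolMajorant (κ₁ κ₂ : LogKernelCoeff) (n : ℤ) : ℝ :=
  5000 * (aliasConst + 6) * (bracket n ^ 3 * (κ₁.size n + κ₂.size n))

lemma symbolMajorant_nonneg (n : ℤ) : 0 ≤ symbolMajorant κ₁ κ₂ n := by
  have := aliasConst_nonneg
  have := bracket_pos n
  have := κ₁.size_nonneg n
  have := κ₂.size_nonneg n
  unfold symbolMajorant
  positivity

lemma rapidDecay_symbolMajorant : RapidDecay (symbolMajorant κ₁ κ₂) := by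
  intro j
  obtain ⟨C, hC⟩ := κ₁.rapidDecay_size (j + 3)
  obtain ⟨C', hC'⟩ := κ₂.rapidDecay_size (j + 3)
  refine ⟨5000 * (aliasConst + 6) * (C + C'), fun n => ?_⟩
  have h₁ := hC n
  have h₂ := hC' n
  rw [Real.norm_of_nonneg (LogKernelCoeff.size_nonneg _ n)] at h₁ h₂
  rw [Real.norm_of_nonneg (symbolMajorant_nonneg n)]
  calc _ = 5000 * (aliasConst + 6) *
        (bracket n ^ (j + 3) * κ₁.size n + bracket n ^ (j + 3) * κ₂.size n) := by
        unfold symbolMajorant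
        ring
    _ ≤ _ := by
        have := aliasConst_nonneg
        gcongr

/-- Absorbs the constants and the powers of `bracket n` of the individual estimates. -/
lemma le_symbolMajorant {x y : ℝ} (hx : x ≤ 5000) (hy : y ≤ 5000) (n : ℤ) :
    x * (bracket n ^ 3 * ((aliasConst + 6) * κ₁.size n)) +
      y * ((aliasConst + 6) * κ₂.size n) ≤ symbolMajorant κ₁ κ₂ n := by
  have hC := aliasConst_nonneg
  have h₁ := κ₁.size_nonneg n
  have h₂ := κ₂.size_nonneg n
  have hn : 1 ≤ bracket n ^ 3 := one_le_pow₀ (one_le_bracket n)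
  calc _ ≤ 5000 * (bracket n ^ 3 * ((aliasConst + 6) * κ₁.size n)) +
        5000 * (bracket n ^ 3 * ((aliasConst + 6) * κ₂.size n)) := by
        gcongr ?_ * _ + ?_ * ?_
        exact le_mul_of_one_le_left (by positivity) hn
    _ = _ := by
        unfold symbolMajorant
        ring

lemma norm_hypersingularSymbol_sub_le_add (G : (ℝ → ℂ) → ℤ → ℂ) (E : ℤ → ℝ) (n m : ℤ) :
    ‖hypersingularSymbol F D κ₁ κ₂ n m - hypersingularSymbol G E κ₁ κ₂ n m‖ ≤
      |D m| * |D (n + m)| * ‖kernelSymbol F κ₁ n m - kernelSymbol G κ₁ n m‖ +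
        |D m * D (n + m) - E m * E (n + m)| * ‖kernelSymbol G κ₁ n m‖ +
        ‖kernelSymbol F κ₂ n m - kernelSymbol G κ₂ n m‖ := by
  calc _ = ‖(D m : ℂ) * D (n + m) * (kernelSymbol F κ₁ n m - kernelSymbol G κ₁ n m) +
        ((D m * D (n + m) - E m * E (n + m) : ℝ) : ℂ) * kernelSymbol G κ₁ n m +
        (kernelSymbol F κ₂ n m - kernelSymbol G κ₂ n m)‖ := by
        unfold hypersingularSymbol
        push_cast
        ring_nf
    _ ≤ _ := norm_add₃_le.trans_eq (by simp only [norm_mul, Complex.norm_real, Real.norm_eq_abs])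

lemma norm_hypersingularSymbol_fc_le (n m : ℤ) :
    ‖hypersingularSymbol fc derivSymbol κ₁ κ₂ n m‖ ≤ symbolMajorant κ₁ κ₂ n * bracket m := by
  have h₁ := κ₁.bracket_mul_norm_kernelSymbol_fc_le n m
  have hm := one_le_bracket m
  have hn := one_le_bracket n
  have h₂ : ‖kernelSymbol fc κ₂ n m‖ ≤ (aliasConst + 6) * κ₂.size n * bracket m := by
    calc ‖kernelSymbol fc κ₂ n m‖ = 1 * ‖kernelSymbol fc κ₂ n m‖ * 1 := by ring
      _ ≤ bracket m * ‖kernelSymbol fc κ₂ n m‖ * bracket m := by gcongr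
      _ ≤ _ := mul_le_mul_of_nonneg_right (κ₂.bracket_mul_norm_kernelSymbol_fc_le n m)
        (bracket_pos m).le
  have hD := abs_derivSymbol_le m
  have hD' : |derivSymbol (n + m)| ≤ 7 * (bracket n * bracket m) :=
    (abs_derivSymbol_le _).trans (by gcongr; exact bracket_add_le n m)
  refine (norm_add_le _ _).trans ?_
  simp only [norm_mul, Complex.norm_real, Real.norm_eq_abs]
  calc _ ≤ (7 * bracket m) * (7 * (bracket n * bracket m)) * ‖kernelSymbol fc κ₁ n m‖ +
        ‖kernelSymbol fc κ₂ n m‖ := by gcongr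
    _ = 49 * (bracket n ^ 1 * (bracket m * ‖kernelSymbol fc κ₁ n m‖)) * bracket m +
        ‖kernelSymbol fc κ₂ n m‖ := by ring
    _ ≤ 49 * (bracket n ^ 3 * ((aliasConst + 6) * κ₁.size n)) * bracket m +
        1 * ((aliasConst + 6) * κ₂.size n) * bracket m := by
        rw [one_mul]
        gcongr
        norm_num
    _ = (49 * (bracket n ^ 3 * ((aliasConst + 6) * κ₁.size n)) +
        1 * ((aliasConst + 6) * κ₂.size n)) * bracket m := by ring
    _ ≤ _ := by
        gcongr
        exact le_symbolMajorant (by norm_num) (by norm_num) n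

variable {N} [NeZero N]

lemma abs_diffSymbol_mul_sub_le (n m : ℤ) :
    |diffSymbol N m * diffSymbol N (n + m) - derivSymbol m * derivSymbol (n + m)| ≤
      1792 / N ^ 2 * bracket n ^ 3 * bracket m ^ 4 := by
  have hn := one_le_bracket n
  have hnm := bracket_add_le n m
  have h₁ := abs_diffSymbol_sub_le N m
  have h₂ : |diffSymbol N (n + m) - derivSymbol (n + m)| ≤
      128 / N ^ 2 * (bracket n * bracket m) ^ 3 :=
    (abs_diffSymbol_sub_le N _).trans (by have := bracket_pos (n + m); gcongr)
  have h₃ := abs_derivSymbol_le m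
  have h₄ : |diffSymbol N (n + m)| ≤ 7 * (bracket n * bracket m) :=
    (abs_diffSymbol_le N _).trans (by gcongr)
  have hm := bracket_pos m
  calc _ = |(diffSymbol N m - derivSymbol m) * diffSymbol N (n + m) +
        derivSymbol m * (diffSymbol N (n + m) - derivSymbol (n + m))| := by congr 1; ring
    _ ≤ (128 / N ^ 2 * bracket m ^ 3) * (7 * (bracket n * bracket m)) +
        (7 * bracket m) * (128 / N ^ 2 * (bracket n * bracket m) ^ 3) := by
        refine (abs_add_le _ _).trans ?_
        rw [abs_mul, abs_mul]
        gcongr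
    _ = 896 / N ^ 2 * bracket n * bracket m ^ 4 + 896 / N ^ 2 * bracket n ^ 3 * bracket m ^ 4 := by
        ring
    _ ≤ 896 / N ^ 2 * bracket n ^ 3 * bracket m ^ 4 +
        896 / N ^ 2 * bracket n ^ 3 * bracket m ^ 4 := by
        gcongr
        exact le_self_pow₀ hn (by norm_num)
    _ = _ := by ring

variable {ε : ℝ} (hε : 4 * Real.sin (Real.pi * ε) ^ 2 = 1) {m : ℤ} (hm : m ∈ centralFreqs N)

include hε hm

lemma norm_hypersingularSymbol_sub_le (n : ℤ) :
    ‖hypersingularSymbol (discreteCoeff N ε) (diffSymbol N) κ₁ κ₂ n m -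
      hypersingularSymbol fc derivSymbol κ₁ κ₂ n m‖ ≤
      symbolMajorant κ₁ κ₂ n * (1 / N ^ 2 * bracket m ^ 3) := by
  have hN : (0 : ℝ) < N := by exact_mod_cast NeZero.pos N
  have hC := aliasConst_nonneg
  have h₁ := κ₁.norm_kernelSymbol_sub_le hε hm n
  have h₂ := κ₂.norm_kernelSymbol_sub_le hε hm n
  have hfc := κ₁.bracket_mul_norm_kernelSymbol_fc_le n m
  have hs₁ := κ₁.size_nonneg n
  have hs₂ := κ₂.size_nonneg n
  have hbm := one_le_bracket m
  have hbn := one_le_bracket n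
  have hD := abs_diffSymbol_le N m
  have hD' : |diffSymbol N (n + m)| ≤ 7 * (bracket n * bracket m) :=
    (abs_diffSymbol_le N _).trans (by gcongr; exact bracket_add_le n m)
  have hDD := abs_diffSymbol_mul_sub_le (N := N) n m
  calc _ ≤ (7 * bracket m) * (7 * (bracket n * bracket m)) *
          (48 * (aliasConst + 6) / N ^ 2 * bracket m * κ₁.size n) +
        1792 / N ^ 2 * bracket n ^ 3 * bracket m ^ 4 * ‖kernelSymbol fc κ₁ n m‖ +
        48 * (aliasConst + 6) / N ^ 2 * bracket m * κ₂.size n := by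
        refine (norm_hypersingularSymbol_sub_le_add ..).trans ?_
        gcongr
    _ = (2352 * (bracket n ^ 1 * ((aliasConst + 6) * κ₁.size n)) +
          1792 * (bracket n ^ 3 * (bracket m * ‖kernelSymbol fc κ₁ n m‖))) *
          (1 / N ^ 2 * bracket m ^ 3) +
        48 * ((aliasConst + 6) * κ₂.size n) * (1 / N ^ 2 * bracket m ^ 1) := by
        ring
    _ ≤ (2352 * (bracket n ^ 3 * ((aliasConst + 6) * κ₁.size n)) +
          1792 * (bracket n ^ 3 * ((aliasConst + 6) * κ₁.size n))) *
          (1 / N ^ 2 * bracket m ^ 3) +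
        48 * ((aliasConst + 6) * κ₂.size n) * (1 / N ^ 2 * bracket m ^ 3) := by
        gcongr <;> norm_num
    _ = (4144 * (bracket n ^ 3 * ((aliasConst + 6) * κ₁.size n)) +
          48 * ((aliasConst + 6) * κ₂.size n)) * (1 / N ^ 2 * bracket m ^ 3) := by ring
    _ ≤ _ := by
        gcongr
        exact le_symbolMajorant (by norm_num) (by norm_num) n

/-- The principal part only sees the restriction of the logarithmic factor to the diagonal. -/
lemma norm_hypersingularSymbol_sub_principal_le (n : ℤ) :
    ‖hypersingularSymbol (discreteCoeff N ε) (diffSymbol N) κ₁ κ₂ n m -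
      diffSymbol N m * diffSymbol N (n + m) * ((∑' q, κ₁.logPart n q) *
        discreteCoeff N ε (fun x => (logSinSq x : ℂ)) m)‖ ≤ symbolMajorant κ₁ κ₂ n := by
  have h₁ := κ₁.bracket_sq_mul_norm_kernelSymbol_sub_le hε hm n
  have h₂ := κ₂.norm_kernelSymbol_discreteCoeff_le N hε n m
  have hbm := bracket_pos m
  have hbn := one_le_bracket n
  have hD := abs_diffSymbol_le N m
  have hD' : |diffSymbol N (n + m)| ≤ 7 * (bracket n * bracket m) :=
    (abs_diffSymbol_le N _).trans (by gcongr; exact bracket_add_le n m)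
  have hone := diffSymbol_mul_discreteCoeff_one ε hm
  set P := (∑' q, κ₁.logPart n q) * discreteCoeff N ε (fun x => (logSinSq x : ℂ)) m
  set R := kernelSymbol (discreteCoeff N ε) κ₁ n m -
    (P + (∑' q, κ₁.smoothPart n q) * discreteCoeff N ε 1 m)
  calc _ = ‖(diffSymbol N m : ℂ) * diffSymbol N (n + m) * R +
        kernelSymbol (discreteCoeff N ε) κ₂ n m‖ := by
        congr 1
        unfold hypersingularSymbol
        linear_combination (diffSymbol N (n + m) : ℂ) * (∑' q, κ₁.smoothPart n q) * hone
    _ ≤ (7 * bracket m) * (7 * (bracket n * bracket m)) * ‖R‖ +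
        2 * (aliasConst + 6) * κ₂.size n := by
        refine (norm_add_le _ _).trans ?_
        simp only [norm_mul, Complex.norm_real, Real.norm_eq_abs]
        gcongr
    _ = 49 * (bracket n ^ 1 * (bracket m ^ 2 * ‖R‖)) + 2 * ((aliasConst + 6) * κ₂.size n) := by
        ring
    _ ≤ 49 * (bracket n ^ 3 * (16 * (aliasConst + 6) * κ₁.size n)) +
        2 * ((aliasConst + 6) * κ₂.size n) := by
        gcongr
        norm_num
    _ = 784 * (bracket n ^ 3 * ((aliasConst + 6) * κ₁.size n)) +
        2 * ((aliasConst + 6) * κ₂.size n) := by ring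
    _ ≤ _ := le_symbolMajorant (by norm_num) (by norm_num) n

omit hm

lemma isElliptic_hypersingularSymbol {α : ℂ}
    (hα : ∀ n, ∑' q, κ₁.logPart n q = if n = 0 then α else 0) :
    IsElliptic (centralFreqs N) (16 / 3 * ‖α‖) (symbolMajorant κ₁ κ₂)
      (hypersingularSymbol (discreteCoeff N ε) (diffSymbol N) κ₁ κ₂) where
  norm_le n hn m hm := by
    simpa [hα, hn] using
      norm_hypersingularSymbol_sub_principal_le (κ₁ := κ₁) (κ₂ := κ₂) hε hm n
  le_norm_diag m hm := by
    have hrest := norm_hypersingularSymbol_sub_principal_le (κ₁ := κ₁) (κ₂ := κ₂) hε hm 0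
    rw [hα, if_pos rfl, zero_add] at hrest
    have hprincipal : 16 / 3 * ‖α‖ * |(m : ℝ)| ≤ ‖(diffSymbol N m : ℂ) * diffSymbol N m *
        (α * discreteCoeff N ε (fun x => (logSinSq x : ℂ)) m)‖ := by
      simp only [norm_mul, Complex.norm_real, Real.norm_eq_abs]
      by_cases h0 : m = 0
      · simp [h0, diffSymbol]
      have hD := four_mul_abs_le_abs_diffSymbol hm
      have hlog := one_third_le_abs_mul_norm_discreteCoeff N hε hm h0
      calc _ = 16 * |(m : ℝ)| * ‖α‖ * (1 / 3) := by ring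
        _ ≤ 16 * |(m : ℝ)| * ‖α‖ *
            (|(m : ℝ)| * ‖discreteCoeff N ε (fun x => (logSinSq x : ℂ)) m‖) := by gcongr
        _ = (4 * |(m : ℝ)|) * (4 * |(m : ℝ)|) *
            (‖α‖ * ‖discreteCoeff N ε (fun x => (logSinSq x : ℂ)) m‖) := by ring
        _ ≤ _ := by gcongr
    linarith [norm_le_norm_add_norm_sub (hypersingularSymbol (discreteCoeff N ε) (diffSymbol N)
      κ₁ κ₂ 0 m) ((diffSymbol N m : ℂ) * diffSymbol N m *
        (α * discreteCoeff N ε (fun x => (logSinSq x : ℂ)) m))]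

end HypersingularSymbol

section

variable {κ₁ κ₂ : LogKernelCoeff} {ε : ℝ} (hε : 4 * Real.sin (Real.pi * ε) ^ 2 = 1)

include hε

lemma tendsto_hypersingularSymbol (n m : ℤ) :
    Tendsto (fun N : ℕ => hypersingularSymbol (discreteCoeff N ε) (diffSymbol N) κ₁ κ₂ n m) atTop
      (𝓝 (hypersingularSymbol fc derivSymbol κ₁ κ₂ n m)) := by
  rw [tendsto_iff_norm_sub_tendsto_zero]
  have hbound : Tendsto (fun N : ℕ => symbolMajorant κ₁ κ₂ n * (1 / (N : ℝ) ^ 2 * bracket m ^ 3))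
      atTop (𝓝 0) := by
    have hsq := (tendsto_one_div_atTop_nhds_zero_nat (𝕜 := ℝ)).pow 2
    simpa using (hsq.mul_const (bracket m ^ 3)).const_mul (symbolMajorant κ₁ κ₂ n)
  refine squeeze_zero' (.of_forall fun N => norm_nonneg _) ?_ hbound
  filter_upwards [eventually_gt_atTop 0, eventually_mem_centralFreqs m] with N hN hm
  have : NeZero N := ⟨hN.ne'⟩
  exact norm_hypersingularSymbol_sub_le hε hm n

theorem exists_sum_norm_sq_le_mul_foldedOp_hypersingularSymbol {α : ℂ} (hα0 : α ≠ 0)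
    (hα : ∀ n, ∑' q, κ₁.logPart n q = if n = 0 then α else 0)
    (hinj : ∀ u : ℤ → ℂ, RapidDecay u → (∀ k : ℤ, ∑' n,
      hypersingularSymbol fc derivSymbol κ₁ κ₂ n (k - n) * u (k - n) = 0) → u = 0) :
    ∃ C : ℝ, 0 < C ∧ ∃ N₀ : ℕ, ∀ (N : ℕ) [NeZero N], N₀ ≤ N → ∀ u : ZMod N → ℂ,
      ∑ k, ‖u k‖ ^ 2 ≤ C * ∑ k, ‖foldedOp N ε
        (hypersingularSymbol (discreteCoeff N ε) (diffSymbol N) κ₁ κ₂) u k‖ ^ 2 := by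
  refine exists_sum_norm_sq_le_mul_foldedOp ε (c := 16 / 3 * ‖α‖)
    (a := symbolMajorant κ₁ κ₂) (by have := norm_pos_iff.mpr hα0; positivity)
    rapidDecay_symbolMajorant symbolMajorant_nonneg (fun N hN => ?_)
    (tendsto_hypersingularSymbol hε) hinj
  have : NeZero N := ⟨hN.ne'⟩
  exact isElliptic_hypersingularSymbol hε hα

end

section KernelAction

variable {A K : ℝ → ℝ → ℂ} {f : ℝ → ℂ} {M : ℝ}

lemma RapidDecay₂.hasSum_convSymbol {b : ℤ → ℤ → ℂ} (hb : RapidDecay₂ b) {c : ℤ → ℂ}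
    (hc : ∀ n, ‖c n‖ ≤ M) (m : ℤ) {s : ℝ} {x : ℂ}
    (h : HasSum (fun p : ℤ × ℤ => b p.1 p.2 * c (p.2 + m) * mode (p.1 + m) s) x) :
    HasSum (fun n => convSymbol b c n m * mode (n + m) s) x := by
  have hM : 0 ≤ M := (norm_nonneg _).trans (hc 0)
  have hrow (n : ℤ) : HasSum (fun q => b n q * c (q + m) * mode (n + m) s)
      (convSymbol b c n m * mode (n + m) s) := by
    have : Summable fun q => b n q * c (q + m) :=
      hb.summable_mul n fun q => le_mul_bracket_pow hM (hc (q + m)) q 3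
    exact this.hasSum.mul_right _
  exact HasSum.prod_fiberwise h hrow

lemma mul_mode_mul_mode (z w : ℂ) (n q m : ℤ) (s t : ℝ) :
    z * mode n s * mode q (t - s) * w * mode m t =
      z * mode (n + m) s * (w * mode (-(q + m)) (s - t)) := by
  have ht : mode m t = mode m s * mode m (t - s) := by rw [← mode_add_arg]; congr 1; ring
  have hst : mode (-(q + m)) (s - t) = mode q (t - s) * mode m (t - s) := by
    rw [mode_neg, neg_sub, mode_add]
  rw [ht, hst, mode_add]
  ring

lemma intervalIntegrable_comp_sub_left (hp : Function.Periodic f 1)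
    (hf : IntervalIntegrable f MeasureTheory.volume 0 1) (s : ℝ) :
    IntervalIntegrable (fun t => f (s - t)) MeasureTheory.volume 0 1 := by
  simpa using (hp.intervalIntegrable₀ one_ne_zero hf s (s - 1)).comp_sub_left s

lemma SPK.intervalIntegrable_mul_comp_sub_left (hA : SPK A) (hp : Function.Periodic f 1)
    (hf : IntervalIntegrable f MeasureTheory.volume 0 1) (s : ℝ) :
    IntervalIntegrable (fun t => A s t * f (s - t)) MeasureTheory.volume 0 1 :=
  (intervalIntegrable_comp_sub_left hp hf s).continuousOn_mul
    (hA.contDiff_right s).continuous.continuousOn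

lemma integral_comp_sub_left_of_periodic (hp : Function.Periodic f 1) (s : ℝ) :
    ∫ t in (0 : ℝ)..1, f (s - t) = ∫ t in (0 : ℝ)..1, f t := by
  rw [intervalIntegral.integral_comp_sub_left]
  simpa using hp.intervalIntegral_add_eq (s - 1) 0

lemma SPK.hasSum_integral_mul_mode (hA : SPK A) (hp : Function.Periodic f 1)
    (hf : IntervalIntegrable f MeasureTheory.volume 0 1) (hM : ∀ n, ‖fc f n‖ ≤ M) (m : ℤ) (s : ℝ) :
    HasSum (fun n => convSymbol (kernelCoeff A) (fc f) n m * mode (n + m) s)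
      (∫ t in (0 : ℝ)..1, A s t * f (s - t) * mode m t) := by
  have hfs := intervalIntegrable_comp_sub_left hp hf s
  have hsum := hA.rapidDecay₂_kernelCoeff.summable_norm
  have h := intervalIntegral.hasSum_integral_of_dominated_convergence
    (μ := MeasureTheory.volume) (a := 0) (b := 1)
    (F := fun (p : ℤ × ℤ) t =>
      kernelCoeff A p.1 p.2 * mode p.1 s * mode p.2 (t - s) * f (s - t) * mode m t)
    (f := fun t => A s t * f (s - t) * mode m t)
    (fun p t => ‖kernelCoeff A p.1 p.2‖ * ‖f (s - t)‖)
    (fun p => ((continuous_const.mul ((continuous_mode p.2).comp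
      (continuous_id.sub continuous_const))).aestronglyMeasurable.mul
      hfs.def'.aestronglyMeasurable).mul (continuous_mode m).aestronglyMeasurable)
    (fun p => .of_forall fun t _ => by simp [norm_mode])
    (.of_forall fun t _ => hsum.mul_right _)
    (by simp_rw [tsum_mul_right]; exact hfs.norm.const_mul _)
    (.of_forall fun t _ => ((hA.hasSum_kernelCoeff s t).mul_right _).mul_right _)
  refine hA.rapidDecay₂_kernelCoeff.hasSum_convSymbol hM m (h.congr_fun fun p => ?_)
  simp_rw [mul_mode_mul_mode]
  rw [intervalIntegral.integral_const_mul, integral_comp_sub_left_of_periodic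
    (f := fun x => f x * mode (-(p.2 + m)) x) (hp.mul (mode_periodic _)) s, fc_eq_integral_mode]
  ring

variable {N : ℕ} [NeZero N] {ε : ℝ}

lemma inv_mul_sum_eq_discreteCoeff (hp : Function.Periodic f 1) (n i : ℤ) {x : ZMod N → ℝ}
    (hx : ∀ j : ZMod N, x j = ((i - j.val : ℤ) + ε) / N) :
    (N : ℂ)⁻¹ * ∑ j, f (x j) * mode (-n) (x j) = discreteCoeff N ε f n := by
  rw [discreteCoeff_eq_sum, ← (Equiv.subLeft (i : ZMod N)).sum_comp
    fun k => f (node N ε k) * mode (-n) (node N ε k)]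
  congr 1
  refine sum_congr rfl fun j _ => ?_
  have hg := apply_node_intCast N ε (hp.mul (mode_periodic (-n))) (i - j.val)
  simpa [hx] using hg.symm

/-- The evaluation point `s` is shifted by `ε / N` against the quadrature grid `y`. -/
lemma SPK.hasSum_quadrature_mul_mode (hA : SPK A) (hp : Function.Periodic f 1)
    (hM : ∀ n, ‖discreteCoeff N ε f n‖ ≤ M) (m i : ℤ) {s : ℝ} {y : ZMod N → ℝ}
    (hy : ∀ j : ZMod N, s - y j = ((i - j.val : ℤ) + ε) / N) :
    HasSum (fun n => convSymbol (kernelCoeff A) (discreteCoeff N ε f) n m * mode (n + m) s)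
      ((N : ℂ)⁻¹ * ∑ j, A s (y j) * f (s - y j) * mode m (y j)) := by
  have h := (hasSum_sum (s := univ) fun (j : ZMod N) _ =>
    ((hA.hasSum_kernelCoeff s (y j)).mul_right (f (s - y j))).mul_right (mode m (y j))).mul_left
      (N : ℂ)⁻¹
  refine hA.rapidDecay₂_kernelCoeff.hasSum_convSymbol hM m (h.congr_fun fun p => ?_)
  simp_rw [mul_mode_mul_mode]
  rw [← mul_sum, ← inv_mul_sum_eq_discreteCoeff hp (p.2 + m) i hy]
  ring

end KernelAction

section LogKernel

variable {A K : ℝ → ℝ → ℂ}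

lemma SPK.const_mul (hA : SPK A) (z : ℂ) : SPK fun s t => z * A s t :=
  ⟨contDiff_const.mul hA.1, fun s t => congrArg (z * ·) (hA.2.1 s t),
    fun s t => congrArg (z * ·) (hA.2.2 s t)⟩

/-- The Fourier coefficients of the two smooth factors of `logKer A K`. -/
def logKerCoeff (hA : SPK A) (hK : SPK K) : LogKernelCoeff where
  logPart := kernelCoeff fun s t => Complex.I / (2 * Real.pi) * A s t
  smoothPart := kernelCoeff K
  rapidDecay₂_logPart := (hA.const_mul _).rapidDecay₂_kernelCoeff
  rapidDecay₂_smoothPart := hK.rapidDecay₂_kernelCoeff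

lemma periodic_logSinSq : Function.Periodic (fun x => (logSinSq x : ℂ)) 1 := by
  intro x
  simp only [logSinSq, mul_add, mul_one, Real.sin_add_pi, neg_sq]

lemma intervalIntegrable_ofReal_logSinSq :
    IntervalIntegrable (fun x => (logSinSq x : ℂ)) MeasureTheory.volume 0 1 :=
  ⟨intervalIntegrable_logSinSq.1.ofReal, intervalIntegrable_logSinSq.2.ofReal⟩

lemma logKer_eq (A K : ℝ → ℝ → ℂ) (s t : ℝ) : logKer A K s t =
    Complex.I / (2 * Real.pi) * A s t * (logSinSq (s - t) : ℂ) + K s t * 1 := by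
  simp only [logKer, logSinSq, mul_one]

variable (hA : SPK A) (hK : SPK K)

include hA hK

lemma intervalIntegrable_logKer (s : ℝ) :
    IntervalIntegrable (logKer A K s) MeasureTheory.volume 0 1 := by
  have hlog := (hA.const_mul (Complex.I / (2 * Real.pi))).intervalIntegrable_mul_comp_sub_left
    periodic_logSinSq intervalIntegrable_ofReal_logSinSq s
  have hone := hK.intervalIntegrable_mul_comp_sub_left (f := 1) (fun _ => rfl)
    (by simp [Pi.one_def]) s
  exact (hlog.add hone).congr fun t _ => (logKer_eq A K s t).symm

omit hA hK in
lemma norm_fc_logSinSq_le (n : ℤ) : ‖fc (fun x => (logSinSq x : ℂ)) n‖ ≤ 2 := by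
  rw [fc_logSinSq, Complex.norm_real, Real.norm_eq_abs]
  exact (le_mul_of_one_le_left (abs_nonneg _) (one_le_bracket n)).trans
    (bracket_mul_abs_logCoeff_le n)

lemma hasSum_integral_logKer_mul_mode (m : ℤ) (s : ℝ) :
    HasSum (fun n => kernelSymbol fc (logKerCoeff hA hK) n m * mode (n + m) s)
      (∫ t in (0 : ℝ)..1, logKer A K s t * mode m t) := by
  have hlog := (hA.const_mul (Complex.I / (2 * Real.pi))).hasSum_integral_mul_mode
    periodic_logSinSq intervalIntegrable_ofReal_logSinSq norm_fc_logSinSq_le m s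
  have hone := hK.hasSum_integral_mul_mode (f := 1) (M := 1) (fun _ => rfl)
    (by simp [Pi.one_def]) (norm_fc_le fun t => by simp) m s
  have hlogInt := (hA.const_mul (Complex.I / (2 * Real.pi))).intervalIntegrable_mul_comp_sub_left
    periodic_logSinSq intervalIntegrable_ofReal_logSinSq s
  have honeInt := hK.intervalIntegrable_mul_comp_sub_left (f := 1) (fun _ => rfl)
    (by simp [Pi.one_def]) s
  have hmode := (continuous_mode m).continuousOn (s := Set.uIcc 0 1)
  convert hlog.add hone using 1
  · simp only [kernelSymbol, logKerCoeff, add_mul]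
  · rw [← intervalIntegral.integral_add (hlogInt.mul_continuousOn hmode)
      (honeInt.mul_continuousOn hmode)]
    simp only [logKer_eq, add_mul, Pi.one_apply]

omit hA hK in
/-- The evaluation point `s` is shifted by `ε / N` against the quadrature grid `y`. -/
lemma hasSum_quadrature_logKer_mul_mode (hA : SPK A) (hK : SPK K) {N : ℕ} [NeZero N] {ε : ℝ}
    (hε : 4 * Real.sin (Real.pi * ε) ^ 2 = 1) (m i : ℤ) {s : ℝ} {y : ZMod N → ℝ}
    (hy : ∀ j : ZMod N, s - y j = ((i - j.val : ℤ) + ε) / N) :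
    HasSum (fun n => kernelSymbol (discreteCoeff N ε) (logKerCoeff hA hK) n m * mode (n + m) s)
      ((N : ℂ)⁻¹ * ∑ j, logKer A K s (y j) * mode m (y j)) := by
  have hlog := (hA.const_mul (Complex.I / (2 * Real.pi))).hasSum_quadrature_mul_mode
    periodic_logSinSq (hasAliasingBound_logSinSq N hε).norm_discreteCoeff_le m i hy
  have hone := hK.hasSum_quadrature_mul_mode (f := 1) (fun _ => rfl)
    (hasAliasingBound_one N ε le_rfl).norm_discreteCoeff_le m i hy
  convert hlog.add hone using 1
  · simp only [kernelSymbol, logKerCoeff, add_mul]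
  · simp only [logKer_eq, add_mul, Pi.one_apply, sum_add_distrib, mul_add]

lemma hasSum_Vop_of_hasSum {u : ℤ → ℂ} (hu : Summable fun m => ‖u m‖) {ψ : ℝ → ℂ}
    (hψ : ∀ x, HasSum (fun m => u m * mode m x) (ψ x)) (s : ℝ) :
    HasSum (fun m => u m * ∫ t in (0 : ℝ)..1, logKer A K s t * mode m t)
      (Vop (logKer A K) ψ s) := by
  have hInt := intervalIntegrable_logKer hA hK s
  have h := intervalIntegral.hasSum_integral_of_dominated_convergence
    (μ := MeasureTheory.volume) (a := 0) (b := 1)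
    (F := fun m t => u m * (logKer A K s t * mode m t)) (f := fun t => logKer A K s t * ψ t)
    (fun m t => ‖u m‖ * ‖logKer A K s t‖)
    (fun m => (hInt.def'.aestronglyMeasurable.mul
      (continuous_mode m).aestronglyMeasurable).const_mul _)
    (fun m => .of_forall fun t _ => by simp [norm_mode])
    (.of_forall fun t _ => hu.mul_right _)
    (by simp_rw [tsum_mul_right]; exact hInt.norm.const_mul _)
    (.of_forall fun t _ => ((hψ t).mul_left _).congr_fun fun m => by ring)
  simpa only [Vop, intervalIntegral.integral_const_mul] using h

lemma hasSum_Vop {u : ℤ → ℂ} (hu : Summable fun m => ‖u m‖) {ψ : ℝ → ℂ}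
    (hψ : ∀ x, HasSum (fun m => u m * mode m x) (ψ x)) (s : ℝ) :
    HasSum (fun p : ℤ × ℤ => u p.1 * (kernelSymbol fc (logKerCoeff hA hK) p.2 p.1 *
      mode (p.2 + p.1) s)) (Vop (logKer A K) ψ s) := by
  set κ := logKerCoeff hA hK
  have hs : Summable fun p : ℤ × ℤ => u p.1 * (kernelSymbol fc κ p.2 p.1 * mode (p.2 + p.1) s) := by
    refine .of_norm_bounded (hu.mul_of_nonneg (κ.rapidDecay_size.summable_norm.mul_left
      (aliasConst + 6)) (fun _ => norm_nonneg _) fun n => ?_) fun p => ?_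
    · have := aliasConst_nonneg
      positivity
    · rw [norm_mul, norm_mul, norm_mode, mul_one, Real.norm_of_nonneg (κ.size_nonneg _)]
      gcongr
      exact (le_mul_of_one_le_left (norm_nonneg _) (one_le_bracket _)).trans
        (κ.bracket_mul_norm_kernelSymbol_fc_le _ _)
  have hfiber := HasSum.prod_fiberwise hs.hasSum fun m =>
    (hasSum_integral_logKer_mul_mode hA hK m s).mul_left (u m)
  rw [← hfiber.unique (hasSum_Vop_of_hasSum hA hK hu hψ s)]
  exact hs.hasSum

end LogKernel

/-! ### The hypersingular operator and its matrix in Fourier coordinates -/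

section Wop

variable {A K A₁ K₁ A₂ K₂ : ℝ → ℝ → ℂ}

lemma hasSum_deriv_Vop (hA : SPK A) (hK : SPK K) {u : ℤ → ℂ} (hu : Summable fun m => ‖u m‖)
    {ψ : ℝ → ℂ} (hψ : ∀ x, HasSum (fun m => u m * mode m x) (ψ x)) (s : ℝ) :
    HasSum (fun p : ℤ × ℤ => u p.1 * (kernelSymbol fc (logKerCoeff hA hK) p.2 p.1 *
      (2 * Real.pi * Complex.I * (p.2 + p.1 : ℤ) * mode (p.2 + p.1) s)))
      (deriv (Vop (logKer A K) ψ) s) := by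
  set κ := logKerCoeff hA hK
  have hsum := hasSum_Vop hA hK hu hψ
  have hC := aliasConst_nonneg
  have hmajorant : Summable fun p : ℤ × ℤ =>
      ‖u p.1‖ * (7 * (aliasConst + 6) * (bracket p.2 ^ 1 * ‖κ.size p.2‖)) :=
    hu.mul_of_nonneg ((κ.rapidDecay_size.summable_bracket_pow_mul 1).mul_left _)
      (fun _ => norm_nonneg _) fun n => by have := bracket_pos n; positivity
  have hbound (p : ℤ × ℤ) (y : ℝ) : ‖u p.1 * (kernelSymbol fc κ p.2 p.1 *
      (2 * Real.pi * Complex.I * (p.2 + p.1 : ℤ) * mode (p.2 + p.1) y))‖ ≤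
      ‖u p.1‖ * (7 * (aliasConst + 6) * (bracket p.2 ^ 1 * ‖κ.size p.2‖)) := by
    obtain ⟨m, n⟩ := p
    have hn := bracket_pos n
    have hκ := κ.bracket_mul_norm_kernelSymbol_fc_le n m
    have hderiv : ‖(2 * Real.pi * Complex.I * (n + m : ℤ) : ℂ)‖ ≤ 7 * (bracket n * bracket m) := by
      rw [norm_two_pi_I_mul, ← abs_derivSymbol]
      linarith [abs_derivSymbol_le (n + m), bracket_add_le n m]
    rw [norm_mul, norm_mul, norm_mul, norm_mode, mul_one, Real.norm_of_nonneg (κ.size_nonneg n)]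
    refine mul_le_mul_of_nonneg_left ?_ (norm_nonneg _)
    calc _ ≤ ‖kernelSymbol fc κ n m‖ * (7 * (bracket n * bracket m)) := by gcongr
      _ = 7 * bracket n * (bracket m * ‖kernelSymbol fc κ n m‖) := by ring
      _ ≤ 7 * bracket n * ((aliasConst + 6) * κ.size n) := by gcongr
      _ = _ := by ring
  have hderiv := (hasDerivAt_tsum hmajorant
    (fun p y => ((hasDerivAt_mode (p.2 + p.1) y).const_mul _).const_mul _) hbound
    (hsum s).summable s).deriv
  rw [← funext fun z => (hsum z).tsum_eq.symm] at hderiv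
  rw [hderiv]
  exact (Summable.of_norm_bounded hmajorant fun p => hbound p s).hasSum

lemma hasSum_Wop (hA₁ : SPK A₁) (hK₁ : SPK K₁) (hA₂ : SPK A₂) (hK₂ : SPK K₂) {φ : ℝ → ℂ}
    (hφ : ContDiff ℝ (⊤ : ℕ∞) φ) (hp : Function.Periodic φ 1) (s : ℝ) :
    HasSum (fun p : ℤ × ℤ => fc φ p.1 * (hypersingularSymbol fc derivSymbol (logKerCoeff hA₁ hK₁)
      (logKerCoeff hA₂ hK₂) p.2 p.1 * mode (p.2 + p.1) s))
      (Wop (logKer A₁ K₁) (logKer A₂ K₂) φ s) := by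
  have hd : ContDiff ℝ (⊤ : ℕ∞) (deriv φ) := (contDiff_infty_iff_deriv.mp hφ).2
  have hdp := periodic_deriv hp
  have hV₁ := hasSum_deriv_Vop hA₁ hK₁ (rapidDecay_fc hd hdp).summable_norm
    (hasSum_fc_of_contDiff hd hdp) s
  have hV₂ := hasSum_Vop hA₂ hK₂ (rapidDecay_fc hφ hp).summable_norm
    (hasSum_fc_of_contDiff hφ hp) s
  refine (hV₁.neg.add hV₂).congr_fun fun p => ?_
  rw [fc_deriv (hφ.of_le (by exact_mod_cast le_top)) hp]
  unfold hypersingularSymbol derivSymbol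
  push_cast
  linear_combination (4 * Real.pi ^ 2 * p.1 * (p.2 + p.1) * fc φ p.1 *
    kernelSymbol fc (logKerCoeff hA₁ hK₁) p.2 p.1 * mode (p.2 + p.1) s) * Complex.I_sq

end Wop

lemma hasSum_of_eq {ι : Type*} {f g : ι → ℂ} {x y : ℂ} (h : HasSum g y) (hf : ∀ i, f i = g i)
    (hx : x = y) : HasSum f x := hx ▸ h.congr_fun hf

section Wmat

variable (N : ℕ) [NeZero N]

lemma mode_add_half_step_sub (n : ℤ) (x : ℝ) :
    mode n (x + 1 / (2 * N)) - mode n (x - 1 / (2 * N)) =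
      Complex.I * (diffSymbol N n / N) * mode n x := by
  have hN : (N : ℂ) ≠ 0 := by exact_mod_cast NeZero.ne N
  have hstep : mode n (1 / (2 * N)) - mode n (-(1 / (2 * N))) =
      2 * Complex.I * Complex.sin (Real.pi * n / N) := by
    rw [Complex.sin]
    simp only [mode_eq_exp]
    push_cast
    rw [show (2 * Real.pi * Complex.I * n * (1 / (2 * N)) : ℂ) = Real.pi * n / N * Complex.I by
        field_simp,
      show (2 * Real.pi * Complex.I * n * -(1 / (2 * N)) : ℂ) = -(Real.pi * n / N) * Complex.I by
        field_simp]
    linear_combination (Complex.exp (Real.pi * n / N * Complex.I) -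
      Complex.exp (-(Real.pi * n / N) * Complex.I)) * Complex.I_sq
  rw [sub_eq_add_neg x, mode_add_arg, mode_add_arg, ← mul_sub, hstep, diffSymbol]
  push_cast
  field_simp

variable {N} {ε : ℝ} (hε : 4 * Real.sin (Real.pi * ε) ^ 2 = 1) {A K A₁ K₁ A₂ K₂ : ℝ → ℝ → ℂ}

include hε

/-- The difference quotient in the integration variable falls on the mode by summation by parts. -/
lemma hasSum_quadrature_logKer_sub_mul_mode (hA : SPK A) (hK : SPK K) (m i : ℤ) :
    HasSum (fun n => -(Complex.I * (diffSymbol N m / N)) *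
        (kernelSymbol (discreteCoeff N ε) (logKerCoeff hA hK) n m * mode (n + m) (sg (1 / N) ε i)))
      ((N : ℂ)⁻¹ * ∑ j : ZMod N, (logKer A K (sg (1 / N) ε i) (sg (1 / N) 0 (j.val + 1)) -
        logKer A K (sg (1 / N) ε i) (sg (1 / N) 0 j.val)) * mode m (node N 0 j)) := by
  have hN : (N : ℝ) ≠ 0 := NeZero.ne _
  have hright := hasSum_quadrature_logKer_mul_mode hA hK hε m (i - 1) (s := sg (1 / N) ε i)
    (y := fun j => sg (1 / N) 0 (j.val + 1)) fun j => by simp only [sg]; push_cast; field_simp; ring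
  have hleft := hasSum_quadrature_logKer_mul_mode hA hK hε m i (s := sg (1 / N) ε i)
    (y := fun j => sg (1 / N) 0 j.val) fun j => by simp only [sg]; push_cast; field_simp; ring
  have hnode_right (j : ZMod N) : mode m (node N 0 j) =
      mode m (sg (1 / N) 0 (j.val + 1)) * mode m (-(1 / (2 * N))) := by
    rw [← mode_add_arg, node, sg]
    congr 1
    push_cast
    field_simp
    ring
  have hnode_left (j : ZMod N) : mode m (node N 0 j) =
      mode m (sg (1 / N) 0 j.val) * mode m (1 / (2 * N)) := by
    rw [← mode_add_arg, node, sg]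
    congr 1
    push_cast
    field_simp
    ring
  have hstep := mode_add_half_step_sub N m 0
  rw [zero_add, zero_sub, mode_zero_arg, mul_one] at hstep
  refine hasSum_of_eq ((hright.mul_left (mode m (-(1 / (2 * N))))).add
    (hleft.mul_left (-mode m (1 / (2 * N))))) (fun n => ?_) ?_
  · rw [← hstep]
    ring
  · simp only [mul_sum, ← sum_add_distrib]
    refine sum_congr rfl fun j _ => ?_
    rw [sub_mul]
    nth_rewrite 1 [hnode_right]
    rw [hnode_left]
    ring

lemma hasSum_Wmat_mul_mode (hA₁ : SPK A₁) (hK₁ : SPK K₁) (hA₂ : SPK A₂) (hK₂ : SPK K₂) (m i : ℤ) :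
    HasSum (fun n => hypersingularSymbol (discreteCoeff N ε) (diffSymbol N) (logKerCoeff hA₁ hK₁)
        (logKerCoeff hA₂ hK₂) n m * mode (n + m) ((i + ε) / N))
      (N * ∑ j : ZMod N, Wmat (logKer A₁ K₁) (logKer A₂ K₂) (1 / N) ε i j.val *
        mode m (node N 0 j)) := by
  have hN : (N : ℝ) ≠ 0 := NeZero.ne _
  have hNc : (N : ℂ) ≠ 0 := NeZero.ne _
  have hV₂ := hasSum_quadrature_logKer_mul_mode hA₂ hK₂ hε m i (s := (i + ε) / N)
    (y := node N 0) fun j => by rw [node]; push_cast; field_simp; ring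
  have hV₁ (k : ℤ) := (hasSum_quadrature_logKer_sub_mul_mode (N := N) hε hA₁ hK₁ m k)
  have hshift_right : sg (1 / N) ε (i + 1) = (i + ε) / N + 1 / (2 * N) := by
    rw [sg]; push_cast; field_simp; ring
  have hshift_left : sg (1 / N) ε i = (i + ε) / N - 1 / (2 * N) := by
    rw [sg]; field_simp; ring
  have htg : tg (1 / N) ε i = (i + ε) / N := by rw [tg, mul_one_div]
  have htg' (j : ZMod N) : tg (1 / N) 0 j.val = node N 0 j := by rw [tg, mul_one_div]; rfl
  refine hasSum_of_eq ((((hV₁ (i + 1)).mul_left ((N : ℂ) ^ 2)).add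
    ((hV₁ i).mul_left (-(N : ℂ) ^ 2))).add hV₂) (fun n => ?_) ?_
  · have hstep := mode_add_half_step_sub N (n + m) ((i + ε) / N)
    rw [← hshift_right, ← hshift_left] at hstep
    rw [hypersingularSymbol]
    linear_combination (diffSymbol N m * diffSymbol N (n + m) * kernelSymbol (discreteCoeff N ε)
      (logKerCoeff hA₁ hK₁) n m * mode (n + m) ((i + ε) / N)) *
        ((N * (N : ℂ)⁻¹) ^ 2 * Complex.I_sq - (N * (N : ℂ)⁻¹ + 1) * mul_inv_cancel₀ hNc) +
      Complex.I * diffSymbol N m * kernelSymbol (discreteCoeff N ε)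
        (logKerCoeff hA₁ hK₁) n m * (N ^ 2 * (N : ℂ)⁻¹ * hstep)
  · simp only [mul_sum, ← sum_add_distrib]
    refine sum_congr rfl fun j _ => ?_
    rw [Wmat, htg, htg']
    push_cast
    field_simp
    ring

lemma hasSum_Wmat_mulVec_synthesis (hA₁ : SPK A₁) (hK₁ : SPK K₁) (hA₂ : SPK A₂) (hK₂ : SPK K₂)
    (u : ZMod N → ℂ) (i : ZMod N) :
    HasSum (fun n : ℤ => ∑ r : ZMod N, u r * (hypersingularSymbol (discreteCoeff N ε)
        (diffSymbol N) (logKerCoeff hA₁ hK₁) (logKerCoeff hA₂ hK₂) n r.valMinAbs *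
          mode (n + r.valMinAbs) (node N ε i)))
      (N * ∑ j : ZMod N, Wmat (logKer A₁ K₁) (logKer A₂ K₂) (1 / N) ε i.val j.val *
        synthesis N 0 u j) := by
  have h := hasSum_sum (s := univ) fun r _ =>
    (hasSum_Wmat_mul_mode (N := N) hε hA₁ hK₁ hA₂ hK₂ r.valMinAbs i.val).mul_left (u r)
  refine hasSum_of_eq h (fun _ => rfl) ?_
  simp only [synthesis_apply, mul_sum]
  rw [sum_comm]
  exact sum_congr rfl fun r _ => sum_congr rfl fun j _ => by ring

lemma Wmat_mulVec_synthesis (hA₁ : SPK A₁) (hK₁ : SPK K₁) (hA₂ : SPK A₂) (hK₂ : SPK K₂)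
    {α : ℂ} (hα : ∀ n, ∑' q, (logKerCoeff hA₁ hK₁).logPart n q = if n = 0 then α else 0)
    (u : ZMod N → ℂ) (i : ZMod N) :
    N * ∑ j : ZMod N, Wmat (logKer A₁ K₁) (logKer A₂ K₂) (1 / N) ε i.val j.val *
      synthesis N 0 u j = synthesis N ε (foldedOp N ε (hypersingularSymbol (discreteCoeff N ε)
        (diffSymbol N) (logKerCoeff hA₁ hK₁) (logKerCoeff hA₂ hK₂)) u) i := by
  set w := hypersingularSymbol (discreteCoeff N ε) (diffSymbol N) (logKerCoeff hA₁ hK₁)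
    (logKerCoeff hA₂ hK₂)
  have hfolded : HasSum (fun n : ℤ => ∑ k, foldedTerm N ε w u k n *
      mode k.valMinAbs (node N ε i)) (synthesis N ε (foldedOp N ε w u) i) :=
    hasSum_sum fun k _ => ((isElliptic_hypersingularSymbol hε hα).summable_foldedTerm ε
      rapidDecay_symbolMajorant.summable_norm.of_norm symbolMajorant_nonneg u k).hasSum.mul_right _
  refine (hasSum_Wmat_mulVec_synthesis hε hA₁ hK₁ hA₂ hK₂ u i).unique
    (hfolded.congr_fun fun n => ?_)
  refine Fintype.sum_equiv (Equiv.addRight (n : ZMod N)) _ _ fun r => ?_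
  simp only [foldedTerm, Equiv.coe_addRight, add_sub_cancel_right]
  have hphase : mode (r.valMinAbs + n - (r + n).valMinAbs) (node N ε i) =
      mode (r.valMinAbs + n - (r + n).valMinAbs) (ε / N) := by rw [mode_node]; simp
  rw [← hphase, show n + r.valMinAbs = (r.valMinAbs + n - (r + n).valMinAbs) +
    (r + n).valMinAbs by ring, mode_add]
  ring

end Wmat

/-! ### Consistency -/

section Consistency

variable (N : ℕ) [NeZero N]

/-- A frequency is split into the central representative of its class modulo `N` and a multiple
of `N`. -/
def freqEquiv : ZMod N × ℤ ≃ ℤ where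
  toFun p := p.1.valMinAbs + p.2 * N
  invFun m := ((m : ZMod N), (m - (m : ZMod N).valMinAbs) / N)
  left_inv p := by
    have hN : (N : ℤ) ≠ 0 := by exact_mod_cast NeZero.ne N
    have hcast : ((p.1.valMinAbs + p.2 * N : ℤ) : ZMod N) = p.1 := by simp
    ext
    · exact hcast
    · simp only [hcast]
      rw [add_sub_cancel_left, Int.mul_ediv_cancel _ hN]
  right_inv m := by
    have hdvd : (N : ℤ) ∣ m - (m : ZMod N).valMinAbs := by
      rw [← ZMod.intCast_zmod_eq_zero_iff_dvd]
      simp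
    simp only [Int.ediv_mul_cancel hdvd, add_sub_cancel]

lemma freqEquiv_apply (r : ZMod N) (l : ℤ) : freqEquiv N (r, l) = r.valMinAbs + l * N := rfl

lemma freqEquiv_apply_zero (r : ZMod N) : freqEquiv N (r, 0) = r.valMinAbs := by
  simp [freqEquiv_apply]

lemma freqEquiv_injective_left (l : ℤ) : Function.Injective fun r : ZMod N => freqEquiv N (r, l) :=
  (freqEquiv N).injective.comp (Prod.mk_left_injective l)

lemma mul_bracket_le_bracket_freqEquiv (r : ZMod N) {l : ℤ} (hl : l ≠ 0) :
    N * bracket l ≤ 4 * bracket (freqEquiv N (r, l)) := by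
  have hN : (0 : ℝ) < N := by exact_mod_cast NeZero.pos N
  have hl' : (1 : ℝ) ≤ |(l : ℝ)| := by exact_mod_cast Int.one_le_abs hl
  have hr : 2 * |(r.valMinAbs : ℝ)| ≤ N := valMinAbs_mem_centralFreqs N r
  have htri := abs_sub ((r.valMinAbs : ℝ) + l * N) r.valMinAbs
  rw [add_sub_cancel_left, abs_mul, abs_of_pos hN] at htri
  simp only [freqEquiv_apply, bracket]
  push_cast
  nlinarith

/-- The square of the Sobolev norm of order `r`, with weights that do not vanish at the frequency
zero, of the function with Fourier coefficients `u`. -/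
def energy (r : ℕ) (u : ℤ → ℂ) : ℝ := ∑' m, (bracket m ^ r * ‖u m‖) ^ 2

lemma energy_nonneg (r : ℕ) (u : ℤ → ℂ) : 0 ≤ energy r u := tsum_nonneg fun _ => sq_nonneg _

lemma RapidDecay.summable_energy {u : ℤ → ℂ} (hu : RapidDecay u) (r : ℕ) :
    Summable fun m => (bracket m ^ r * ‖u m‖) ^ 2 := by
  have hsum := hu.summable_bracket_pow_mul r
  have hnonneg (m : ℤ) : 0 ≤ bracket m ^ r * ‖u m‖ :=
    mul_nonneg (pow_nonneg (bracket_pos m).le _) (norm_nonneg _)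
  refine Summable.of_nonneg_of_le (fun m => sq_nonneg _) (fun m => ?_)
    (hsum.mul_left (∑' m, bracket m ^ r * ‖u m‖))
  rw [sq]
  exact mul_le_mul_of_nonneg_right (hsum.le_tsum m fun j _ => hnonneg j) (hnonneg m)

/-- The difference between a symbol `w'` on the grid and the symbol `w`, as seen by the frequency
`m + l * N`: the former acts on the central frequencies `l = 0` only. -/
def symbolDefect (w' w : ℤ → ℤ → ℂ) (n l : ℤ) (r : ZMod N) : ℂ :=
  (if l = 0 then w' n r.valMinAbs else 0) - w n (freqEquiv N (r, l))

variable {N} {w' w : ℤ → ℤ → ℂ} {a : ℤ → ℝ} {u : ℤ → ℂ}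

lemma norm_symbolDefect_le (ha0 : ∀ n, 0 ≤ a n) (hw : ∀ n m, ‖w n m‖ ≤ a n * bracket m)
    (hw' : ∀ n, ∀ m ∈ centralFreqs N, ‖w' n m - w n m‖ ≤ a n * (1 / N ^ 2 * bracket m ^ 3))
    (n l : ℤ) (r : ZMod N) : ‖symbolDefect N w' w n l r‖ ≤
      a n * (16 * (bracket l ^ 2)⁻¹) / N ^ 2 * bracket (freqEquiv N (r, l)) ^ 3 := by
  have hN : (0 : ℝ) < N := by exact_mod_cast NeZero.pos N
  have ha := ha0 n
  have hl := bracket_pos l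
  set m := freqEquiv N (r, l) with hm
  have hmpos := bracket_pos m
  by_cases hl0 : l = 0
  · subst hl0
    rw [freqEquiv_apply_zero] at hm
    rw [symbolDefect, if_pos rfl, freqEquiv_apply_zero, ← hm]
    calc _ ≤ a n * (1 / N ^ 2 * bracket m ^ 3) := hw' n m (hm ▸ valMinAbs_mem_centralFreqs N r)
      _ = a n * 1 / N ^ 2 * bracket m ^ 3 := by ring
      _ ≤ _ := by gcongr; norm_num [bracket]
  · have hlarge : (N * bracket l) ^ 2 ≤ (4 * bracket m) ^ 2 := by
      have := mul_bracket_le_bracket_freqEquiv N r hl0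
      gcongr
    rw [symbolDefect, if_neg hl0, zero_sub, norm_neg, ← hm]
    calc _ ≤ a n * bracket m := hw n m
      _ = a n * bracket m / (N * bracket l) ^ 2 * (N * bracket l) ^ 2 := by field_simp
      _ ≤ a n * bracket m / (N * bracket l) ^ 2 * (4 * bracket m) ^ 2 := by gcongr
      _ = _ := by field_simp; ring

lemma sum_norm_sq_symbolDefect_le (ha0 : ∀ n, 0 ≤ a n) (hw : ∀ n m, ‖w n m‖ ≤ a n * bracket m)
    (hw' : ∀ n, ∀ m ∈ centralFreqs N, ‖w' n m - w n m‖ ≤ a n * (1 / N ^ 2 * bracket m ^ 3))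
    (hu : RapidDecay u) (ε : ℝ) (n l : ℤ) :
    ∑ i, ‖∑ r, u (freqEquiv N (r, l)) * symbolDefect N w' w n l r *
      mode (n + freqEquiv N (r, l)) (node N ε i)‖ ^ 2 ≤
      (a n * (16 * (bracket l ^ 2)⁻¹) * (√(N * energy 3 u) / N ^ 2)) ^ 2 := by
  have henergy := energy_nonneg 3 u
  have hclass : ∑ r : ZMod N, (bracket (freqEquiv N (r, l)) ^ 3 * ‖u (freqEquiv N (r, l))‖) ^ 2 ≤
      energy 3 u := by
    rw [← tsum_fintype (L := .unconditional _)]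
    exact tsum_comp_le_tsum_of_inj (hu.summable_energy 3) (fun _ => sq_nonneg _)
      (freqEquiv_injective_left N l)
  rw [sum_norm_sq_sum_mode_node N ε (d := n) (fun r => by simp [freqEquiv_apply, add_comm]),
    mul_pow, div_pow, Real.sq_sqrt (by positivity)]
  calc _ ≤ (N : ℝ) * ∑ r, (a n * (16 * (bracket l ^ 2)⁻¹) / N ^ 2 *
        (bracket (freqEquiv N (r, l)) ^ 3 * ‖u (freqEquiv N (r, l))‖)) ^ 2 := by
        gcongr with r
        rw [norm_mul]
        calc _ ≤ ‖u (freqEquiv N (r, l))‖ * _ :=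
              mul_le_mul_of_nonneg_left (norm_symbolDefect_le ha0 hw hw' n l r) (norm_nonneg _)
          _ = _ := by ring
    _ = N * ((a n * (16 * (bracket l ^ 2)⁻¹) / N ^ 2) ^ 2 *
        ∑ r : ZMod N, (bracket (freqEquiv N (r, l)) ^ 3 * ‖u (freqEquiv N (r, l))‖) ^ 2) := by
        simp only [mul_pow _ (bracket _ ^ 3 * _), mul_sum]
    _ ≤ N * ((a n * (16 * (bracket l ^ 2)⁻¹) / N ^ 2) ^ 2 * energy 3 u) := by gcongr
    _ = _ := by ring

lemma hasSum_symbolDefect {s : ℝ} {x y : ℂ}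
    (hx : HasSum (fun n => ∑ r : ZMod N, u r.valMinAbs *
      (w' n r.valMinAbs * mode (n + r.valMinAbs) s)) x)
    (hy : HasSum (fun p : ℤ × ℤ => u p.1 * (w p.2 p.1 * mode (p.2 + p.1) s)) y) :
    HasSum (fun p : ℤ × ℤ => ∑ r, u (freqEquiv N (r, p.2)) * symbolDefect N w' w p.1 p.2 r *
      mode (p.1 + freqEquiv N (r, p.2)) s) (x - y) := by
  have hx' : HasSum (fun p : ℤ × ℤ => if p.2 = 0 then ∑ r : ZMod N, u r.valMinAbs *
      (w' p.1 r.valMinAbs * mode (p.1 + r.valMinAbs) s) else 0) x := by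
    refine ((Prod.mk_left_injective (0 : ℤ)).hasSum_iff fun p hp => if_neg ?_).mp
      (hx.congr_fun fun n => by simp)
    exact fun hp0 => hp ⟨p.1, Prod.ext rfl hp0.symm⟩
  let split : (ℤ × ℤ) × ZMod N ≃ ℤ × ℤ :=
    (Equiv.prodAssoc _ _ _).trans <| (Equiv.prodComm _ _).trans <|
      ((Equiv.prodComm _ _).trans (freqEquiv N)).prodCongr (Equiv.refl ℤ)
  have hy' := (split.hasSum_iff.mpr hy).prod_fiberwise fun p => hasSum_fintype _
  refine (hx'.sub hy').congr_fun fun p => ?_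
  obtain ⟨n, l⟩ := p
  simp only [Function.comp_apply, split, Equiv.trans_apply, Equiv.prodAssoc_apply,
    Equiv.prodComm_apply, Equiv.prodCongr_apply, Prod.swap_prod_mk, Prod.map_apply,
    Equiv.refl_apply]
  by_cases hl : l = 0
  · subst hl
    simp only [if_pos, symbolDefect, freqEquiv_apply_zero, ← sum_sub_distrib]
    exact sum_congr rfl fun r _ => by ring
  · simp only [if_neg hl, symbolDefect, zero_sub, ← sum_neg_distrib]
    exact sum_congr rfl fun r _ => by ring

/-- The constant in the consistency estimate for symbols with majorant `a`. -/
def consistencyConst (a : ℤ → ℝ) : ℝ := ∑' p : ℤ × ℤ, a p.1 * (16 * (bracket p.2 ^ 2)⁻¹)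

theorem sum_norm_sq_sub_le_consistencyConst (ha : Summable a) (ha0 : ∀ n, 0 ≤ a n)
    (hw : ∀ n m, ‖w n m‖ ≤ a n * bracket m)
    (hw' : ∀ n, ∀ m ∈ centralFreqs N, ‖w' n m - w n m‖ ≤ a n * (1 / N ^ 2 * bracket m ^ 3))
    (hu : RapidDecay u) {ε : ℝ} {x y : ZMod N → ℂ}
    (hx : ∀ i, HasSum (fun n => ∑ r : ZMod N, u r.valMinAbs *
      (w' n r.valMinAbs * mode (n + r.valMinAbs) (node N ε i))) (x i))
    (hy : ∀ i, HasSum (fun p : ℤ × ℤ => u p.1 * (w p.2 p.1 * mode (p.2 + p.1) (node N ε i)))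
      (y i)) :
    ∑ i, ‖x i - y i‖ ^ 2 ≤ N * ((consistencyConst a / N ^ 2) ^ 2 * energy 3 u) := by
  have hl (l : ℤ) : 0 ≤ 16 * (bracket l ^ 2)⁻¹ := by have := bracket_pos l; positivity
  have hsum : Summable fun p : ℤ × ℤ => a p.1 * (16 * (bracket p.2 ^ 2)⁻¹) :=
    ha.mul_of_nonneg (summable_inv_bracket_sq.mul_left 16) ha0 hl
  have henergy := energy_nonneg 3 u
  have h := sum_norm_sq_tsum_le (hsum.mul_right (√(N * energy 3 u) / N ^ 2))
    (fun p => mul_nonneg (mul_nonneg (ha0 _) (hl _)) (by positivity))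
    fun p => sum_norm_sq_symbolDefect_le ha0 hw hw' hu ε p.1 p.2
  simp only [(hasSum_symbolDefect (hx _) (hy _)).tsum_eq] at h
  rw [tsum_mul_right, mul_pow, div_pow, Real.sq_sqrt (by positivity)] at h
  exact h.trans_eq (by rw [consistencyConst]; ring)

end Consistency

/-- Uses `bracket m ≤ 2 * |m|` for `m ≠ 0`. -/
lemma energy_fc_le_sobNorm_sq {φ : ℝ → ℂ} (hφ : ContDiff ℝ (⊤ : ℕ∞) φ)
    (hp : Function.Periodic φ 1) : energy 3 (fc φ) ≤ 64 * sobNorm 3 φ ^ 2 := by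
  have henergy := (rapidDecay_fc hφ hp).summable_energy 3
  have hsob : Summable fun m : ℤ =>
      if m = 0 then 0 else |(m : ℝ)| ^ (2 * 3 : ℝ) * ‖fc φ m‖ ^ 2 := by
    refine Summable.of_nonneg_of_le (fun m => ?_) (fun m => ?_) henergy
    · split_ifs <;> positivity
    · split_ifs
      · positivity
      · rw [mul_pow, ← pow_mul, show (2 * 3 : ℝ) = (3 * 2 : ℕ) by norm_num, Real.rpow_natCast]
        gcongr
        exact abs_le_bracket m
  have hzero : HasSum (fun m : ℤ => if m = 0 then ‖fc φ 0‖ ^ 2 else 0) (‖fc φ 0‖ ^ 2) :=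
    hasSum_ite_eq (0 : ℤ) (‖fc φ 0‖ ^ 2)
  have htotal := (hzero.add hsob.hasSum).mul_left 64
  rw [sobNorm, Real.sq_sqrt (add_nonneg (sq_nonneg _)
    (tsum_nonneg fun m => by split_ifs <;> positivity)), ← htotal.tsum_eq]
  refine henergy.tsum_le_tsum (fun m => ?_) htotal.summable
  by_cases hm : m = 0
  · subst hm
    simp only [bracket, Int.cast_zero, abs_zero, add_zero, one_pow, one_mul, if_true]
    nlinarith [sq_nonneg ‖fc φ 0‖]
  · simp only [if_neg hm, zero_add]
    have hm1 : (1 : ℝ) ≤ |(m : ℝ)| := by exact_mod_cast Int.one_le_abs hm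
    have hbm : bracket m ≤ 2 * |(m : ℝ)| := by unfold bracket; linarith
    rw [show (2 * 3 : ℝ) = (6 : ℕ) by norm_num, Real.rpow_natCast]
    calc (bracket m ^ 3 * ‖fc φ m‖) ^ 2 ≤ ((2 * |(m : ℝ)|) ^ 3 * ‖fc φ m‖) ^ 2 := by
          have := bracket_pos m
          gcongr
      _ = _ := by ring

/-! ### Injectivity in Fourier coordinates -/

section Injectivity

variable {u : ℤ → ℂ}

lemma iteratedDeriv_mul_mode (c : ℂ) (m : ℤ) (k : ℕ) :
    iteratedDeriv k (fun x => c * mode m x) =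
      fun x => c * (2 * Real.pi * Complex.I * m) ^ k * mode m x := by
  induction k with
  | zero => simp
  | succ k ih =>
    rw [iteratedDeriv_succ, ih]
    ext x
    rw [((hasDerivAt_mode m x).const_mul _).deriv]
    ring

lemma contDiff_tsum_mul_mode (hu : RapidDecay u) :
    ContDiff ℝ (⊤ : ℕ∞) fun x => ∑' m, u m * mode m x := by
  refine contDiff_tsum (v := fun k m => 7 ^ k * (bracket m ^ k * ‖u m‖))
    (fun m => contDiff_const.mul ((contDiff_mode m).of_le (by exact_mod_cast le_top)))
    (fun k _ => (hu.summable_bracket_pow_mul k).mul_left _) fun k m x _ => ?_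
  rw [norm_iteratedFDeriv_eq_norm_iteratedDeriv, iteratedDeriv_mul_mode, norm_mul, norm_mul,
    norm_pow, norm_mode, norm_two_pi_I_mul, ← abs_derivSymbol]
  calc ‖u m‖ * |derivSymbol m| ^ k * 1 ≤ ‖u m‖ * (7 * bracket m) ^ k * 1 := by
        gcongr
        exact abs_derivSymbol_le m
    _ = _ := by ring

lemma periodic_tsum_mul_mode (u : ℤ → ℂ) : Function.Periodic (fun x => ∑' m, u m * mode m x) 1 :=
  fun x => tsum_congr fun m => by rw [mode_periodic m x]

lemma hasSum_tsum_mul_mode (hu : Summable fun m => ‖u m‖) (x : ℝ) :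
    HasSum (fun m => u m * mode m x) (∑' m, u m * mode m x) :=
  (Summable.of_norm (by simpa using hu)).hasSum

lemma eq_zero_of_tsum_hypersingularSymbol_mul_eq_zero {A₁ K₁ A₂ K₂ : ℝ → ℝ → ℂ} (hA₁ : SPK A₁)
    (hK₁ : SPK K₁) (hA₂ : SPK A₂) (hK₂ : SPK K₂)
    (hinj : ∀ φ : ℝ → ℂ, ContDiff ℝ (⊤ : ℕ∞) φ → Function.Periodic φ 1 →
      (∀ s, Wop (logKer A₁ K₁) (logKer A₂ K₂) φ s = 0) → ∀ s, φ s = 0)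
    (hu : RapidDecay u) (hzero : ∀ k, ∑' n, hypersingularSymbol fc derivSymbol
      (logKerCoeff hA₁ hK₁) (logKerCoeff hA₂ hK₂) n (k - n) * u (k - n) = 0) : u = 0 := by
  have hφ := contDiff_tsum_mul_mode hu
  have hp := periodic_tsum_mul_mode u
  have hfc := fc_eq_of_hasSum hu.summable_norm (hasSum_tsum_mul_mode hu.summable_norm)
  set φ : ℝ → ℂ := fun x => ∑' m, u m * mode m x
  let shear : ℤ × ℤ ≃ ℤ × ℤ := (Equiv.prodComm ℤ ℤ).trans
    ((Equiv.prodShear (Equiv.refl ℤ) Equiv.subRight).trans (Equiv.prodComm ℤ ℤ))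
  have hWφ (s : ℝ) : Wop (logKer A₁ K₁) (logKer A₂ K₂) φ s = 0 := by
    have h := shear.hasSum_iff.mpr (hasSum_Wop hA₁ hK₁ hA₂ hK₂ hφ hp s)
    have hrows := h.prod_fiberwise fun k => (h.summable.prod_factor k).hasSum
    refine hrows.unique (hasSum_zero.congr_fun fun k => ?_)
    rw [← zero_mul (mode k s), ← hzero k, ← tsum_mul_right]
    refine tsum_congr fun n => ?_
    simp only [Function.comp_apply, shear, Equiv.trans_apply, Equiv.prodComm_apply,
      Prod.swap_prod_mk, Equiv.prodShear_apply, Equiv.refl_apply, Equiv.subRight_apply, hfc,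
      add_sub_cancel]
    ring
  ext m
  rw [← hfc m, fc_eq_integral_mode]
  simp [hinj φ hφ hp hWφ]

end Injectivity

/-! ### Step functions -/

section StepFunctions

variable (N : ℕ) (ε : ℝ)

/-- The number of the cell of the grid with centers `node N ε k` in which `s` lies. -/
def gridIndex (s : ℝ) : ZMod N := (⌊s * N + 1 / 2 - ε⌋ : ℤ)

lemma stepf_eq (v : ZMod N → ℂ) (s : ℝ) : stepf N ε v s = v (gridIndex N ε s) := rfl

lemma periodic_gridIndex : Function.Periodic (gridIndex N ε) 1 := by
  intro s
  have hfloor : ⌊(s + 1) * N + 1 / 2 - ε⌋ = ⌊s * N + 1 / 2 - ε⌋ + (N : ℤ) := by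
    rw [← Int.floor_add_intCast]
    congr 1
    push_cast
    ring
  rw [gridIndex, hfloor]
  simp [gridIndex]

variable [NeZero N]

lemma gridIndex_of_mem_Ioo {k : ℤ} {s : ℝ} (hs : s ∈ Set.Ioo (sg (1 / N) ε k)
    (sg (1 / N) ε (k + 1))) : gridIndex N ε s = k := by
  have hN : (0 : ℝ) < N := by exact_mod_cast NeZero.pos N
  obtain ⟨hl, hr⟩ := hs
  rw [sg, mul_one_div, div_lt_iff₀ hN] at hl
  rw [sg, mul_one_div, lt_div_iff₀ hN] at hr
  push_cast at hr
  have hfloor : ⌊s * N + 1 / 2 - ε⌋ = k := Int.floor_eq_iff.mpr ⟨by linarith, by linarith⟩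
  rw [gridIndex, hfloor]

lemma sum_zmod_val_eq_sum_range {M : Type*} [AddCommMonoid M] (g : ℕ → M) :
    ∑ r : ZMod N, g r.val = ∑ k ∈ range N, g k :=
  sum_nbij' ZMod.val Nat.cast (fun r _ => by simpa using r.val_lt) (fun _ _ => mem_univ _)
    (fun r _ => by simp) (fun _ hk => ZMod.val_cast_of_lt (mem_range.mp hk)) fun _ _ => rfl

variable {N ε} in
lemma integral_gridIndex {E : Type*} [NormedAddCommGroup E] [NormedSpace ℝ E]
    {F : ZMod N → ℝ → E} (hF : ∀ r, Continuous (F r)) (hp : ∀ r, Function.Periodic (F r) 1) :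
    ∫ s in (0 : ℝ)..1, F (gridIndex N ε s) s =
      ∑ r, ∫ s in node N ε r - 1 / (2 * N)..node N ε r + 1 / (2 * N), F r s := by
  have hN : (0 : ℝ) < N := by exact_mod_cast NeZero.pos N
  have hper : Function.Periodic (fun s => F (gridIndex N ε s) s) 1 := fun s => by
    simp only [periodic_gridIndex N ε s, hp _ s]
  let a : ℕ → ℝ := fun k => sg (1 / N) ε k
  have ha (k : ℕ) : a k ≤ a (k + 1) := by
    simp only [a, sg]
    gcongr
    simp
  have hcell (k : ℕ) :
      Set.EqOn (F k) (fun s => F (gridIndex N ε s) s) (Set.Ioo (a k) (a (k + 1))) := fun s hs => by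
    simp only [a, Nat.cast_succ] at hs
    simp [gridIndex_of_mem_Ioo N ε hs]
  have hInt : ∀ k < N, IntervalIntegrable (fun s => F (gridIndex N ε s) s)
      MeasureTheory.volume (a k) (a (k + 1)) := fun k _ =>
    ((hF k).intervalIntegrable _ _).congr_uIoo (by rw [Set.uIoo_of_le (ha k)]; exact hcell k)
  have hperiod : a N = a 0 + 1 := by
    simp only [a, sg]
    push_cast
    field_simp
    ring
  have hshift := hper.intervalIntegral_add_eq 0 (a 0)
  rw [zero_add, ← hperiod, ← intervalIntegral.sum_integral_adjacent_intervals hInt] at hshift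
  rw [hshift, ← sum_zmod_val_eq_sum_range]
  refine sum_congr rfl fun r _ => ?_
  rw [← intervalIntegral.integral_congr_Ioo_of_le (ha _) (hcell _), ZMod.natCast_zmod_val]
  congr 1 <;> simp only [a, sg, node] <;> push_cast <;> field_simp <;> ring

lemma integral_norm_sq_stepf_sub (v c : ZMod N → ℂ) :
    ∫ t in (0 : ℝ)..1, ‖stepf N ε v t - stepf N ε c t‖ ^ 2 = 1 / N * ∑ r, ‖v r - c r‖ ^ 2 := by
  simp only [stepf_eq]
  rw [integral_gridIndex (F := fun r _ => ‖v r - c r‖ ^ 2) (fun _ => continuous_const)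
    fun _ _ => rfl, mul_sum]
  refine sum_congr rfl fun r _ => ?_
  rw [intervalIntegral.integral_const, smul_eq_mul]
  congr 1
  ring

/-- The mean value over a cell centered at the origin of the mode of frequency `m`: the factor by
which a step function damps this mode. -/
def cellMean (m : ℤ) : ℂ := N * ∫ t in -(1 / (2 * N) : ℝ)..1 / (2 * N), mode m t

lemma cellMean_zero : cellMean N 0 = 1 := by
  have hN : (N : ℂ) ≠ 0 := NeZero.ne _
  simp only [cellMean, mode_zero, intervalIntegral.integral_const, Complex.real_smul]
  push_cast
  field_simp
  ring

/-- The mean of the derivative of a mode over a cell is a difference quotient. -/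
lemma cellMean_mul_derivSymbol (m : ℤ) : cellMean N m * derivSymbol m = diffSymbol N m := by
  have hN : (N : ℂ) ≠ 0 := NeZero.ne _
  have hftc := intervalIntegral.integral_eq_sub_of_hasDerivAt
    (a := -(1 / (2 * N))) (b := 1 / (2 * N)) (fun x _ => hasDerivAt_mode m x)
    ((continuous_const.mul (continuous_mode m)).intervalIntegrable _ _)
  have hstep := mode_add_half_step_sub N m 0
  rw [zero_add, zero_sub, mode_zero_arg, mul_one] at hstep
  rw [hstep, intervalIntegral.integral_const_mul] at hftc
  refine mul_left_cancel₀ Complex.I_ne_zero ?_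
  calc Complex.I * (cellMean N m * derivSymbol m)
      = N * (2 * Real.pi * Complex.I * m *
          ∫ t in -(1 / (2 * N) : ℝ)..1 / (2 * N), mode m t) := by
        rw [cellMean, derivSymbol]
        push_cast
        ring
    _ = _ := by rw [hftc]; field_simp

lemma integral_mode_cell (m : ℤ) (x : ℝ) :
    ∫ t in x - 1 / (2 * N)..x + 1 / (2 * N), mode (-m) t = mode (-m) x * (cellMean N m / N) := by
  have hN : (N : ℂ) ≠ 0 := NeZero.ne _
  rw [cellMean, mul_div_cancel_left₀ _ hN, sub_eq_add_neg,
    ← intervalIntegral.integral_comp_add_left (fun t => mode (-m) t)]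
  simp only [mode_add_arg, intervalIntegral.integral_const_mul]
  simp only [mode_neg]
  rw [intervalIntegral.integral_comp_neg (fun t => mode m t), neg_neg]

lemma fc_stepf_synthesis (u : ZMod N → ℂ) (k : ZMod N) :
    fc (stepf N ε (synthesis N ε u)) k.valMinAbs = cellMean N k.valMinAbs * u k := by
  have hN : (N : ℂ) ≠ 0 := NeZero.ne _
  set m := k.valMinAbs with hm
  have hclass (l : ZMod N) : ((l.valMinAbs + -m : ℤ) : ZMod N) = 0 ↔ l = k := by
    simp [hm, ← sub_eq_add_neg, sub_eq_zero]
  rw [fc_eq_integral_mode]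
  simp only [stepf_eq]
  rw [integral_gridIndex (F := fun r t => synthesis N ε u r * mode (-m) t)
    (fun r => continuous_const.mul (continuous_mode _)) fun r t => by simp only [mode_periodic _ t]]
  calc ∑ r, ∫ t in node N ε r - 1 / (2 * N)..node N ε r + 1 / (2 * N),
        synthesis N ε u r * mode (-m) t
      = ∑ r, ∑ l, cellMean N m / N * (u l * mode (l.valMinAbs + -m) (node N ε r)) := by
        refine sum_congr rfl fun r _ => ?_
        rw [intervalIntegral.integral_const_mul, integral_mode_cell, synthesis_apply, sum_mul]
        exact sum_congr rfl fun l _ => by rw [mode_add]; ring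
    _ = cellMean N m / N * ∑ l, u l * ∑ r, mode (l.valMinAbs + -m) (node N ε r) := by
        rw [sum_comm]
        simp only [mul_sum]
    _ = _ := by
        simp only [sum_mode_node, hclass, mul_ite, mul_zero, sum_ite_eq', mem_univ, if_true, ← hm,
          add_neg_cancel, mode_zero]
        field_simp

variable {N}

lemma norm_cellMean_mul_sub_le {m : ℤ} (hm : m ∈ centralFreqs N) (z : ℂ) :
    ‖cellMean N m * z - z‖ ≤ 32 / N ^ 2 * (bracket m ^ 3 * ‖cellMean N m * z‖) := by
  have hbracket := bracket_pos m
  rcases eq_or_ne m 0 with rfl | hm0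
  · rw [cellMean_zero, one_mul, sub_self, norm_zero]
    positivity
  have hkey : (cellMean N m * z - z) * (diffSymbol N m : ℂ) =
      cellMean N m * z * ((diffSymbol N m - derivSymbol m : ℝ) : ℂ) := by
    push_cast
    linear_combination z * cellMean_mul_derivSymbol N m
  have hnorm := congrArg norm hkey
  rw [norm_mul, norm_mul, Complex.norm_real, Complex.norm_real, Real.norm_eq_abs,
    Real.norm_eq_abs] at hnorm
  have hlower := four_mul_abs_le_abs_diffSymbol hm
  have hm1 : (1 : ℝ) ≤ |(m : ℝ)| := by exact_mod_cast Int.one_le_abs hm0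
  have hbound : ‖cellMean N m * z - z‖ * 4 ≤
      ‖cellMean N m * z‖ * (128 / N ^ 2 * bracket m ^ 3) :=
    calc _ ≤ ‖cellMean N m * z - z‖ * |diffSymbol N m| := by gcongr; linarith
      _ = _ := hnorm
      _ ≤ _ := by gcongr; exact abs_diffSymbol_sub_le N m
  calc _ ≤ ‖cellMean N m * z‖ * (128 / N ^ 2 * bracket m ^ 3) / 4 := by linarith
    _ = _ := by ring

end StepFunctions

/-! ### Stability, consistency and convergence -/

section Convergence

/-- The matrix of the Nyström system as a linear map. -/
def nystromMap (V₁ V₂ : ℝ → ℝ → ℂ) (ε : ℝ) (N : ℕ) [NeZero N] :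
    (ZMod N → ℂ) →ₗ[ℂ] (ZMod N → ℂ) :=
  Matrix.toLin' (Matrix.of fun i j => Wmat V₁ V₂ (1 / N) ε i.val j.val)

/-- The values at the points `j / N` of the Fourier series of `φ` truncated to the central
frequencies. -/
def fourierTruncation (φ : ℝ → ℂ) (N : ℕ) [NeZero N] : ZMod N → ℂ :=
  synthesis N 0 fun k => fc φ k.valMinAbs

variable {N : ℕ} [NeZero N] {ε : ℝ} {φ : ℝ → ℂ}

section System

variable {V₁ V₂ : ℝ → ℝ → ℂ}

lemma nystromMap_apply (v : ZMod N → ℂ) (i : ZMod N) :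
    nystromMap V₁ V₂ ε N v i = ∑ j : ZMod N, Wmat V₁ V₂ (1 / N) ε i.val j.val * v j := rfl

lemma nys_iff (v : ZMod N → ℂ) : Nys V₁ V₂ ε N φ v ↔
    nystromMap V₁ V₂ ε N v = fun i => (1 / (N : ℂ)) * Wop V₁ V₂ φ (node N ε i) := by
  simp only [funext_iff, nystromMap_apply, node, div_eq_mul_one_div (_ + ε)]
  rfl

variable {C : ℝ} (hstab : ∀ v, ∑ i, ‖v i‖ ^ 2 ≤ C * ∑ i, ‖N * nystromMap V₁ V₂ ε N v i‖ ^ 2)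

include hstab

lemma existsUnique_nys (φ : ℝ → ℂ) : ∃! v, Nys V₁ V₂ ε N φ v := by
  simp only [nys_iff]
  refine (bijective_of_sum_norm_sq_le _ (C * N ^ 2) fun v => ?_).existsUnique _
  simpa only [norm_mul, mul_pow, ← mul_sum, Complex.norm_natCast, mul_assoc] using hstab v

lemma sum_norm_sq_sub_le_of_nys {v : ZMod N → ℂ} (hv : Nys V₁ V₂ ε N φ v) (p : ZMod N → ℂ) :
    ∑ i, ‖v i - p i‖ ^ 2 ≤
      C * ∑ i, ‖N * nystromMap V₁ V₂ ε N p i - Wop V₁ V₂ φ (node N ε i)‖ ^ 2 := by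
  have hN : (N : ℂ) ≠ 0 := NeZero.ne _
  refine (hstab (v - p)).trans_eq ?_
  simp only [map_sub, (nys_iff v).mp hv, Pi.sub_apply, mul_sub, one_div, mul_inv_cancel_left₀ hN,
    norm_sub_rev]

end System

section LogKernel

variable {A₁ K₁ A₂ K₂ : ℝ → ℝ → ℂ} (hε : 4 * Real.sin (Real.pi * ε) ^ 2 = 1)
  (hA₁ : SPK A₁) (hK₁ : SPK K₁) (hA₂ : SPK A₂) (hK₂ : SPK K₂)

include hε hA₁ hK₁ hA₂ hK₂

theorem exists_sum_norm_sq_le_mul_nystromMap {α : ℂ} (hα : α ≠ 0) (hdiag : ∀ s, A₁ s s = α)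
    (hinj : ∀ φ : ℝ → ℂ, ContDiff ℝ (⊤ : ℕ∞) φ → Function.Periodic φ 1 →
      (∀ s, Wop (logKer A₁ K₁) (logKer A₂ K₂) φ s = 0) → ∀ s, φ s = 0) :
    ∃ C : ℝ, 0 < C ∧ ∃ N₀ : ℕ, ∀ (N : ℕ) [NeZero N], N₀ ≤ N → ∀ v : ZMod N → ℂ,
      ∑ i, ‖v i‖ ^ 2 ≤
        C * ∑ i, ‖N * nystromMap (logKer A₁ K₁) (logKer A₂ K₂) ε N v i‖ ^ 2 := by
  have hlog := (hA₁.const_mul (Complex.I / (2 * Real.pi))).tsum_kernelCoeff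
    (α := Complex.I / (2 * Real.pi) * α) fun s => by rw [hdiag]
  have hlog0 : Complex.I / (2 * Real.pi) * α ≠ 0 := by simp [hα, Real.pi_ne_zero]
  obtain ⟨C, hC, N₀, hstab⟩ := exists_sum_norm_sq_le_mul_foldedOp_hypersingularSymbol hε
    (κ₁ := logKerCoeff hA₁ hK₁) (κ₂ := logKerCoeff hA₂ hK₂) hlog0 hlog fun u =>
      eq_zero_of_tsum_hypersingularSymbol_mul_eq_zero hA₁ hK₁ hA₂ hK₂ hinj
  refine ⟨C, hC, N₀, fun N _ hN v => ?_⟩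
  obtain ⟨u, rfl⟩ := (synthesis_bijective N 0).surjective v
  simp only [nystromMap_apply, Wmat_mulVec_synthesis hε hA₁ hK₁ hA₂ hK₂ hlog,
    sum_norm_sq_synthesis]
  rw [mul_left_comm]
  exact mul_le_mul_of_nonneg_left (hstab N hN u) (Nat.cast_nonneg N)

theorem sum_norm_sq_nystromMap_fourierTruncation_sub_le (hφ : ContDiff ℝ (⊤ : ℕ∞) φ)
    (hp : Function.Periodic φ 1) :
    ∑ i, ‖N * nystromMap (logKer A₁ K₁) (logKer A₂ K₂) ε N (fourierTruncation φ N) i -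
      Wop (logKer A₁ K₁) (logKer A₂ K₂) φ (node N ε i)‖ ^ 2 ≤
      N * ((consistencyConst (symbolMajorant (logKerCoeff hA₁ hK₁) (logKerCoeff hA₂ hK₂)) /
        N ^ 2) ^ 2 * energy 3 (fc φ)) := by
  refine sum_norm_sq_sub_le_consistencyConst rapidDecay_symbolMajorant.summable_norm.of_norm
    symbolMajorant_nonneg norm_hypersingularSymbol_fc_le
    (fun n m hm => norm_hypersingularSymbol_sub_le hε hm n) (rapidDecay_fc hφ hp)
    (fun i => ?_) fun i => hasSum_Wop hA₁ hK₁ hA₂ hK₂ hφ hp _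
  exact hasSum_Wmat_mulVec_synthesis hε hA₁ hK₁ hA₂ hK₂ (fun k => fc φ k.valMinAbs) i

end LogKernel

lemma sum_norm_sq_fourierTruncation_sub_le (hφ : ContDiff ℝ (⊤ : ℕ∞) φ)
    (hp : Function.Periodic φ 1) {c : ZMod N → ℂ}
    (hc : ∀ k : ZMod N, fc (stepf N 0 c) k.valMinAbs = fc φ k.valMinAbs) :
    ∑ i, ‖fourierTruncation φ N i - c i‖ ^ 2 ≤ N * ((32 / N ^ 2) ^ 2 * energy 3 (fc φ)) := by
  obtain ⟨u, rfl⟩ := (synthesis_bijective N 0).surjective c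
  have hcoeff (k : ZMod N) : ‖fc φ k.valMinAbs - u k‖ ^ 2 ≤
      (32 / N ^ 2) ^ 2 * (bracket k.valMinAbs ^ 3 * ‖fc φ k.valMinAbs‖) ^ 2 := by
    rw [← hc, fc_stepf_synthesis, ← mul_pow]
    gcongr
    exact norm_cellMean_mul_sub_le (valMinAbs_mem_centralFreqs N k) _
  have hcentral : ∑ k : ZMod N, (bracket k.valMinAbs ^ 3 * ‖fc φ k.valMinAbs‖) ^ 2 ≤
      energy 3 (fc φ) := by
    rw [← tsum_fintype (L := .unconditional _)]
    exact tsum_comp_le_tsum_of_inj ((rapidDecay_fc hφ hp).summable_energy 3)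
      (fun _ => sq_nonneg _) ZMod.injective_valMinAbs
  simp only [fourierTruncation, ← Pi.sub_apply, ← map_sub]
  rw [sum_norm_sq_synthesis]
  gcongr
  calc _ ≤ _ := sum_le_sum fun k _ => hcoeff k
    _ ≤ _ := by
      rw [← mul_sum]
      gcongr

lemma sum_norm_sq_sub_le {κ : Type*} [Fintype κ] (x y z : κ → ℂ) :
    ∑ i, ‖x i - z i‖ ^ 2 ≤ 2 * (∑ i, ‖x i - y i‖ ^ 2 + ∑ i, ‖y i - z i‖ ^ 2) := by
  rw [← sum_add_distrib, mul_sum]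
  gcongr with i
  exact (pow_le_pow_left₀ (norm_nonneg _) (norm_sub_le_norm_sub_add_norm_sub _ _ _) 2).trans
    add_sq_le

lemma sqrt_integral_norm_sq_stepf_sub_le (hφ : ContDiff ℝ (⊤ : ℕ∞) φ)
    (hp : Function.Periodic φ 1) {v c : ZMod N → ℂ} {B : ℝ} (hB : 0 ≤ B)
    (hv : ∑ i, ‖v i - fourierTruncation φ N i‖ ^ 2 ≤ N * (B / N ^ 4 * energy 3 (fc φ)))
    (hc : ∀ k : ZMod N, fc (stepf N 0 c) k.valMinAbs = fc φ k.valMinAbs) :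
    √(∫ t in (0 : ℝ)..1, ‖stepf N 0 v t - stepf N 0 c t‖ ^ 2) ≤
      √(128 * (B + 1024)) * (1 / N) ^ 2 * sobNorm 3 φ := by
  have hN : (0 : ℝ) < N := by exact_mod_cast NeZero.pos N
  have htriangle := sum_norm_sq_sub_le v (fourierTruncation φ N) c
  have hstep := sum_norm_sq_fourierTruncation_sub_le hφ hp hc
  have hsob : 0 ≤ sobNorm 3 φ := Real.sqrt_nonneg _
  refine Real.sqrt_le_iff.mpr ⟨by positivity, ?_⟩
  rw [integral_norm_sq_stepf_sub, mul_pow, mul_pow, Real.sq_sqrt (by positivity)]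
  calc 1 / (N : ℝ) * ∑ i, ‖v i - c i‖ ^ 2
      ≤ 1 / N * (2 * (N * (B / N ^ 4 * energy 3 (fc φ)) +
          N * ((32 / N ^ 2) ^ 2 * energy 3 (fc φ)))) := by
        gcongr
        linarith
    _ = 2 * (B + 1024) * ((1 / N) ^ 2) ^ 2 * energy 3 (fc φ) := by field_simp; ring
    _ ≤ 2 * (B + 1024) * ((1 / N) ^ 2) ^ 2 * (64 * sobNorm 3 φ ^ 2) := by
        gcongr
        exact energy_fc_le_sobNorm_sq hφ hp
    _ = _ := by ring

end Convergence

theorem stmt_15_general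
    (A₁ K₁ A₂ K₂ : ℝ → ℝ → ℂ) (hA₁ : SPK A₁) (hK₁ : SPK K₁) (hA₂ : SPK A₂) (hK₂ : SPK K₂)
    (α : ℂ) (hα : α ≠ 0) (hdiag : ∀ s : ℝ, A₁ s s = α)
    (hinj : ∀ φ : ℝ → ℂ, ContDiff ℝ (⊤ : ℕ∞) φ → Function.Periodic φ 1 →
      (∀ s, Wop (logKer A₁ K₁) (logKer A₂ K₂) φ s = 0) → ∀ s, φ s = 0)
    (ε : ℝ) (hε : 4 * Real.sin (Real.pi * ε) ^ 2 = 1) :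
    ∃ h₀ > (0 : ℝ), ∃ C > (0 : ℝ), ∀ φ : ℝ → ℂ, ContDiff ℝ (⊤ : ℕ∞) φ → Function.Periodic φ 1 →
      ∀ (N : ℕ) [NeZero N], 1 / (N : ℝ) ≤ h₀ →
        (∃! v : ZMod N → ℂ, Nys (logKer A₁ K₁) (logKer A₂ K₂) ε N φ v) ∧
        ∀ v : ZMod N → ℂ, Nys (logKer A₁ K₁) (logKer A₂ K₂) ε N φ v →
          ∀ c : ZMod N → ℂ,
            (∀ m : ℤ, -((N : ℝ) / 2) < (m : ℝ) → (m : ℝ) ≤ (N : ℝ) / 2 →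
              fc (stepf N 0 c) m = fc φ m) →
            Real.sqrt (∫ t in (0 : ℝ)..1, ‖stepf N 0 v t - stepf N 0 c t‖ ^ 2) ≤
              C * (1 / (N : ℝ)) ^ 2 * sobNorm 3 φ := by
  obtain ⟨C, hC, N₀, hstab⟩ :=
    exists_sum_norm_sq_le_mul_nystromMap hε hA₁ hK₁ hA₂ hK₂ hα hdiag hinj
  set B := consistencyConst (symbolMajorant (logKerCoeff hA₁ hK₁) (logKerCoeff hA₂ hK₂))
  refine ⟨1 / (N₀ + 1), by positivity, √(128 * (C * B ^ 2 + 1024)), by positivity,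
    fun φ hφ hp N _ hN => ?_⟩
  have hN₀ : N₀ ≤ N := by
    have hpos : (0 : ℝ) < N := by exact_mod_cast NeZero.pos N
    have hle := (one_div_le_one_div hpos (by positivity)).mp hN
    exact_mod_cast (by linarith : (N₀ : ℝ) ≤ N)
  refine ⟨existsUnique_nys (hstab N hN₀) φ, fun v hv c hc => ?_⟩
  refine sqrt_integral_norm_sq_stepf_sub_le hφ hp (by positivity) ?_ fun k => ?_
  · calc _ ≤ _ := sum_norm_sq_sub_le_of_nys (hstab N hN₀) hv (fourierTruncation φ N)
      _ ≤ C * (N * ((B / N ^ 2) ^ 2 * energy 3 (fc φ))) := by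
        gcongr
        exact sum_norm_sq_nystromMap_fourierTruncation_sub_le hε hA₁ hK₁ hA₂ hK₂ hφ hp
      _ = _ := by ring
  · obtain ⟨hl, hr⟩ := k.valMinAbs_mem_Ioc
    have hl' : -(N : ℝ) < k.valMinAbs * 2 := by exact_mod_cast hl
    have hr' : (k.valMinAbs * 2 : ℝ) ≤ N := by exact_mod_cast hr
    exact hc _ (by linarith) (by linarith)

end

/-- for `ε = ±1/6`, second-order superconvergence of the Nyström solution
towards the step function `χ_h ∈ S_h` matching the central Fourier coefficients of `φ`:
`‖φ_h − χ_h‖₀ ≤ C h² ‖φ‖₃`. -/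
theorem stmt_15
    (A1 K1 A2 K2 : ℝ → ℝ → ℂ) (hA1 : SPK A1) (hK1 : SPK K1) (hA2 : SPK A2) (hK2 : SPK K2)
    (α : ℂ) (hα : α ≠ 0) (hdiag : ∀ s : ℝ, A1 s s = α)
    (hinj : ∀ φ : ℝ → ℂ, ContDiff ℝ (⊤ : ℕ∞) φ → Function.Periodic φ 1 →
      (∀ s, Wop (logKer A1 K1) (logKer A2 K2) φ s = 0) → ∀ s, φ s = 0)
    (ε : ℝ) (hε : ε = 1 / 6 ∨ ε = -(1 / 6)) :
    ∃ h0 > (0:ℝ), ∃ C > (0:ℝ), ∀ φ : ℝ → ℂ, ContDiff ℝ (⊤ : ℕ∞) φ → Function.Periodic φ 1 →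
      ∀ (N : ℕ) [NeZero N], 1 / (N : ℝ) ≤ h0 →
        (∃! v : ZMod N → ℂ, Nys (logKer A1 K1) (logKer A2 K2) ε N φ v) ∧
        ∀ v : ZMod N → ℂ, Nys (logKer A1 K1) (logKer A2 K2) ε N φ v →
          ∀ c : ZMod N → ℂ,
            (∀ m : ℤ, -((N : ℝ) / 2) < (m : ℝ) → (m : ℝ) ≤ (N : ℝ) / 2 →
              fc (stepf N 0 c) m = fc φ m) →
            Real.sqrt (∫ t in (0:ℝ)..1, ‖stepf N 0 v t - stepf N 0 c t‖ ^ 2) ≤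
              C * (1 / (N : ℝ)) ^ 2 * sobNorm 3 φ := by
  refine stmt_15_general A1 K1 A2 K2 hA1 hK1 hA2 hK2 α hα hdiag hinj ε ?_
  rcases hε with rfl | rfl <;> norm_num [mul_neg, mul_one_div, Real.sin_pi_div_six]
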